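/- Assume additionally that w ≡ 0 on ∂Σ. Let E ⊆ Σ be a bounded connected open set with smooth boundary and w(E) > 0. Then there exists a convex function φ : ℝⁿ → ℝ of class C^{1,1} such that ∇φ(ℝⁿ) ⊆ cl(B₁ ∩ Σ), the Lebesgue measure of (B₁ ∩ Σ) \ ∇φ(E) is zero, and for almost every x ∈ E one has Δφ(x) + α ( w(∇φ(x)) / w(x) )^{1/α} ≤ Per_w(E) / w(E). -/

import Mathlib

open MeasureTheory Metric Set
open scoped RealInnerProductSpace ENNReal NNReal Topology

noncomputable section

abbrev Euc (n : ℕ) := EuclideanSpace ℝ (Fin n)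

def IsOpenConvexCone {n : ℕ} (S : Set (Euc n)) : Prop :=
  IsOpen S ∧ Convex ℝ S ∧ ∀ x ∈ S, ∀ t : ℝ, 0 < t → t • x ∈ S

def IsAdmissibleWeight {n : ℕ} (S : Set (Euc n)) (α : ℝ) (w : Euc n → ℝ) : Prop :=
  ContinuousOn w (closure S) ∧ (∀ x ∈ closure S, 0 ≤ w x) ∧
  (∃ x ∈ closure S, w x ≠ 0) ∧
  (∀ x ∈ closure S, ∀ t : ℝ, 0 < t → w (t • x) = t ^ α * w x) ∧
  ConcaveOn ℝ S (fun x => w x ^ (1 / α))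

def wVol {n : ℕ} (w : Euc n → ℝ) (E : Set (Euc n)) : ℝ≥0∞ :=
  ∫⁻ x in E, ENNReal.ofReal (w x)

def wPer {n : ℕ} (S : Set (Euc n)) (w : Euc n → ℝ) (E : Set (Euc n)) : ℝ≥0∞ :=
  ∫⁻ x in frontier E ∩ S, ENNReal.ofReal (w x) ∂(μH[(n : ℝ) - 1])

def HasSmoothBoundary {n : ℕ} (E : Set (Euc n)) : Prop :=
  ∃ f : Euc n → ℝ, ContDiff ℝ (⊤ : ℕ∞) f ∧ E = {x | f x < 0} ∧
    frontier E = {x | f x = 0} ∧ ∀ x ∈ frontier E, fderiv ℝ f x ≠ 0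

def linSpan (n k : ℕ) : Set (Euc n) := {x | ∀ i : Fin n, k ≤ (i : ℕ) → x i = 0}

/-- Laplacian as the trace of the second derivative in standard coordinates. -/
def lapl {n : ℕ} (φ : Euc n → ℝ) (x : Euc n) : ℝ :=
  ∑ i : Fin n, fderiv ℝ (fderiv ℝ φ) x (EuclideanSpace.single i 1) (EuclideanSpace.single i 1)

/-!
A discrete form of the ABP method. Let `E = {f < 0}` and let `G` be a positive mollification of
`g = w ^ (1 / α)`. The density `a = G ^ α * η` with the cutoff `η = 1 - exp (f / δ)` is positive
exactly on `E`, and `∫ w ‖∇η‖` over `E` tends to the weighted perimeter as `δ → 0`. For `c` above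
the perimeter quotient, the source `b = G ^ α * (c * η - (1 + θ) * ‖∇η‖)` therefore has positive
total mass, so on a fine lattice there is `u` with `div (a ∇u) ≤ b`.

Every `p` in the closure of `B₁ ∩ Σ` is the slope of an affine function touching `u` from below. At
a contact point `div (a ∇u) ≥ a Δu + p · ∇a`. Near the boundary of `E`, `b + ‖∇a‖ < 0`, so contact
points stay inside `E`; there `p · ∇η ≥ -‖∇η‖`, and the concavity of `g` gives `∂_p G ≥ g p`, hence
`Δu ≤ c - α * g p / G`. The upper envelope of these affine functions is convex with slopes in the
closure of `B₁ ∩ Σ` and has second differences bounded independently of the mesh. The potential is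
a limit of such envelopes.
-/

/-! ### Open convex cones and concave gauges -/

namespace IsOpenConvexCone

variable {n : ℕ} {S : Set (Euc n)}

theorem add_mem (hS : IsOpenConvexCone S) {x y : Euc n} (hx : x ∈ S) (hy : y ∈ S) :
    x + y ∈ S := by
  have hmid : (1 / 2 : ℝ) • x + (1 / 2 : ℝ) • y ∈ S :=
    hS.2.1 hx hy (by norm_num) (by norm_num) (by norm_num)
  simpa only [← smul_add, smul_smul, mul_one_div_cancel (two_ne_zero' ℝ), one_smul]
    using hS.2.2 _ hmid 2 two_pos

open scoped Pointwise in
theorem closure_add_mem (hS : IsOpenConvexCone S) {x y : Euc n} (hx : x ∈ closure S)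
    (hy : y ∈ S) : x + y ∈ S := by
  have hxy : x + y ∈ closure S + S := Set.add_mem_add hx hy
  rw [hS.1.closure_add] at hxy
  obtain ⟨a, ha, b, hb, hab⟩ := hxy
  exact hab ▸ hS.add_mem ha hb

theorem smul_mem_closure (hS : IsOpenConvexCone S) {x : Euc n} (hx : x ∈ closure S) {t : ℝ}
    (ht : 0 ≤ t) : t • x ∈ closure S := by
  have ht' : t ∈ closure (Ioi (0 : ℝ)) := by rwa [closure_Ioi]
  exact map_mem_closure₂ continuous_smul ht' hx fun s hs y hy => hS.2.2 y hy s hs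

theorem exists_ball_subset_near_zero (hS : IsOpenConvexCone S) (hne : S.Nonempty) {δ : ℝ}
    (hδ : 0 < δ) : ∃ e : Euc n, ∃ r : ℝ, 0 < r ∧ ‖e‖ + r < δ ∧ ball e r ⊆ S := by
  obtain ⟨e₀, he₀⟩ := hne
  have hlim : Filter.Tendsto (fun t : ℝ => ‖t • e₀‖) (𝓝[>] 0) (𝓝 0) :=
    tendsto_nhdsWithin_of_tendsto_nhds <| Continuous.tendsto' (by fun_prop) _ _ (by simp)
  obtain ⟨t, htδ, ht⟩ :=
    ((hlim.eventually (gt_mem_nhds (half_pos hδ))).and self_mem_nhdsWithin).exists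
  obtain ⟨r, hr, hball⟩ := Metric.isOpen_iff.1 hS.1 _ (hS.2.2 e₀ he₀ t ht)
  refine ⟨t • e₀, min r (δ / 4), lt_min hr (by linarith), ?_,
    (ball_subset_ball (min_le_left _ _)).trans hball⟩
  linarith [min_le_right r (δ / 4)]

end IsOpenConvexCone

/-- The closed sector `cl (B₁ ∩ S)`, in which all slopes of the convex potential lie. -/
def unitSector {n : ℕ} (S : Set (Euc n)) : Set (Euc n) := closure (ball 0 1 ∩ S)

section UnitSector

variable {n : ℕ} {S : Set (Euc n)} {p v : Euc n}

theorem norm_le_one_of_mem_unitSector (hp : p ∈ unitSector S) : ‖p‖ ≤ 1 := by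
  simpa using closure_ball_subset_closedBall (closure_mono inter_subset_left hp)

theorem unitSector_subset_closure : unitSector S ⊆ closure S :=
  closure_mono inter_subset_right

theorem isCompact_unitSector : IsCompact (unitSector S) :=
  (isBounded_ball.subset inter_subset_left).isCompact_closure

namespace IsOpenConvexCone

theorem convex_unitSector (hS : IsOpenConvexCone S) : Convex ℝ (unitSector S) :=
  ((convex_ball _ _).inter hS.2.1).closure

theorem unitSector_nonempty (hS : IsOpenConvexCone S) (hne : S.Nonempty) :
    (unitSector S).Nonempty := by
  obtain ⟨e, r, hr, her, hball⟩ := hS.exists_ball_subset_near_zero hne one_pos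
  exact ⟨e, subset_closure ⟨by simpa using (by linarith : ‖e‖ < 1), hball (mem_ball_self hr)⟩⟩

theorem mem_unitSector (hS : IsOpenConvexCone S) (hp : p ∈ S) (hp1 : ‖p‖ ≤ 1) :
    p ∈ unitSector S := by
  have hpball : p ∈ closure (ball (0 : Euc n) 1) := by
    simpa [closure_ball (0 : Euc n) one_ne_zero] using hp1
  rw [unitSector, inter_comm]
  exact hS.1.inter_closure ⟨hp, hpball⟩

/-- As `p` is interior to the cone, it is a local maximiser over the whole unit ball; by concavity
it is a global one, and the maximum of `⟪·, v⟫` over the unit ball is `‖v‖`. -/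
theorem eq_norm_smul_of_isMaxOn_unitSector (hS : IsOpenConvexCone S) (hp : p ∈ S) (hp1 : ‖p‖ ≤ 1)
    (hmax : IsMaxOn (fun q => ⟪q, v⟫) (unitSector S) p) : v = ‖v‖ • p := by
  rcases eq_or_ne v 0 with rfl | hv
  · simp
  have hvpos : 0 < ‖v‖ := norm_pos_iff.2 hv
  have hlocal : IsLocalMaxOn (fun q => ⟪q, v⟫) (closedBall 0 1) p := by
    filter_upwards [self_mem_nhdsWithin, nhdsWithin_le_nhds (hS.1.mem_nhds hp)] with q hq hqS
    exact hmax (hS.mem_unitSector hqS (by simpa using hq))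
  have hconcave : ConcaveOn ℝ (closedBall (0 : Euc n) 1) (fun q => ⟪q, v⟫) :=
    (((innerₗ (Euc n)).flip v).concaveOn convex_univ).subset (subset_univ _) (convex_closedBall 0 1)
  have hglobal := IsMaxOn.of_isLocalMaxOn_of_concaveOn (by simpa using hp1) hlocal hconcave
  have hunit : ‖v‖⁻¹ • v ∈ closedBall (0 : Euc n) 1 := by
    simp [norm_smul, inv_mul_cancel₀ hvpos.ne']
  have hvp : ‖v‖ ≤ ⟪p, v⟫ := by
    have : ⟪‖v‖⁻¹ • v, v⟫ ≤ ⟪p, v⟫ := hglobal hunit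
    rwa [real_inner_smul_left, real_inner_self_eq_norm_sq, pow_two,
      inv_mul_cancel_left₀ hvpos.ne'] at this
  have hcs : ⟪p, v⟫ ≤ ‖p‖ * ‖v‖ := real_inner_le_norm p v
  have hpnorm : ‖p‖ = 1 := le_antisymm hp1 (by nlinarith)
  have heq : ⟪p, v⟫ = ‖p‖ * ‖v‖ := le_antisymm hcs (by rwa [hpnorm, one_mul])
  simpa [hpnorm] using (inner_eq_norm_mul_iff_real.1 heq).symm

end IsOpenConvexCone

end UnitSector

/-- A concave, positively `1`-homogeneous function that is positive on the open convex cone `S` and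
extended by zero to a continuous function on the whole space. If `w` is an admissible weight
vanishing on `∂S`, then `w ^ (1 / α)` is of this kind. -/
structure IsConcaveGauge {n : ℕ} (S : Set (Euc n)) (g : Euc n → ℝ) : Prop where
  isOpenConvexCone : IsOpenConvexCone S
  nonempty : S.Nonempty
  continuous : Continuous g
  pos : ∀ x ∈ S, 0 < g x
  eq_zero : ∀ x ∉ S, g x = 0
  map_smul : ∀ x, ∀ t : ℝ, 0 < t → g (t • x) = t * g x
  concaveOn : ConcaveOn ℝ S g

theorem add_le_map_add_of_concaveOn {F : Type*} [AddCommGroup F] [Module ℝ F] {S : Set F}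
    {g : F → ℝ} (hg : ConcaveOn ℝ S g) (hsmul : ∀ x, ∀ t : ℝ, 0 < t → g (t • x) = t * g x) {x y : F}
    (hx : x ∈ S) (hy : y ∈ S) : g x + g y ≤ g (x + y) := by
  have hmid := hg.2 hx hy one_half_pos.le one_half_pos.le (add_halves (1 : ℝ))
  rw [← smul_add (1 / 2 : ℝ) x y, hsmul _ _ one_half_pos, smul_eq_mul, smul_eq_mul,
    ← mul_add] at hmid
  exact le_of_mul_le_mul_left hmid one_half_pos

namespace IsConcaveGauge

variable {n : ℕ} {S : Set (Euc n)} {g : Euc n → ℝ}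

theorem nonneg (hg : IsConcaveGauge S g) (x : Euc n) : 0 ≤ g x := by
  by_cases hx : x ∈ S
  exacts [(hg.pos x hx).le, (hg.eq_zero x hx).ge]

theorem mem_of_pos (hg : IsConcaveGauge S g) {x : Euc n} (hx : 0 < g x) : x ∈ S :=
  not_imp_comm.1 (hg.eq_zero x) hx.ne'

theorem add_le_map_add (hg : IsConcaveGauge S g) {x y : Euc n} (hx : x ∈ closure S)
    (hy : y ∈ closure S) : g x + g y ≤ g (x + y) := by
  have hclosed : IsClosed {z : Euc n × Euc n | g z.1 + g z.2 ≤ g (z.1 + z.2)} := by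
    have := hg.continuous
    exact isClosed_le (by fun_prop) (by fun_prop)
  have hsub : S ×ˢ S ⊆ {z : Euc n × Euc n | g z.1 + g z.2 ≤ g (z.1 + z.2)} :=
    fun z hz => add_le_map_add_of_concaveOn hg.concaveOn hg.map_smul hz.1 hz.2
  exact closure_minimal hsub hclosed (closure_prod_eq.ge (mk_mem_prod hx hy))

theorem le_map_add (hg : IsConcaveGauge S g) {x y : Euc n} (hx : x ∈ closure S)
    (hy : y ∈ closure S) : g x ≤ g (x + y) := by
  linarith [hg.add_le_map_add hx hy, hg.nonneg y]

end IsConcaveGauge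

theorem IsAdmissibleWeight.isConcaveGauge {n : ℕ} {S : Set (Euc n)} {α : ℝ} {w : Euc n → ℝ}
    (hw : IsAdmissibleWeight S α w) (hα : 0 < α) (hS : IsOpenConvexCone S)
    (hw0 : ∀ x ∈ frontier S, w x = 0) :
    IsConcaveGauge S (S.indicator fun x => w x ^ (1 / α)) := by
  obtain ⟨hcont, hnonneg, ⟨x₀, hx₀cl, hwx₀⟩, hhom, hconc⟩ := hw
  have hα' : 0 < 1 / α := one_div_pos.2 hα
  set g := S.indicator fun x => w x ^ (1 / α) with hg
  have hgS : ∀ x ∈ S, g x = w x ^ (1 / α) := fun x hx => indicator_of_mem hx _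
  have hx₀ : x₀ ∈ S := by
    by_contra hx
    exact hwx₀ (hw0 x₀ (hS.1.frontier_eq ▸ ⟨hx₀cl, hx⟩))
  have hgcont : Continuous g :=
    continuous_indicator (fun x hx => by rw [hw0 x hx, Real.zero_rpow hα'.ne'])
      (hcont.rpow_const fun _ _ => Or.inr hα'.le)
  have hghom : ∀ x, ∀ t : ℝ, 0 < t → g (t • x) = t * g x := by
    intro x t ht
    by_cases hx : x ∈ S
    · have hxcl := subset_closure hx
      rw [hgS _ (hS.2.2 x hx t ht), hgS x hx, hhom x hxcl t ht,
        Real.mul_rpow (by positivity) (hnonneg x hxcl), ← Real.rpow_mul ht.le,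
        mul_one_div_cancel hα.ne', Real.rpow_one]
    · have htx : t • x ∉ S := fun h => hx <| by
        simpa [smul_smul, inv_mul_cancel₀ ht.ne'] using hS.2.2 _ h t⁻¹ (inv_pos.2 ht)
      rw [hg, indicator_of_notMem hx, indicator_of_notMem htx, mul_zero]
  have hgconc : ConcaveOn ℝ S g := hconc.congr fun x hx => (hgS x hx).symm
  have hgnonneg : ∀ x ∈ S, 0 ≤ g x := fun x hx =>
    hgS x hx ▸ Real.rpow_nonneg (hnonneg x (subset_closure hx)) _
  have hgx₀ : 0 < g x₀ :=
    hgS x₀ hx₀ ▸ Real.rpow_pos_of_pos ((hnonneg x₀ hx₀cl).lt_of_ne' hwx₀) _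
  refine ⟨hS, ⟨x₀, hx₀⟩, hgcont, fun x hx => ?_, fun x hx => indicator_of_notMem hx _, hghom,
    hgconc⟩
  have hlim : Filter.Tendsto (fun s : ℝ => x - s • x₀) (𝓝[>] 0) (𝓝 x) :=
    tendsto_nhdsWithin_of_tendsto_nhds <| Continuous.tendsto' (by fun_prop) _ _ (by simp)
  obtain ⟨s, hxs, hs⟩ :=
    ((hlim.eventually (hS.1.mem_nhds hx)).and self_mem_nhdsWithin).exists
  have hadd := add_le_map_add_of_concaveOn hgconc hghom hxs (hS.2.2 x₀ hx₀ s hs)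
  rw [sub_add_cancel, hghom x₀ s hs] at hadd
  linarith [hgnonneg _ hxs, mul_pos hs hgx₀]

/-! ### Mollification of a concave gauge -/

theorem le_fderiv_of_forall_add_mul_le {F : Type*} [NormedAddCommGroup F] [NormedSpace ℝ F]
    {G : F → ℝ} {x p : F} {c : ℝ} (hG : DifferentiableAt ℝ G x)
    (hle : ∀ t : ℝ, 0 < t → G x + t * c ≤ G (x + t • p)) : c ≤ fderiv ℝ G x p := by
  have hderiv : HasDerivAt (fun t : ℝ => G (x + t • p)) (fderiv ℝ G x p) 0 :=
    hG.hasFDerivAt.hasLineDerivAt p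
  refine ge_of_tendsto hderiv.tendsto_slope_zero_right ?_
  filter_upwards [self_mem_nhdsWithin] with t (ht : 0 < t)
  rw [zero_add, zero_smul, add_zero, smul_eq_mul, le_inv_mul_iff₀ ht]
  linarith [hle t ht]

namespace IsConcaveGauge

variable {n : ℕ} {S : Set (Euc n)} {g : Euc n → ℝ}

open ContinuousLinearMap Convolution

theorem convolution_add_le (hg : IsConcaveGauge S g) (ψ : ContDiffBump (0 : Euc n)) {x p : Euc n}
    (hx : ∀ t ∈ ball (0 : Euc n) ψ.rOut, x - t ∈ closure S) (hp : p ∈ closure S) :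
    (ψ.normed volume ⋆[lsmul ℝ ℝ, volume] g) x + g p ≤
      (ψ.normed volume ⋆[lsmul ℝ ℝ, volume] g) (x + p) := by
  have hint : ∀ z, Integrable fun t => ψ.normed volume t * g (z - t) := fun z =>
    (ψ.hasCompactSupport_normed (μ := volume)).convolutionExists_left (lsmul ℝ ℝ)
      ψ.continuous_normed hg.continuous.locallyIntegrable z
  have hintc : Integrable fun t => ψ.normed volume t * g p := ψ.integrable_normed.mul_const _
  have hconst : g p = ∫ t, ψ.normed volume t * g p := by
    rw [integral_mul_const, ψ.integral_normed, one_mul]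
  have hpoint : ∀ t, ψ.normed volume t * g (x - t) + ψ.normed volume t * g p ≤
      ψ.normed volume t * g (x + p - t) := fun t => by
    by_cases ht : t ∈ ball (0 : Euc n) ψ.rOut
    · rw [← mul_add, add_sub_right_comm]
      exact mul_le_mul_of_nonneg_left (hg.add_le_map_add (hx t ht) hp) (ψ.nonneg_normed t)
    · have : ψ.normed volume t = 0 := Function.notMem_support.1 (by rwa [ψ.support_normed_eq])
      simp only [this, zero_mul, add_zero, le_refl]
  simp only [convolution_def, lsmul_apply, smul_eq_mul]
  rw [hconst, ← integral_add (hint x) hintc]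
  exact integral_mono ((hint x).add hintc) (hint _) hpoint

/-- The gauge is mollified at points shifted into the cone, which keeps superadditivity, and hence
the derivative bound, up to the boundary of the cone. -/
theorem exists_contDiff_approx (hg : IsConcaveGauge S g) {K : Set (Euc n)} (hK : IsCompact K)
    (hKS : K ⊆ closure S) {σ : ℝ} (hσ : 0 < σ) :
    ∃ G : Euc n → ℝ, ContDiff ℝ 1 G ∧ (∀ x, 0 < G x) ∧ (∀ x ∈ K, |G x - g x| ≤ σ) ∧
      ∀ x ∈ K, ∀ p ∈ closure S, g p ≤ fderiv ℝ G x p := by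
  have huc := hK.uniformContinuousAt_of_continuousAt g (fun x _ => hg.continuous.continuousAt)
    (dist_mem_uniformity (half_pos hσ))
  obtain ⟨δ, hδ, hδg⟩ := Metric.mem_uniformity_dist.1 huc
  obtain ⟨e, r, hr, her, hball⟩ :=
    hg.isOpenConvexCone.exists_ball_subset_near_zero hg.nonempty hδ
  let ψ : ContDiffBump (0 : Euc n) := ⟨r / 2, r, half_pos hr, half_lt_self hr⟩
  set F : Euc n → ℝ := ψ.normed volume ⋆[lsmul ℝ ℝ, volume] g
  have hFsmooth : ContDiff ℝ 1 F :=
    ψ.hasCompactSupport_normed.contDiff_convolution_left _ ψ.contDiff_normed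
      hg.continuous.locallyIntegrable
  have hFnonneg : ∀ x, 0 ≤ F x := fun x =>
    integral_nonneg fun t => mul_nonneg (ψ.nonneg_normed t) (hg.nonneg _)
  have hGsmooth : ContDiff ℝ 1 fun x => F (x + e) + σ / 2 :=
    (hFsmooth.comp (contDiff_id.add contDiff_const)).add contDiff_const
  refine ⟨fun x => F (x + e) + σ / 2, hGsmooth, fun x => by linarith [hFnonneg (x + e)],
    fun x hx => ?_, fun x hx p hp => ?_⟩
  · have hclose : dist (F (x + e)) (g x) ≤ σ / 2 := by
      refine dist_convolution_le (half_pos hσ).le ψ.support_normed_eq.le ψ.nonneg_normed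
        ψ.integral_normed hg.continuous.aestronglyMeasurable fun y hy => ?_
      have hyx : dist x y < δ := by
        calc dist x y ≤ dist x (x + e) + dist (x + e) y := dist_triangle _ _ _
          _ < ‖e‖ + r := by
            rw [dist_self_add_right]
            exact add_lt_add_of_le_of_lt le_rfl (by rwa [dist_comm])
          _ < δ := her
      rw [dist_comm]
      exact (hδg hyx hx).le
    rw [Real.dist_eq] at hclose
    rw [abs_le] at hclose ⊢
    constructor <;> linarith [hclose.1, hclose.2]
  · refine le_fderiv_of_forall_add_mul_le (hGsmooth.differentiable one_ne_zero x) fun t ht => ?_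
    have hshift : ∀ y ∈ ball (0 : Euc n) ψ.rOut, x + e - y ∈ closure S := fun y hy => by
      rw [add_sub_assoc]
      exact subset_closure (hg.isOpenConvexCone.closure_add_mem (hKS hx)
        (hball (by simpa [dist_eq_norm] using hy)))
    have hmono := hg.convolution_add_le ψ hshift (hg.isOpenConvexCone.smul_mem_closure hp ht.le)
    rw [hg.map_smul p t ht, add_right_comm] at hmono
    linarith

end IsConcaveGauge

/-! ### Envelopes with prescribed slopes -/

section Subgradient

variable {F : Type*} [NormedAddCommGroup F] [InnerProductSpace ℝ F]

/-- `p` is a subgradient at `x` of the restriction of `u` to `V`. -/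
def IsSubgradientOn (V : Set F) (u : F → ℝ) (x p : F) : Prop :=
  ∀ y ∈ V, u x + ⟪p, y - x⟫ ≤ u y

/-- The second difference of `u` at `x` in the direction `h`. -/
def secondDiff (u : F → ℝ) (x h : F) : ℝ := u (x + h) + u (x - h) - 2 * u x

theorem IsSubgradientOn.secondDiff_nonneg {V : Set F} {u : F → ℝ} {x p h : F}
    (hp : IsSubgradientOn V u x p) (hadd : x + h ∈ V) (hsub : x - h ∈ V) :
    0 ≤ secondDiff u x h := by
  have h1 := hp _ hadd
  have h2 := hp _ hsub
  rw [add_sub_cancel_left] at h1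
  rw [sub_sub_cancel_left, inner_neg_right] at h2
  rw [secondDiff]
  linarith

end Subgradient

section Envelope

variable {F : Type*} [NormedAddCommGroup F] [InnerProductSpace ℝ F] {V : Finset F} {u : F → ℝ}
  {K : Set F} {x p : F} {lam : F → ℝ} {v : ℝ}

/-- `(lam, p)` is a saddle point, with value `v`, of the function
`(lam, q) ↦ ∑ z ∈ V, lam z * (u z + ⟪q, x - z⟫)` of weights `lam` on `V` and slopes `q ∈ K`. -/
structure IsEnvelopeSaddle (V : Finset F) (u : F → ℝ) (K : Set F) (x : F) (lam : F → ℝ) (p : F)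
    (v : ℝ) : Prop where
  nonneg : ∀ z ∈ V, 0 ≤ lam z
  sum_eq_one : ∑ z ∈ V, lam z = 1
  mem : p ∈ K
  value_le : ∀ k ∈ V, v ≤ u k + ⟪p, x - k⟫
  le_value : ∀ q ∈ K, ∑ z ∈ V, lam z * u z + ⟪q, x - ∑ z ∈ V, lam z • z⟫ ≤ v

/-- `φ` is the largest convex function below `u` on the finite set `V` among those that are suprema
of affine functions with slopes in `K`, described through its saddle points. -/
def IsSlopeEnvelope (V : Finset F) (u : F → ℝ) (K : Set F) (φ : F → ℝ) : Prop :=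
  ∀ x, ∃ lam p, IsEnvelopeSaddle V u K x lam p (φ x)

theorem sum_mul_add_inner_sub (hsum : ∑ z ∈ V, lam z = 1) (u : F → ℝ) (x q : F) :
    ∑ z ∈ V, lam z * (u z + ⟪q, x - z⟫) =
      ∑ z ∈ V, lam z * u z + ⟪q, x - ∑ z ∈ V, lam z • z⟫ := by
  simp only [mul_add, Finset.sum_add_distrib, inner_sub_right, inner_sum, inner_smul_right,
    mul_sub, Finset.sum_sub_distrib, ← Finset.sum_mul, hsum, one_mul]

theorem le_sum_mul_of_forall_le {ι : Type*} {s : Finset ι} {lam f : ι → ℝ} {c : ℝ}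
    (hnonneg : ∀ i ∈ s, 0 ≤ lam i) (hsum : ∑ i ∈ s, lam i = 1) (hf : ∀ i ∈ s, c ≤ f i) :
    c ≤ ∑ i ∈ s, lam i * f i := by
  calc c = ∑ i ∈ s, lam i * c := by rw [← Finset.sum_mul, hsum, one_mul]
    _ ≤ ∑ i ∈ s, lam i * f i :=
      Finset.sum_le_sum fun i hi => mul_le_mul_of_nonneg_left (hf i hi) (hnonneg i hi)

theorem exists_isEnvelopeSaddle (hV : V.Nonempty) (u : F → ℝ) (hKc : IsCompact K)
    (hKx : Convex ℝ K) (hK : K.Nonempty) (x : F) :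
    ∃ lam p v, IsEnvelopeSaddle V u K x lam p v := by
  classical
  let f : (V → ℝ) → F → ℝ := fun l q => ∑ z : V, l z * (u z + ⟪q, x - (z : F)⟫)
  have hf_single : ∀ (k : V) (q : F), f (Pi.single k 1) q = u k + ⟪q, x - k⟫ := fun k q => by
    simp [f, Pi.single_apply]
  have hconvex : ∀ q ∈ K, ConvexOn ℝ (stdSimplex ℝ V) (f · q) := fun q _ =>
    ⟨convex_stdSimplex ℝ V, fun l _ m _ s t _ _ _ => le_of_eq <| by
      simp only [f, Pi.add_apply, Pi.smul_apply, smul_eq_mul, Finset.mul_sum,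
        ← Finset.sum_add_distrib]
      exact Finset.sum_congr rfl fun z _ => by ring⟩
  have hconcave : ∀ l ∈ stdSimplex ℝ V, ConcaveOn ℝ K (f l) := fun l _ =>
    ⟨hKx, fun q _ r _ s t _ _ hst => le_of_eq <| by
      simp only [f, smul_eq_mul, Finset.mul_sum, ← Finset.sum_add_distrib]
      refine Finset.sum_congr rfl fun z _ => ?_
      rw [inner_add_left, real_inner_smul_left, real_inner_smul_left, eq_sub_of_add_eq' hst]
      ring⟩
  obtain ⟨l, ⟨hl_nonneg, hl_sum⟩, p, hp, hsaddle⟩ := Sion.exists_isSaddlePointOn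
    (X := stdSimplex ℝ V) (Y := K) (f := f) ⟨_, single_mem_stdSimplex ℝ (⟨_, hV.choose_spec⟩ : V)⟩
    (convex_stdSimplex ℝ V) (isCompact_stdSimplex ℝ V)
    (fun q _ => Continuous.lowerSemicontinuous (by fun_prop) |>.lowerSemicontinuousOn _)
    (fun q hq => (hconvex q hq).quasiconvexOn) hKx hK hKc
    (fun l _ => Continuous.upperSemicontinuous (by fun_prop) |>.upperSemicontinuousOn _)
    (fun l hl => (hconcave l hl).quasiconcaveOn)
  let lam : F → ℝ := fun z => if h : z ∈ V then l ⟨z, h⟩ else 0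
  have hlam : ∀ g : F → ℝ, ∑ z ∈ V, lam z * g z = ∑ z : V, l z * g z := fun g => by
    rw [← Finset.sum_coe_sort]
    simp [lam]
  have hlam_sum : ∑ z ∈ V, lam z = 1 := by
    simpa using (hlam 1).trans (by simpa using hl_sum)
  refine ⟨lam, p, f l p, fun z hz => ?_, hlam_sum, hp, fun k hk => ?_, fun q hq => ?_⟩
  · simpa [lam, hz] using hl_nonneg ⟨z, hz⟩
  · simpa only [hf_single] using hsaddle _ (single_mem_stdSimplex ℝ (⟨k, hk⟩ : V)) p hp
  · rw [← sum_mul_add_inner_sub hlam_sum, hlam]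
    exact hsaddle l ⟨hl_nonneg, hl_sum⟩ q hq

theorem exists_isSlopeEnvelope (hV : V.Nonempty) (u : F → ℝ) (hKc : IsCompact K)
    (hKx : Convex ℝ K) (hK : K.Nonempty) : ∃ φ, IsSlopeEnvelope V u K φ := by
  choose lam p φ hφ using exists_isEnvelopeSaddle hV u hKc hKx hK
  exact ⟨φ, fun x => ⟨lam x, p x, hφ x⟩⟩

namespace IsEnvelopeSaddle

theorem value_eq (h : IsEnvelopeSaddle V u K x lam p v) :
    v = ∑ z ∈ V, lam z * u z + ⟪p, x - ∑ z ∈ V, lam z • z⟫ := by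
  refine le_antisymm ?_ (h.le_value p h.mem)
  rw [← sum_mul_add_inner_sub h.sum_eq_one]
  exact le_sum_mul_of_forall_le h.nonneg h.sum_eq_one h.value_le

theorem isMaxOn (h : IsEnvelopeSaddle V u K x lam p v) :
    IsMaxOn (fun q => ⟪q, x - ∑ z ∈ V, lam z • z⟫) K p := fun q hq => by
  have := h.value_eq ▸ h.le_value q hq
  simpa using this

theorem add_inner_le_value (h : IsEnvelopeSaddle V u K x lam p v) {q : F} (hq : q ∈ K) {c : ℝ}
    (hc : ∀ k ∈ V, c + ⟪q, k⟫ ≤ u k) : c + ⟪q, x⟫ ≤ v := by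
  refine le_trans ?_ (h.le_value q hq)
  rw [← sum_mul_add_inner_sub h.sum_eq_one]
  refine le_sum_mul_of_forall_le h.nonneg h.sum_eq_one fun z hz => ?_
  rw [inner_sub_right]
  linarith [hc z hz]

theorem isSubgradientOn (h : IsEnvelopeSaddle V u K x lam p v) {z : F} (hz : z ∈ V)
    (hlam : 0 < lam z) : IsSubgradientOn V u z p := by
  have hgap_nonneg : ∀ k ∈ V, 0 ≤ lam k * (u k + ⟪p, x - k⟫ - v) := fun k hk =>
    mul_nonneg (h.nonneg k hk) (sub_nonneg.2 (h.value_le k hk))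
  have hgap_sum : ∑ k ∈ V, lam k * (u k + ⟪p, x - k⟫ - v) = 0 := by
    simp only [mul_sub, Finset.sum_sub_distrib]
    rw [← Finset.sum_mul, h.sum_eq_one, one_mul, sum_mul_add_inner_sub h.sum_eq_one, ← h.value_eq,
      sub_self]
  have hgap := (Finset.sum_eq_zero_iff_of_nonneg hgap_nonneg).1 hgap_sum z hz
  have hvz : u z + ⟪p, x - z⟫ - v = 0 := (mul_eq_zero.1 hgap).resolve_left hlam.ne'
  intro k hk
  have hvk := h.value_le k hk
  rw [inner_sub_right] at hvz hvk ⊢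
  linarith

theorem value_le_sum (h : IsEnvelopeSaddle V u K x lam p v) {d p' : F} {lam' : F → ℝ} {v' : ℝ}
    (h' : IsEnvelopeSaddle V u K (x + d) lam' p' v') (hd : ∀ z ∈ V, 0 < lam z → z + d ∈ V) :
    v' ≤ ∑ z ∈ V, lam z * u (z + d) + ⟪p, x - ∑ z ∈ V, lam z • z⟫ := by
  have hterm : ∀ z ∈ V, lam z * v' ≤ lam z * (u (z + d) + ⟪p', x - z⟫) := by
    intro z hz
    rcases (h.nonneg z hz).eq_or_lt with h0 | hpos
    · simp only [← h0, zero_mul, le_refl]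
    · have := h'.value_le _ (hd z hz hpos)
      rw [add_sub_add_right_eq_sub] at this
      exact mul_le_mul_of_nonneg_left this hpos.le
  calc v' = ∑ z ∈ V, lam z * v' := by rw [← Finset.sum_mul, h.sum_eq_one, one_mul]
    _ ≤ ∑ z ∈ V, lam z * (u (z + d) + ⟪p', x - z⟫) := Finset.sum_le_sum hterm
    _ = ∑ z ∈ V, lam z * u (z + d) + ⟪p', x - ∑ z ∈ V, lam z • z⟫ :=
      sum_mul_add_inner_sub h.sum_eq_one (fun z => u (z + d)) x p'
    _ ≤ _ := by gcongr; exact h.isMaxOn h'.mem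

end IsEnvelopeSaddle

namespace IsSlopeEnvelope

variable {φ : F → ℝ}

theorem le_of_mem (hφ : IsSlopeEnvelope V u K φ) (hx : x ∈ V) : φ x ≤ u x := by
  obtain ⟨lam, p, h⟩ := hφ x
  simpa using h.value_le x hx

theorem exists_mem_isSubgradientOn (hφ : IsSlopeEnvelope V u K φ) (hV : V.Nonempty) {q : F}
    (hq : q ∈ K) : ∃ z ∈ V, IsSubgradientOn univ φ z q := by
  obtain ⟨z, hz, hmin⟩ := V.exists_min_image (fun k => u k - ⟪q, k⟫) hV
  refine ⟨z, hz, fun y _ => ?_⟩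
  obtain ⟨lam, p, h⟩ := hφ y
  have hle := h.add_inner_le_value hq fun k hk => le_sub_iff_add_le.1 (hmin k hk)
  rw [inner_sub_right]
  linarith [hφ.le_of_mem hz]

theorem isSubgradientOn_of_isEnvelopeSaddle (hφ : IsSlopeEnvelope V u K φ)
    (h : IsEnvelopeSaddle V u K x lam p (φ x)) : IsSubgradientOn univ φ x p := by
  intro y _
  obtain ⟨lam', p', h'⟩ := hφ y
  have hle := h'.add_inner_le_value (c := φ x - ⟪p, x⟫) h.mem fun k hk => by
    have := h.value_le k hk
    rw [inner_sub_right] at this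
    linarith
  rw [inner_sub_right]
  linarith

theorem secondDiff_le_sum (hφ : IsSlopeEnvelope V u K φ)
    (h : IsEnvelopeSaddle V u K x lam p (φ x)) {d : F}
    (hd : ∀ z ∈ V, 0 < lam z → z + d ∈ V ∧ z - d ∈ V) :
    secondDiff φ x d ≤ ∑ z ∈ V, lam z * secondDiff u z d := by
  obtain ⟨_, _, hadd⟩ := hφ (x + d)
  obtain ⟨_, _, hsub⟩ := hφ (x - d)
  have hle_add := h.value_le_sum hadd fun z hz hlam => (hd z hz hlam).1
  have hle_sub := h.value_le_sum (d := -d) (by rwa [← sub_eq_add_neg]) fun z hz hlam => by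
    simpa only [← sub_eq_add_neg] using (hd z hz hlam).2
  simp only [← sub_eq_add_neg] at hle_sub
  have hsplit : ∑ z ∈ V, lam z * secondDiff u z d = ∑ z ∈ V, lam z * u (z + d) +
      ∑ z ∈ V, lam z * u (z - d) - 2 * ∑ z ∈ V, lam z * u z := by
    rw [Finset.mul_sum, ← Finset.sum_add_distrib, ← Finset.sum_sub_distrib]
    exact Finset.sum_congr rfl fun z _ => by rw [secondDiff]; ring
  rw [hsplit, secondDiff]
  linarith [h.value_eq]

end IsSlopeEnvelope

end Envelope

/-! ### Approximate potentials from contact sets -/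

/-- The `i`-th edge vector of the lattice `ε ℤⁿ`. -/
def latticeStep {n : ℕ} (ε : ℝ) (i : Fin n) : Euc n :=
  ε • EuclideanSpace.single i 1

/-- The discrete Laplacian at mesh `ε`, without the normalising factor `ε⁻²`. -/
def latticeLaplacian {n : ℕ} (ε : ℝ) (u : Euc n → ℝ) (x : Euc n) : ℝ :=
  ∑ i : Fin n, secondDiff u x (latticeStep ε i)

/-- A discrete substitute, at mesh `ε` and accuracy `σ`, for the potential: its slopes lie in the
unit sector, those attained over `E` fill it, and `Δφ + α g(∇φ) / g ≤ c` holds approximately. -/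
structure IsApproxPotential {n : ℕ} (S E : Set (Euc n)) (g : Euc n → ℝ) (α c σ ε : ℝ)
    (φ : Euc n → ℝ) : Prop where
  exists_mem_of_slope : ∀ q ∈ unitSector S, ∃ z ∈ E, IsSubgradientOn univ φ z q
  exists_slope : ∀ x, ∃ p ∈ unitSector S, IsSubgradientOn univ φ x p ∧ (0 < g p → x ∈ S) ∧
    latticeLaplacian ε φ x ≤ ε ^ 2 * (c + σ - α * g p / (g x + σ))

theorem one_div_le_sum_mul_one_div {ι : Type*} {s : Finset ι} {lam G : ι → ℝ} {M : ℝ}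
    (hnonneg : ∀ i ∈ s, 0 ≤ lam i) (hsum : ∑ i ∈ s, lam i = 1) (hG : ∀ i ∈ s, 0 < G i)
    (hM : ∑ i ∈ s, lam i * G i ≤ M) : 1 / M ≤ ∑ i ∈ s, lam i * (1 / G i) := by
  have hconvex : ConvexOn ℝ (Ioi 0) fun t : ℝ => 1 / t := by
    simpa using convexOn_zpow (𝕜 := ℝ) (-1)
  have hpos : 0 < ∑ i ∈ s, lam i * G i := (convex_Ioi (0 : ℝ)).sum_mem hnonneg hsum hG
  exact (one_div_le_one_div_of_le hpos hM).trans (hconvex.map_sum_le hnonneg hsum hG)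

namespace IsConcaveGauge

variable {n : ℕ} {S : Set (Euc n)} {g : Euc n → ℝ}

theorem mem_and_le_of_isMaxOn_unitSector (hg : IsConcaveGauge S g) {x y p : Euc n} (hy : y ∈ S)
    (hp : p ∈ unitSector S) (hgp : 0 < g p)
    (hmax : IsMaxOn (fun q => ⟪q, x - y⟫) (unitSector S) p) : x ∈ S ∧ g y ≤ g x := by
  have hS := hg.isOpenConvexCone
  have hpS : p ∈ S := hg.mem_of_pos hgp
  have hxy := hS.eq_norm_smul_of_isMaxOn_unitSector hpS (norm_le_one_of_mem_unitSector hp) hmax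
  have hmem : x - y ∈ closure S := by
    rw [hxy]
    exact hS.smul_mem_closure (subset_closure hpS) (norm_nonneg _)
  have hx : y + (x - y) = x := add_sub_cancel y x
  exact ⟨by simpa using hS.closure_add_mem hmem hy, by
    simpa only [hx] using hg.le_map_add (subset_closure hy) hmem⟩

theorem div_le_sum_mul_div (hg : IsConcaveGauge S g) {α σ : ℝ} (hα : 0 ≤ α)
    {V : Finset (Euc n)} (hVS : ∀ z ∈ V, z ∈ S) {lam G : Euc n → ℝ}
    (hnonneg : ∀ z ∈ V, 0 ≤ lam z) (hsum : ∑ z ∈ V, lam z = 1) (hG0 : ∀ z ∈ V, 0 < G z)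
    (hG : ∀ z ∈ V, G z ≤ g z + σ) {x p : Euc n} (hp : p ∈ unitSector S) (hgp : 0 < g p)
    (hmax : IsMaxOn (fun q => ⟪q, x - ∑ z ∈ V, lam z • z⟫) (unitSector S) p) :
    α * g p / (g x + σ) ≤ ∑ z ∈ V, lam z * (α * g p / G z) := by
  have hy : ∑ z ∈ V, lam z • z ∈ S := hg.isOpenConvexCone.2.1.sum_mem hnonneg hsum hVS
  have hyx : g (∑ z ∈ V, lam z • z) ≤ g x := (hg.mem_and_le_of_isMaxOn_unitSector hy hp hgp hmax).2
  have hjensen : ∑ z ∈ V, lam z * g z ≤ g (∑ z ∈ V, lam z • z) :=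
    hg.concaveOn.le_map_sum hnonneg hsum hVS
  have hmean : ∑ z ∈ V, lam z * G z ≤ g x + σ := by
    calc ∑ z ∈ V, lam z * G z ≤ ∑ z ∈ V, lam z * (g z + σ) :=
          Finset.sum_le_sum fun z hz => mul_le_mul_of_nonneg_left (hG z hz) (hnonneg z hz)
      _ = ∑ z ∈ V, lam z * g z + σ := by
          simp only [mul_add, Finset.sum_add_distrib, ← Finset.sum_mul, hsum, one_mul]
      _ ≤ g x + σ := by linarith
  calc α * g p / (g x + σ) = α * g p * (1 / (g x + σ)) := div_eq_mul_one_div _ _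
    _ ≤ α * g p * ∑ z ∈ V, lam z * (1 / G z) :=
      mul_le_mul_of_nonneg_left (one_div_le_sum_mul_one_div hnonneg hsum hG0 hmean) (by positivity)
    _ = ∑ z ∈ V, lam z * (α * g p / G z) := by
      rw [Finset.mul_sum]
      exact Finset.sum_congr rfl fun z _ => by ring

theorem exists_isApproxPotential (hg : IsConcaveGauge S g) {α c σ ε : ℝ} (hα : 0 ≤ α)
    {E : Set (Euc n)} (hES : E ⊆ S) {V : Finset (Euc n)} (hV : V.Nonempty)
    (hVE : ∀ z ∈ V, z ∈ E) {G : Euc n → ℝ} (hG0 : ∀ z ∈ V, 0 < G z)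
    (hG : ∀ z ∈ V, G z ≤ g z + σ) {u : Euc n → ℝ}
    (hcontact : ∀ x ∈ V, ∀ p ∈ unitSector S, IsSubgradientOn V u x p →
      (∀ i : Fin n, x + latticeStep ε i ∈ V ∧ x - latticeStep ε i ∈ V) ∧
      latticeLaplacian ε u x ≤ ε ^ 2 * (c + σ - α * g p / G x)) :
    ∃ φ, IsApproxPotential S E g α c σ ε φ := by
  have hS := hg.isOpenConvexCone
  obtain ⟨φ, hφ⟩ := exists_isSlopeEnvelope hV u isCompact_unitSector hS.convex_unitSector
    (hS.unitSector_nonempty hg.nonempty)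
  refine ⟨φ, fun q hq => ?_, fun x => ?_⟩
  · obtain ⟨z, hz, hzq⟩ := hφ.exists_mem_isSubgradientOn hV hq
    exact ⟨z, hVE z hz, hzq⟩
  obtain ⟨lam, p, h⟩ := hφ x
  have hVS : ∀ z ∈ V, z ∈ S := fun z hz => hES (hVE z hz)
  have hz_contact := fun z hz hlam => hcontact z hz p h.mem (h.isSubgradientOn hz hlam)
  refine ⟨p, h.mem, hφ.isSubgradientOn_of_isEnvelopeSaddle h, fun hgp =>
    (hg.mem_and_le_of_isMaxOn_unitSector (hS.2.1.sum_mem h.nonneg h.sum_eq_one hVS) h.mem hgp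
      h.isMaxOn).1, ?_⟩
  have hgauge : α * g p / (g x + σ) ≤ ∑ z ∈ V, lam z * (α * g p / G z) := by
    rcases (hg.nonneg p).eq_or_lt with h0 | hgp
    · simp only [← h0, mul_zero, zero_div, Finset.sum_const_zero, le_refl]
    · exact hg.div_le_sum_mul_div hα hVS h.nonneg h.sum_eq_one hG0 hG h.mem hgp h.isMaxOn
  calc latticeLaplacian ε φ x
      ≤ ∑ i : Fin n, ∑ z ∈ V, lam z * secondDiff u z (latticeStep ε i) :=
        Finset.sum_le_sum fun i _ =>
          hφ.secondDiff_le_sum h fun z hz hlam => (hz_contact z hz hlam).1 i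
    _ = ∑ z ∈ V, lam z * latticeLaplacian ε u z := by
        simp only [latticeLaplacian, Finset.mul_sum]
        exact Finset.sum_comm
    _ ≤ ∑ z ∈ V, lam z * (ε ^ 2 * (c + σ - α * g p / G z)) := by
        refine Finset.sum_le_sum fun z hz => ?_
        rcases (h.nonneg z hz).eq_or_lt with h0 | hlam
        · simp only [← h0, zero_mul, le_refl]
        · exact mul_le_mul_of_nonneg_left (hz_contact z hz hlam).2 hlam.le
    _ = ε ^ 2 * (c + σ - ∑ z ∈ V, lam z * (α * g p / G z)) := by
        have hmean : ∑ z ∈ V, lam z * (ε ^ 2 * (c + σ)) = ε ^ 2 * (c + σ) := by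
          rw [← Finset.sum_mul, h.sum_eq_one, one_mul]
        rw [mul_sub, ← hmean, Finset.mul_sum, ← Finset.sum_sub_distrib]
        exact Finset.sum_congr rfl fun z _ => by ring
    _ ≤ ε ^ 2 * (c + σ - α * g p / (g x + σ)) := by gcongr

end IsConcaveGauge

/-! ### A Neumann problem on a weighted graph -/

section GraphLaplacian

variable {ι : Type*} [Fintype ι] {A : ι → ι → ℝ}

/-- The Laplacian of the complete graph with edge weights `A`. -/
def graphLaplacian (A : ι → ι → ℝ) : (ι → ℝ) →ₗ[ℝ] ι → ℝ :=
  LinearMap.pi fun x =>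
    ∑ y, A x y • (LinearMap.proj (R := ℝ) (φ := fun _ : ι => ℝ) y - LinearMap.proj x)

theorem graphLaplacian_apply (u : ι → ℝ) (x : ι) :
    graphLaplacian A u x = ∑ y, A x y * (u y - u x) := by
  simp [graphLaplacian]

theorem two_mul_sum_mul_graphLaplacian (hsymm : ∀ x y, A x y = A y x) (u v : ι → ℝ) :
    2 * ∑ x, v x * graphLaplacian A u x = -∑ x, ∑ y, A x y * ((u y - u x) * (v y - v x)) := by
  have hswap : ∑ x, v x * graphLaplacian A u x = ∑ x, ∑ y, A x y * ((u x - u y) * v y) := by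
    simp only [graphLaplacian_apply, Finset.mul_sum]
    rw [Finset.sum_comm]
    exact Finset.sum_congr rfl fun x _ => Finset.sum_congr rfl fun y _ => by rw [hsymm y x]; ring
  rw [two_mul]
  nth_rewrite 2 [hswap]
  simp only [graphLaplacian_apply, Finset.mul_sum, ← Finset.sum_add_distrib,
    ← Finset.sum_neg_distrib]
  exact Finset.sum_congr rfl fun x _ => Finset.sum_congr rfl fun y _ => by ring

theorem sum_graphLaplacian (hsymm : ∀ x y, A x y = A y x) (u : ι → ℝ) :
    ∑ x, graphLaplacian A u x = 0 := by
  simpa using two_mul_sum_mul_graphLaplacian hsymm u 1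

theorem eq_of_graphLaplacian_eq_zero (hsymm : ∀ x y, A x y = A y x) (hpos : ∀ x y, 0 < A x y)
    {u : ι → ℝ} (hu : graphLaplacian A u = 0) (x y : ι) : u y = u x := by
  have hterm : ∀ x y, 0 ≤ A x y * ((u y - u x) * (u y - u x)) := fun x y =>
    mul_nonneg (hpos x y).le (mul_self_nonneg _)
  have henergy : ∑ x, ∑ y, A x y * ((u y - u x) * (u y - u x)) = 0 := by
    simpa [hu] using two_mul_sum_mul_graphLaplacian hsymm u u
  have hx := (Finset.sum_eq_zero_iff_of_nonneg fun x _ =>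
    Finset.sum_nonneg fun y _ => hterm x y).1 henergy x (Finset.mem_univ x)
  have hxy := (Finset.sum_eq_zero_iff_of_nonneg fun y _ => hterm x y).1 hx y (Finset.mem_univ y)
  exact sub_eq_zero.1 (mul_self_eq_zero.1 ((mul_eq_zero.1 hxy).resolve_left (hpos x y).ne'))

theorem exists_graphLaplacian_le (hsymm : ∀ x y, A x y = A y x) (hpos : ∀ x y, 0 < A x y)
    {b : ι → ℝ} (hb : 0 ≤ ∑ x, b x) : ∃ u, graphLaplacian A u ≤ b := by
  cases isEmpty_or_nonempty ι
  · exact ⟨0, fun x => isEmptyElim x⟩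
  -- Subtracting the sum makes the operator injective and changes nothing on sum-zero functions.
  let T : (ι → ℝ) →ₗ[ℝ] ι → ℝ :=
    graphLaplacian A - LinearMap.pi fun _ => ∑ y, LinearMap.proj y
  have hT : ∀ u x, T u x = graphLaplacian A u x - ∑ y, u y := fun u x => by simp [T]
  have hcard : (Fintype.card ι : ℝ) ≠ 0 := Nat.cast_ne_zero.2 Fintype.card_ne_zero
  have hsum : ∀ u, ∑ x, T u x = 0 → ∑ y, u y = 0 := fun u h => by
    simpa [hT, Finset.sum_sub_distrib, sum_graphLaplacian hsymm, hcard] using h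
  have hinj : Function.Injective T := by
    refine (injective_iff_map_eq_zero T).2 fun u hu => ?_
    have hu0 : ∑ y, u y = 0 := hsum u (by simp [hu])
    have hker : graphLaplacian A u = 0 := funext fun x => by
      simpa [hT, hu0] using congrFun hu x
    refine funext fun x => ?_
    simpa [eq_of_graphLaplacian_eq_zero hsymm hpos hker x, hcard] using hu0
  obtain ⟨u, hu⟩ := LinearMap.injective_iff_surjective.1 hinj
    fun x => b x - (∑ y, b y) / Fintype.card ι
  have hu0 : ∑ y, u y = 0 := hsum u (by simp [hu, mul_div_cancel₀ _ hcard])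
  refine ⟨u, fun x => ?_⟩
  have hux := congrFun hu x
  rw [hT, hu0, sub_zero] at hux
  rw [hux]
  exact sub_le_self _ (by positivity)

end GraphLaplacian

theorem exists_sum_mul_sub_le {X : Type*} {V : Finset X} {A : X → X → ℝ}
    (hsymm : ∀ x y, A x y = A y x) (hpos : ∀ x y, 0 < A x y) {b : X → ℝ}
    (hb : 0 ≤ ∑ x ∈ V, b x) : ∃ u : X → ℝ, ∀ x ∈ V, ∑ y ∈ V, A x y * (u y - u x) ≤ b x := by
  obtain ⟨u, hu⟩ := exists_graphLaplacian_le (A := fun x y : V => A x y)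
    (fun x y => hsymm x y) (fun x y => hpos x y) (b := fun x => b x)
    (by rwa [Finset.sum_coe_sort V b])
  refine ⟨Function.extend Subtype.val u 0, fun x hx => ?_⟩
  have hext : ∀ y : V, Function.extend Subtype.val u 0 (y : X) = u y :=
    Subtype.val_injective.extend_apply u 0
  have hux := hu ⟨x, hx⟩
  rw [graphLaplacian_apply] at hux
  simpa only [← Finset.sum_coe_sort V, hext, hext ⟨x, hx⟩] using hux

section EdgeWeight

variable {ι X : Type*}

/-- The conductance of an edge `{x, y}`: the smaller endpoint value of the density `a`. It vanishes
as soon as one endpoint leaves `{0 < a}`, which encodes the Neumann condition. -/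
def conductance (a : X → ℝ) (x y : X) : ℝ :=
  max 0 (min (a x) (a y))

theorem conductance_nonneg (a : X → ℝ) (x y : X) : 0 ≤ conductance a x y :=
  le_max_left _ _

theorem conductance_comm (a : X → ℝ) (x y : X) : conductance a x y = conductance a y x := by
  simp only [conductance, min_comm]

theorem conductance_eq_zero {a : X → ℝ} {x y : X} (hy : a y ≤ 0) : conductance a x y = 0 :=
  max_eq_left ((min_le_right _ _).trans hy)

theorem le_conductance {a : X → ℝ} {x y : X} {m : ℝ} (hx : m ≤ a x) (hy : m ≤ a y) :
    m ≤ conductance a x y :=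
  (le_min hx hy).trans (le_max_right _ _)

variable [AddCommGroup X] [Fintype ι] [DecidableEq X]

/-- Edge weights of the graph joining `x` to `x ± h i` with its conductance; the background weight
`κ` on all pairs makes the graph connected. -/
def edgeWeight (a : X → ℝ) (h : ι → X) (κ : ℝ) (x y : X) : ℝ :=
  κ + ∑ i, ((if y = x + h i then conductance a x y else 0) +
    if y = x - h i then conductance a x y else 0)

theorem edgeWeight_comm (a : X → ℝ) (h : ι → X) (κ : ℝ) (x y : X) :
    edgeWeight a h κ x y = edgeWeight a h κ y x := by
  have hflip : ∀ x y : X, ∀ i, y = x - h i ↔ x = y + h i := fun x y i =>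
    eq_sub_iff_add_eq.trans eq_comm
  simp only [edgeWeight, conductance_comm a x y, hflip, add_comm]

theorem edgeWeight_pos (a : X → ℝ) (h : ι → X) {κ : ℝ} (hκ : 0 < κ) (x y : X) :
    0 < edgeWeight a h κ x y := by
  refine add_pos_of_pos_of_nonneg hκ (Finset.sum_nonneg fun i _ => add_nonneg ?_ ?_) <;>
  · split_ifs
    exacts [conductance_nonneg a x y, le_rfl]

theorem sum_edgeWeight_mul {a : X → ℝ} {h : ι → X} {V : Finset X} {x : X}
    (hV : ∀ i, (0 < a (x + h i) → x + h i ∈ V) ∧ (0 < a (x - h i) → x - h i ∈ V)) (κ : ℝ)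
    (F : X → ℝ) :
    ∑ y ∈ V, edgeWeight a h κ x y * F y = κ * ∑ y ∈ V, F y +
      ∑ i, (conductance a x (x + h i) * F (x + h i) + conductance a x (x - h i) * F (x - h i)) := by
  have hsingle : ∀ z, (0 < a z → z ∈ V) →
      ∑ y ∈ V, (if y = z then conductance a x y else 0) * F y = conductance a x z * F z := by
    intro z hz
    simp only [ite_mul, zero_mul, Finset.sum_ite_eq']
    split_ifs with hzV
    · rfl
    · rw [conductance_eq_zero (not_lt.1 fun h0 => hzV (hz h0)), zero_mul]
  simp only [edgeWeight, add_mul, Finset.sum_mul, Finset.sum_add_distrib (s := V), Finset.mul_sum]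
  rw [Finset.sum_comm]
  simp only [Finset.sum_add_distrib, hsingle _ (hV _).1, hsingle _ (hV _).2]

end EdgeWeight

theorem exists_clamp {a₀ a₁ a₂ X Y : ℝ} (h₀ : 0 ≤ a₀) (h₁ : |a₁ - a₀ - X| ≤ Y)
    (h₂ : |a₂ - a₀ + X| ≤ Y) :
    ∃ s, |s| ≤ |X| ∧ (|X| ≤ a₀ → s = X) ∧
      |max 0 (min a₀ a₁) - max 0 (min a₀ a₂) - s| ≤ 2 * Y := by
  refine ⟨max (-a₀) (min a₀ X), ?_, fun hX => ?_, ?_⟩ <;> grind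

section Contact

variable {n : ℕ} {V : Finset (Euc n)} {a u : Euc n → ℝ} {ε κ ω β R : ℝ} {x p D : Euc n}

theorem inner_latticeStep (p : Euc n) (ε : ℝ) (i : Fin n) : ⟪p, latticeStep ε i⟫ = ε * p i := by
  simp [latticeStep, inner_smul_right, EuclideanSpace.inner_single_right]

theorem norm_latticeStep (ε : ℝ) (i : Fin n) : ‖latticeStep ε i‖ = |ε| := by
  simp [latticeStep, norm_smul]

/-- The first-order jet of the density `a` at a lattice point of the vertex set `V`. -/
structure IsLatticeJet (V : Finset (Euc n)) (a : Euc n → ℝ) (ε ω : ℝ) (x D : Euc n) : Prop where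
  mem_add : ∀ i, 0 < a (x + latticeStep ε i) → x + latticeStep ε i ∈ V
  mem_sub : ∀ i, 0 < a (x - latticeStep ε i) → x - latticeStep ε i ∈ V
  abs_add_le : ∀ i, |a (x + latticeStep ε i) - a x - ε * D i| ≤ ε * ω
  abs_sub_le : ∀ i, |a (x - latticeStep ε i) - a x + ε * D i| ≤ ε * ω

theorem IsLatticeJet.exists_drift (hjet : IsLatticeJet V a ε ω x D) (ha : 0 ≤ a x) (hε : 0 ≤ ε)
    (hp : ‖p‖ ≤ 1) :
    ∃ s : Euc n, ‖s‖ ≤ ε * ‖D‖ ∧ ((∀ i, |ε * D i| ≤ a x) → s = ε • D) ∧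
      ε * ⟪p, s⟫ - 2 * n * ε ^ 2 * ω ≤ ∑ i, ε * p i *
        (conductance a x (x + latticeStep ε i) - conductance a x (x - latticeStep ε i)) := by
  choose s hs_le hs_eq hs using fun i => exists_clamp ha (hjet.abs_add_le i) (hjet.abs_sub_le i)
  refine ⟨WithLp.toLp 2 s, ?_, fun hD => PiLp.ext fun i => hs_eq i (hD i), ?_⟩
  · rw [← abs_of_nonneg hε, ← Real.norm_eq_abs, ← norm_smul]
    refine (sq_le_sq₀ (norm_nonneg _) (norm_nonneg _)).1 ?_
    simp only [EuclideanSpace.real_norm_sq_eq]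
    exact Finset.sum_le_sum fun i _ => sq_le_sq.2 (hs_le i)
  have hterm : ∀ i, ε * (p i * s i) - 2 * ε ^ 2 * ω ≤ ε * p i *
      (conductance a x (x + latticeStep ε i) - conductance a x (x - latticeStep ε i)) := by
    intro i
    have hpi : |p i| ≤ 1 := (PiLp.norm_apply_le p i).trans hp
    set q := conductance a x (x + latticeStep ε i) - conductance a x (x - latticeStep ε i)
    have hq : |p i * (q - s i)| ≤ 1 * (2 * (ε * ω)) := by
      rw [abs_mul]
      exact mul_le_mul hpi (hs i) (abs_nonneg _) zero_le_one
    linear_combination ε * (abs_le.1 hq).1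
  calc ε * ⟪p, WithLp.toLp 2 s⟫ - 2 * n * ε ^ 2 * ω
      = ∑ i, (ε * (p i * s i) - 2 * ε ^ 2 * ω) := by
        simp [PiLp.inner_apply, Finset.sum_sub_distrib, Finset.mul_sum, mul_comm]
        ring
    _ ≤ _ := Finset.sum_le_sum fun i _ => hterm i

/-- The conductance-weighted excess of `u` over its tangent of slope `p`, summed over the lattice
neighbours of `x`. -/
def slopeExcess (a u : Euc n → ℝ) (ε : ℝ) (x p : Euc n) : ℝ :=
  ∑ i, (conductance a x (x + latticeStep ε i) *
      (u (x + latticeStep ε i) - u x - ⟪p, latticeStep ε i⟫) +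
    conductance a x (x - latticeStep ε i) *
      (u (x - latticeStep ε i) - u x + ⟪p, latticeStep ε i⟫))

open scoped Classical in
theorem IsLatticeJet.exists_slopeExcess_le (hjet : IsLatticeJet V a ε ω x D) (ha : 0 ≤ a x)
    (hε : 0 ≤ ε) (hκ : 0 ≤ κ) (hR : ∀ y ∈ V, ‖y - x‖ ≤ R) (hκR : κ * (V.card * R) ≤ ε ^ 2 * ω)
    (hu : ∑ y ∈ V, edgeWeight a (latticeStep ε) κ x y * (u y - u x) ≤ β)
    (hp : ‖p‖ ≤ 1) (hsub : IsSubgradientOn V u x p) :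
    ∃ s : Euc n, ‖s‖ ≤ ε * ‖D‖ ∧ ((∀ i, |ε * D i| ≤ a x) → s = ε • D) ∧
      slopeExcess a u ε x p ≤ β + (2 * n + 1) * ε ^ 2 * ω - ε * ⟪p, s⟫ := by
  obtain ⟨s, hs, hs_eq, hdrift⟩ := hjet.exists_drift ha hε hp
  refine ⟨s, hs, hs_eq, ?_⟩
  have hbackground : -(ε ^ 2 * ω) ≤ κ * ∑ y ∈ V, (u y - u x) := by
    have : -(V.card * R) ≤ ∑ y ∈ V, (u y - u x) := by
      rw [← nsmul_eq_mul, ← smul_neg]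
      refine Finset.card_nsmul_le_sum _ _ _ fun y hy => ?_
      have hinner := (abs_le.1 ((abs_real_inner_le_norm p (y - x)).trans
        (mul_le_mul hp (hR y hy) (norm_nonneg _) zero_le_one))).1
      linarith [hsub y hy]
    nlinarith
  rw [sum_edgeWeight_mul fun i => ⟨hjet.mem_add i, hjet.mem_sub i⟩] at hu
  simp only [slopeExcess, inner_latticeStep]
  calc _ = ∑ i, (conductance a x (x + latticeStep ε i) * (u (x + latticeStep ε i) - u x) +
        conductance a x (x - latticeStep ε i) * (u (x - latticeStep ε i) - u x)) -
        ∑ i, ε * p i *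
        (conductance a x (x + latticeStep ε i) - conductance a x (x - latticeStep ε i)) := by
        rw [← Finset.sum_sub_distrib]
        exact Finset.sum_congr rfl fun i _ => by ring
    _ ≤ _ := by linarith

theorem IsLatticeJet.mul_latticeLaplacian_le_slopeExcess (hjet : IsLatticeJet V a ε ω x D)
    (hsub : IsSubgradientOn V u x p) {m : ℝ} (hm : 0 < m) (hmx : m ≤ a x)
    (hadd : ∀ i, m ≤ a (x + latticeStep ε i)) (hsub' : ∀ i, m ≤ a (x - latticeStep ε i)) :
    m * latticeLaplacian ε u x ≤ slopeExcess a u ε x p := by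
  rw [latticeLaplacian, Finset.mul_sum]
  refine Finset.sum_le_sum fun i _ => ?_
  have hle_add := hsub _ (hjet.mem_add i (hm.trans_le (hadd i)))
  have hle_sub := hsub _ (hjet.mem_sub i (hm.trans_le (hsub' i)))
  rw [add_sub_cancel_left] at hle_add
  rw [sub_sub_cancel_left, inner_neg_right] at hle_sub
  have hadd_mul := mul_le_mul_of_nonneg_right (le_conductance hmx (hadd i))
    (sub_nonneg.2 hle_add)
  have hsub_mul := mul_le_mul_of_nonneg_right (le_conductance hmx (hsub' i))
    (sub_nonneg.2 hle_sub)
  rw [secondDiff]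
  linarith

theorem IsLatticeJet.slopeExcess_nonneg (hjet : IsLatticeJet V a ε ω x D)
    (hsub : IsSubgradientOn V u x p) : 0 ≤ slopeExcess a u ε x p := by
  have hterm : ∀ y, (0 < a y → y ∈ V) → 0 ≤ conductance a x y * (u y - u x - ⟪p, y - x⟫) := by
    intro y hy
    rcases le_or_gt (a y) 0 with h0 | hpos
    · rw [conductance_eq_zero h0, zero_mul]
    · exact mul_nonneg (conductance_nonneg _ _ _) (by linarith [hsub y (hy hpos)])
  refine Finset.sum_nonneg fun i _ => add_nonneg ?_ ?_
  · simpa using hterm _ (hjet.mem_add i)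
  · simpa [inner_neg_right] using hterm _ (hjet.mem_sub i)

theorem IsLatticeJet.sub_le_add (hjet : IsLatticeJet V a ε ω x D) (hε : 0 ≤ ε) (i : Fin n) :
    a x - ε * (‖D‖ + ω) ≤ a (x + latticeStep ε i) ∧
      a x - ε * (‖D‖ + ω) ≤ a (x - latticeStep ε i) := by
  have hDi : |ε * D i| ≤ ε * ‖D‖ := by
    rw [abs_mul, abs_of_nonneg hε]
    exact mul_le_mul_of_nonneg_left (PiLp.norm_apply_le D i) hε
  have hadd := (abs_le.1 (hjet.abs_add_le i)).1
  have hsub := (abs_le.1 (hjet.abs_sub_le i)).1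
  rw [abs_le] at hDi
  constructor <;> linarith [hDi.1, hDi.2]

theorem IsLatticeJet.nonneg_of_slopeExcess_le (hjet : IsLatticeJet V a ε ω x D) (hε : 0 < ε)
    (hp : ‖p‖ ≤ 1) (hsub : IsSubgradientOn V u x p) {s : Euc n} (hs : ‖s‖ ≤ ε * ‖D‖) {b : ℝ}
    (hexcess : slopeExcess a u ε x p ≤ ε ^ 2 * b - ε * ⟪p, s⟫) : 0 ≤ b + ‖D‖ := by
  have hinner : -(ε * ‖D‖) ≤ ⟪p, s⟫ := by
    have hps := abs_real_inner_le_norm p s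
    have hmul := mul_le_mul hp hs (norm_nonneg s) zero_le_one
    linarith [(abs_le.1 hps).1]
  have hnonneg := hjet.slopeExcess_nonneg hsub
  have hmul : 0 ≤ ε ^ 2 * (b + ‖D‖) := by
    linarith [mul_le_mul_of_nonneg_left hinner hε.le]
  exact nonneg_of_mul_nonneg_right hmul (by positivity)

theorem IsLatticeJet.latticeLaplacian_le (hjet : IsLatticeJet V a ε ω x D) (hε : 0 < ε)
    (hω : ω ≤ 1) {M : ℝ} (hD : ‖D‖ ≤ M) (hp : ‖p‖ ≤ 1) (hsub : IsSubgradientOn V u x p)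
    {s : Euc n} (hs : ‖s‖ ≤ ε * ‖D‖) (hs_eq : (∀ i, |ε * D i| ≤ a x) → s = ε • D) {b m c σ γ : ℝ}
    (hexcess : slopeExcess a u ε x p ≤ ε ^ 2 * (b + (2 * n + 1) * ω) - ε * ⟪p, s⟫)
    (hm : m ≤ max (-(b + ‖D‖)) (a x)) (hωm : (2 * n + 1) * ω < m) (hεm : ε * (M + 1) < m)
    (hωσ : (2 * n + 1) * ω ≤ m * σ / 2) (hεσ : ε * (M + 1) * (|c| + σ) ≤ m * σ / 2) (hσ : 0 ≤ σ)
    (hγ : 0 ≤ γ) (hb : b - ⟪p, D⟫ ≤ a x * (c - γ)) :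
    (∀ i, x + latticeStep ε i ∈ V ∧ x - latticeStep ε i ∈ V) ∧
      latticeLaplacian ε u x ≤ ε ^ 2 * (c + σ - γ) := by
  have hma : m ≤ a x := by
    have := hjet.nonneg_of_slopeExcess_le hε hp hsub hs hexcess
    exact (le_max_iff.1 hm).resolve_left fun h => by linarith
  have hM : 0 ≤ M := (norm_nonneg D).trans hD
  set m' := a x - ε * (M + 1)
  have hm' : 0 < m' := by linarith
  have hneighbour : ∀ i, m' ≤ a (x + latticeStep ε i) ∧ m' ≤ a (x - latticeStep ε i) := by
    have hle : ε * (‖D‖ + ω) ≤ ε * (M + 1) := by gcongr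
    exact fun i => ⟨by linarith [(hjet.sub_le_add hε.le i).1],
      by linarith [(hjet.sub_le_add hε.le i).2]⟩
  refine ⟨fun i => ⟨hjet.mem_add i (hm'.trans_le (hneighbour i).1),
    hjet.mem_sub i (hm'.trans_le (hneighbour i).2)⟩, le_of_mul_le_mul_left ?_ hm'⟩
  have hs_drift : s = ε • D := hs_eq fun i => by
    have hDi : |D i| ≤ M + 1 := ((PiLp.norm_apply_le D i).trans hD).trans (by linarith)
    rw [abs_mul, abs_of_pos hε]
    linarith [mul_le_mul_of_nonneg_left hDi hε.le]
  have hloss : ε * (M + 1) * (c + σ - γ) ≤ m * σ / 2 := by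
    refine le_trans ?_ hεσ
    gcongr
    linarith [le_abs_self c]
  have hgain : m * σ ≤ a x * σ := by gcongr
  calc m' * latticeLaplacian ε u x ≤ slopeExcess a u ε x p :=
        hjet.mul_latticeLaplacian_le_slopeExcess hsub hm' (sub_le_self _ (by positivity))
          (fun i => (hneighbour i).1) fun i => (hneighbour i).2
    _ ≤ ε ^ 2 * (b - ⟪p, D⟫ + (2 * n + 1) * ω) := by
        rw [hs_drift, inner_smul_right] at hexcess
        linarith
    _ ≤ ε ^ 2 * (m' * (c + σ - γ)) := by
        gcongr
        simp only [m', sub_mul]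
        linarith
    _ = m' * (ε ^ 2 * (c + σ - γ)) := by ring

end Contact

/-! ### Riemann sums over lattices -/

section ScaledLattice

variable {n N : ℕ}

/-- The lattice `N⁻¹ ℤⁿ`. -/
def scaledLattice (n N : ℕ) : AddSubgroup (Euc n) where
  carrier := {x | ∀ i, ∃ z : ℤ, x i = z / N}
  zero_mem' _ := ⟨0, by simp⟩
  add_mem' {x y} hx hy i := by
    obtain ⟨z, hz⟩ := hx i
    obtain ⟨z', hz'⟩ := hy i
    exact ⟨z + z', by simp [hz, hz', add_div]⟩
  neg_mem' {x} hx i := by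
    obtain ⟨z, hz⟩ := hx i
    exact ⟨-z, by simp [hz, neg_div]⟩

theorem mem_scaledLattice {x : Euc n} : x ∈ scaledLattice n N ↔ ∀ i, ∃ z : ℤ, x i = z / N :=
  Iff.rfl

theorem latticeStep_mem_scaledLattice (i : Fin n) : latticeStep (1 / N) i ∈ scaledLattice n N :=
  mem_scaledLattice.2 fun j => ⟨if j = i then 1 else 0, by
    split_ifs with h <;> simp [latticeStep, h]⟩

open scoped Pointwise in
theorem toLp_preimage_scaledLattice (hN : 0 < N) :
    WithLp.toLp 2 ⁻¹' (scaledLattice n N : Set (Euc n)) =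
      (N : ℝ)⁻¹ • (Submodule.span ℤ (range (Pi.basisFun ℝ (Fin n))) : Set (Fin n → ℝ)) := by
  have hN0 : (N : ℝ) ≠ 0 := Nat.cast_ne_zero.2 hN.ne'
  ext y
  rw [Set.mem_inv_smul_set_iff₀ hN0, SetLike.mem_coe, Module.Basis.mem_span_iff_repr_mem]
  simp [mem_scaledLattice, eq_div_iff hN0, mul_comm, eq_comm]

theorem finite_inter_scaledLattice (hN : 0 < N) {E : Set (Euc n)} (hE : Bornology.IsBounded E) :
    (E ∩ scaledLattice n N).Finite := by
  have hN0 : (N : ℝ) ≠ 0 := Nat.cast_ne_zero.2 hN.ne'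
  let basis := (EuclideanSpace.basisFun (Fin n) ℝ).toBasis
  have hfinite := (ZSpan.setFinite_inter basis (hE.smul₀ (N : ℝ))).preimage
    (smul_right_injective (Euc n) hN0).injOn
  refine hfinite.subset fun x hx => ⟨smul_mem_smul_set hx.1, ?_⟩
  rw [SetLike.mem_coe, Module.Basis.mem_span_iff_repr_mem]
  intro i
  obtain ⟨z, hz⟩ := mem_scaledLattice.1 hx.2 i
  exact ⟨z, by simp [basis, hz, mul_div_cancel₀ _ hN0]⟩

theorem tendsto_tsum_scaledLattice {E : Set (Euc n)} (hE : Bornology.IsBounded E)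
    (hmeas : MeasurableSet E) (hfrontier : volume (frontier E) = 0) {b : Euc n → ℝ}
    (hb : Continuous b) :
    Filter.Tendsto (fun N : ℕ => (∑' x : ↑(E ∩ scaledLattice n N), b x) / (N : ℝ) ^ n)
      Filter.atTop (𝓝 (∫ x in E, b x)) := by
  let T : (Fin n → ℝ) ≃ₜ Euc n := (PiLp.homeomorph 2 fun _ : Fin n => ℝ).symm
  have hT : MeasurePreserving T volume volume := PiLp.volume_preserving_toLp (Fin n)
  have hbounded : Bornology.IsBounded (T ⁻¹' E) := by
    rw [← T.image_symm]
    exact (PiLp.lipschitzWith_ofLp 2 fun _ : Fin n => ℝ).isBounded_image hE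
  have hnull : volume (frontier (T ⁻¹' E)) = 0 := by
    rw [← T.preimage_frontier, hT.measure_preimage_emb T.measurableEmbedding, hfrontier]
  have hlim := tendsto_tsum_div_pow_atTop_integral (T ⁻¹' E) (b ∘ T) (hb.comp T.continuous)
    hbounded (T.continuous.measurable hmeas) hnull
  rw [Fintype.card_fin] at hlim
  rw [← hT.setIntegral_preimage_emb T.measurableEmbedding]
  refine hlim.congr' ?_
  filter_upwards [Filter.eventually_gt_atTop 0] with N hN
  rw [← toLp_preimage_scaledLattice hN]
  congr 1
  exact (T.toEquiv.subtypeEquiv fun _ => Iff.rfl).tsum_eq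
    fun x : ↑(E ∩ scaledLattice n N) => b x

end ScaledLattice

theorem eventually_exists_finset_scaledLattice {n : ℕ} {E : Set (Euc n)}
    (hE : Bornology.IsBounded E) (hmeas : MeasurableSet E) (hfrontier : volume (frontier E) = 0)
    {b : Euc n → ℝ} (hb : Continuous b) (hpos : 0 < ∫ x in E, b x) :
    ∀ᶠ N : ℕ in Filter.atTop, ∃ V : Finset (Euc n), (V : Set (Euc n)) = E ∩ scaledLattice n N ∧
      0 < ∑ x ∈ V, b x := by
  filter_upwards [(tendsto_tsum_scaledLattice hE hmeas hfrontier hb).eventually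
    (lt_mem_nhds hpos), Filter.eventually_gt_atTop 0] with N hN hN0
  have hfinite := finite_inter_scaledLattice hN0 hE
  refine ⟨hfinite.toFinset, hfinite.coe_toFinset, ?_⟩
  have hsum : 0 < ∑' x : ↑(E ∩ scaledLattice n N), b x :=
    (div_pos_iff_of_pos_right (by positivity)).1 hN
  rwa [← hfinite.coe_toFinset, Finset.tsum_subtype'] at hsum

/-! ### The Neumann problem on a fine lattice -/

theorem exists_forall_norm_add_sub_sub_fderiv_le {F G : Type*} [NormedAddCommGroup F]
    [NormedSpace ℝ F] [NormedAddCommGroup G] [NormedSpace ℝ G] {f : F → G} (hf : ContDiff ℝ 1 f)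
    {K : Set F} (hK : IsCompact K) {ω : ℝ} (hω : 0 < ω) :
    ∃ δ > 0, ∀ x ∈ K, ∀ h, ‖h‖ < δ → ‖f (x + h) - f x - fderiv ℝ f x h‖ ≤ ω * ‖h‖ := by
  obtain ⟨δ, hδ, huniform⟩ := Metric.mem_uniformity_dist.1
    (hK.uniformContinuousAt_of_continuousAt (fderiv ℝ f)
      (fun x _ => (hf.continuous_fderiv one_ne_zero).continuousAt) (dist_mem_uniformity hω))
  refine ⟨δ, hδ, fun x hx h hh => ?_⟩
  have hbound : ∀ y ∈ closedBall x ‖h‖, ‖fderiv ℝ f y - fderiv ℝ f x‖ ≤ ω := fun y hy => by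
    rw [← dist_eq_norm, dist_comm]
    exact (huniform (by rw [dist_comm]; exact (mem_closedBall.1 hy).trans_lt hh) hx).le
  simpa using (convex_closedBall x ‖h‖).norm_image_sub_le_of_norm_hasFDerivWithin_le'
    (fun y _ => (hf.differentiable one_ne_zero y).hasFDerivAt.hasFDerivWithinAt) hbound
    (mem_closedBall_self (norm_nonneg h)) (y := x + h) (by simp)

theorem eventually_isLatticeJet {n : ℕ} {a : Euc n → ℝ} (ha : ContDiff ℝ 1 a) {ω : ℝ}
    (hω : 0 < ω) (hE : Bornology.IsBounded {x | 0 < a x}) :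
    ∀ᶠ N : ℕ in Filter.atTop, ∀ V : Finset (Euc n),
      (V : Set (Euc n)) = {x | 0 < a x} ∩ scaledLattice n N →
        ∀ x ∈ V, IsLatticeJet V a (1 / N) ω x (gradient a x) := by
  obtain ⟨δ, hδ, htaylor⟩ := exists_forall_norm_add_sub_sub_fderiv_le ha hE.isCompact_closure hω
  filter_upwards [tendsto_one_div_atTop_nhds_zero_nat.eventually (gt_mem_nhds hδ)] with N hN
  intro V hV x hx
  have hmem : ∀ y, y ∈ V ↔ 0 < a y ∧ y ∈ scaledLattice n N := fun y => by
    rw [← Finset.mem_coe, hV]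
    rfl
  have hstep : ∀ i : Fin n, ‖latticeStep (1 / N : ℝ) i‖ = 1 / N := fun i => by
    rw [norm_latticeStep, abs_of_nonneg (by positivity)]
  have hx0 := (hmem x).1 hx
  have hjet := htaylor x (subset_closure hx0.1)
  refine ⟨fun i hi => (hmem _).2 ⟨hi, add_mem hx0.2 (latticeStep_mem_scaledLattice i)⟩,
    fun i hi => (hmem _).2 ⟨hi, sub_mem hx0.2 (latticeStep_mem_scaledLattice i)⟩,
    fun i => ?_, fun i => ?_⟩
  · have h := hjet (latticeStep (1 / N) i) (by rwa [hstep])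
    rwa [hstep, ← inner_gradient_left, inner_latticeStep, mul_comm ω, Real.norm_eq_abs] at h
  · have h := hjet (-latticeStep (1 / N) i) (by rwa [norm_neg, hstep])
    rwa [norm_neg, hstep, ← inner_gradient_left, inner_neg_right, inner_latticeStep,
      mul_comm ω, Real.norm_eq_abs, sub_neg_eq_add, ← sub_eq_add_neg] at h

open scoped Classical in
theorem exists_discrete_neumann {n : ℕ} (V : Finset (Euc n)) (a : Euc n → ℝ) {b : Euc n → ℝ}
    (hb : 0 ≤ ∑ x ∈ V, b x) {ε ω : ℝ} (hε : 0 < ε) (hω : 0 < ω) {R : ℝ} (hR : 0 ≤ R) :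
    ∃ κ ≥ 0, κ * (V.card * R) ≤ ε ^ 2 * ω ∧ ∃ u : Euc n → ℝ, ∀ x ∈ V,
      ∑ y ∈ V, edgeWeight a (latticeStep ε) κ x y * (u y - u x) ≤ ε ^ 2 * b x := by
  have hden : 0 < V.card * R + 1 := by positivity
  have hκ : 0 < ε ^ 2 * ω / (V.card * R + 1) := by positivity
  refine ⟨_, hκ.le, ?_, exists_sum_mul_sub_le (edgeWeight_comm a (latticeStep ε) _)
    (edgeWeight_pos a (latticeStep ε) hκ) (by rw [← Finset.mul_sum]; positivity)⟩
  rw [div_mul_eq_mul_div, div_le_iff₀ hden]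
  exact mul_le_mul_of_nonneg_left (le_add_of_nonneg_right zero_le_one) (by positivity)

theorem continuous_gradient {F : Type*} [NormedAddCommGroup F] [InnerProductSpace ℝ F]
    [CompleteSpace F] {f : F → ℝ} (hf : ContDiff ℝ 1 f) : Continuous (gradient f) :=
  (LinearIsometryEquiv.continuous _).comp (hf.continuous_fderiv one_ne_zero)

theorem exists_pos_le_max_of_frontier {n : ℕ} {a β : Euc n → ℝ} (ha : Continuous a)
    (hβ : Continuous β) (hE : Bornology.IsBounded {x | 0 < a x})
    (hfrontier : ∀ x ∈ frontier {x | 0 < a x}, β x < 0) :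
    ∃ m > 0, ∀ x, 0 < a x → m ≤ max (-β x) (a x) := by
  obtain ⟨m, hm, hle⟩ := hE.isCompact_closure.exists_forall_le' (a := 0)
    (f := fun x => max (-β x) (a x)) (by fun_prop) fun x hx => by
      by_cases hax : 0 < a x
      · exact lt_max_of_lt_right hax
      · refine lt_max_of_lt_left (neg_pos.2 (hfrontier x ?_))
        rw [(isOpen_lt continuous_const ha).frontier_eq]
        exact ⟨hx, hax⟩
  exact ⟨m, hm, fun x hx => hle x (subset_closure hx)⟩

theorem eventually_exists_contact_bound {n : ℕ} {a b : Euc n → ℝ} (ha : ContDiff ℝ 1 a)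
    (hb : Continuous b) (hE : Bornology.IsBounded {x | 0 < a x})
    (hnull : volume (frontier {x | 0 < a x}) = 0) (hpos : 0 < ∫ x in {x | 0 < a x}, b x)
    (hfrontier : ∀ x ∈ frontier {x | 0 < a x}, b x + ‖gradient a x‖ < 0)
    {K : Set (Euc n)} (hK : ∀ p ∈ K, ‖p‖ ≤ 1) {c : ℝ} {γ : Euc n → Euc n → ℝ}
    (hγ0 : ∀ x, 0 < a x → ∀ p ∈ K, 0 ≤ γ x p)
    (hγ : ∀ x, 0 < a x → ∀ p ∈ K, b x - ⟪p, gradient a x⟫ ≤ a x * (c - γ x p))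
    {σ : ℝ} (hσ : 0 < σ) :
    ∀ᶠ N : ℕ in Filter.atTop, ∃ (V : Finset (Euc n)) (u : Euc n → ℝ), V.Nonempty ∧
      (∀ x ∈ V, 0 < a x) ∧ ∀ x ∈ V, ∀ p ∈ K, IsSubgradientOn V u x p →
        (∀ i, x + latticeStep (1 / N) i ∈ V ∧ x - latticeStep (1 / N) i ∈ V) ∧
        latticeLaplacian (1 / N) u x ≤ (1 / N) ^ 2 * (c + σ - γ x p) := by
  obtain ⟨m, hm, hm_le⟩ := exists_pos_le_max_of_frontier ha.continuous
    (hb.add (continuous_gradient ha).norm) hE hfrontier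
  obtain ⟨M, hM⟩ := hE.isCompact_closure.exists_bound_of_continuousOn
    (continuous_gradient ha).continuousOn
  obtain ⟨ω, hω, hω_lt⟩ := exists_pos_mul_lt
    (show 0 < min 1 (min m (m * σ / 2)) by positivity) (2 * n + 1)
  obtain ⟨hω1, hωm, hωσ⟩ := by simpa only [lt_min_iff] using hω_lt
  have hω_le : ω ≤ 1 := (le_mul_of_one_le_left hω.le (by simp)).trans hω1.le
  have hmesh : Filter.Tendsto (fun N : ℕ => (1 / N : ℝ)) Filter.atTop (𝓝 0) :=
    tendsto_one_div_atTop_nhds_zero_nat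
  have hmesh_M : Filter.Tendsto (fun N : ℕ => (1 / N : ℝ) * (M + 1)) Filter.atTop (𝓝 0) := by
    simpa using hmesh.mul_const (M + 1)
  have hmesh_σ : Filter.Tendsto (fun N : ℕ => (1 / N : ℝ) * (M + 1) * (|c| + σ)) Filter.atTop
      (𝓝 0) := by simpa using hmesh_M.mul_const (|c| + σ)
  filter_upwards [eventually_exists_finset_scaledLattice hE
      (isOpen_lt continuous_const ha.continuous).measurableSet hnull hb hpos,
    eventually_isLatticeJet ha hω hE, hmesh_M.eventually_lt_const hm,
    hmesh_σ.eventually_le_const (show 0 < m * σ / 2 by positivity),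
    Filter.eventually_gt_atTop 0] with N ⟨V, hV, hVsum⟩ hjet hεm hεσ hN
  have hVa : ∀ x ∈ V, 0 < a x := fun x hx => (hV.subset hx).1
  have hε : (0 : ℝ) < 1 / N := by positivity
  have hdiam : ∀ x ∈ V, ∀ y ∈ V, ‖y - x‖ ≤ diam {x | 0 < a x} := fun x hx y hy => by
    simpa only [dist_eq_norm] using dist_le_diam_of_mem hE (hVa y hy) (hVa x hx)
  obtain ⟨κ, hκ, hκR, u, hu⟩ := exists_discrete_neumann V a hVsum.le hε hω
    (diam_nonneg (s := {x | 0 < a x}))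
  refine ⟨V, u, Finset.nonempty_of_sum_ne_zero hVsum.ne', hVa, fun x hx p hp hsub => ?_⟩
  have hxjet := hjet V hV x hx
  obtain ⟨s, hs, hs_eq, hexcess⟩ := hxjet.exists_slopeExcess_le (hVa x hx).le hε.le hκ
    (hdiam x hx) hκR (hu x hx) (hK p hp) hsub
  exact hxjet.latticeLaplacian_le hε hω_le (hM x (subset_closure (hVa x hx))) (hK p hp) hsub hs
    hs_eq (by linarith) (hm_le x (hVa x hx)) hωm hεm hωσ.le hεσ hσ.le (hγ0 x (hVa x hx) p hp)
    (hγ x (hVa x hx) p hp)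

/-! ### Convex functions with bounded second differences -/

section SecondDiff

variable {F : Type*} [NormedAddCommGroup F] {φ : F → ℝ}

theorem secondDiff_zero (φ : F → ℝ) (x : F) : secondDiff φ x 0 = 0 := by
  rw [secondDiff, add_zero, sub_zero]
  ring

theorem secondDiff_neg (φ : F → ℝ) (x h : F) : secondDiff φ x (-h) = secondDiff φ x h := by
  rw [secondDiff, secondDiff, sub_neg_eq_add, ← sub_eq_add_neg, add_comm (φ (x - h))]

theorem secondDiff_le_two_mul_norm (hφ : ∀ x y, |φ x - φ y| ≤ ‖x - y‖) (x h : F) :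
    secondDiff φ x h ≤ 2 * ‖h‖ := by
  have hadd := (abs_le.1 (hφ (x + h) x)).2
  have hsub := (abs_le.1 (hφ (x - h) x)).2
  rw [add_sub_cancel_left] at hadd
  rw [sub_sub_cancel_left, norm_neg] at hsub
  rw [secondDiff]
  linarith

variable [NormedSpace ℝ F]

theorem secondDiff_two_pow_smul_le {h : F} {C : ℝ} (hC : ∀ x, secondDiff φ x h ≤ C) (m : ℕ)
    (x : F) :
    secondDiff φ x ((2 : ℝ) ^ m • h) ≤ 4 ^ m * C := by
  induction m generalizing x with
  | zero => simpa using hC x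
  | succ m ih =>
    have hdouble : (2 : ℝ) ^ (m + 1) • h = (2 : ℝ) ^ m • h + (2 : ℝ) ^ m • h := by
      rw [← add_smul, pow_succ, mul_two]
    have hadd := ih (x + (2 : ℝ) ^ m • h)
    have hsub := ih (x - (2 : ℝ) ^ m • h)
    have hmid := ih x
    simp only [secondDiff, hdouble, add_sub_cancel_right, sub_add_cancel, add_assoc, sub_sub]
      at hadd hsub hmid ⊢
    rw [pow_succ]
    linarith

theorem convexOn_secondDiff (hφ : ConvexOn ℝ univ φ) (x : F) :
    ConvexOn ℝ univ (secondDiff φ x) := by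
  refine ⟨convex_univ, fun h _ k _ a b ha hb hab => ?_⟩
  have hadd := hφ.2 (mem_univ (x + h)) (mem_univ (x + k)) ha hb hab
  have hsub := hφ.2 (mem_univ (x - h)) (mem_univ (x - k)) ha hb hab
  have hx : a • x + b • x = x := by rw [← add_smul, hab, one_smul]
  have eadd : a • (x + h) + b • (x + k) = x + (a • h + b • k) := by
    rw [smul_add, smul_add, add_add_add_comm, hx]
  have esub : a • (x - h) + b • (x - k) = x - (a • h + b • k) := by
    rw [smul_sub, smul_sub, sub_add_sub_comm, hx]
  rw [eadd] at hadd
  rw [esub] at hsub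
  simp only [secondDiff, smul_eq_mul] at hadd hsub ⊢
  linear_combination hadd + hsub + 2 * φ x * hab

theorem secondDiff_smul_le (hφ : ConvexOn ℝ univ φ) {s : ℝ} (hs : s ∈ Icc (0 : ℝ) 1) (x h : F) :
    secondDiff φ x (s • h) ≤ s * secondDiff φ x h := by
  simpa [secondDiff_zero] using (convexOn_secondDiff hφ x).2 (mem_univ h) (mem_univ 0) hs.1
    (sub_nonneg.2 hs.2) (add_sub_cancel s 1)

theorem secondDiff_smul_le_of_dyadic (hφ : ConvexOn ℝ univ φ)
    (hlip : ∀ x y, |φ x - φ y| ≤ ‖x - y‖) {e x : F} (he : ‖e‖ = 1) {C : ℝ} (hC : 0 ≤ C)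
    (hdyadic : ∀ l : ℕ, secondDiff φ x ((1 / 2 : ℝ) ^ l • e) ≤ ((1 / 2 : ℝ) ^ l) ^ 2 * C) (t : ℝ) :
    secondDiff φ x (t • e) ≤ (2 * C + 2) * t ^ 2 := by
  wlog ht : 0 < t generalizing t
  · rcases (not_lt.1 ht).eq_or_lt with rfl | ht
    · simp [secondDiff_zero]
    · simpa [secondDiff_neg] using this (-t) (neg_pos.2 ht)
  rcases le_or_gt t 1 with ht1 | ht1
  · obtain ⟨l, hlt, hle⟩ := exists_nat_pow_near_of_lt_one ht ht1 (y := (1 / 2 : ℝ)) (by norm_num)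
      (by norm_num)
    set r : ℝ := (1 / 2) ^ l
    have hr : 0 < r := by positivity
    have hr2 : r ≤ 2 * t := by
      rw [pow_succ] at hlt
      linarith
    calc secondDiff φ x (t • e) = secondDiff φ x ((t / r) • r • e) := by
          rw [smul_smul, div_mul_cancel₀ _ hr.ne']
      _ ≤ t / r * (r ^ 2 * C) :=
          (secondDiff_smul_le hφ ⟨by positivity, (div_le_one hr).2 hle⟩ _ _).trans
            (mul_le_mul_of_nonneg_left (hdyadic l) (by positivity))
      _ = t * r * C := by field_simp
      _ ≤ t * (2 * t) * C := by gcongr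
      _ ≤ (2 * C + 2) * t ^ 2 := by nlinarith
  · calc secondDiff φ x (t • e) ≤ 2 * t := by
          simpa [norm_smul, he, abs_of_pos ht] using secondDiff_le_two_mul_norm hlip x (t • e)
      _ ≤ (2 * C + 2) * t ^ 2 := by nlinarith [mul_nonneg hC (sq_nonneg t)]

end SecondDiff

section BoundedSecondDiff

variable {F : Type*} [NormedAddCommGroup F] [InnerProductSpace ℝ F] {φ : F → ℝ}

theorem convexOn_of_forall_exists_isSubgradientOn
    (hsub : ∀ x, ∃ p, IsSubgradientOn univ φ x p) : ConvexOn ℝ univ φ := by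
  refine ⟨convex_univ, fun x _ y _ a b ha hb hab => ?_⟩
  obtain ⟨p, hp⟩ := hsub (a • x + b • y)
  have hx := mul_le_mul_of_nonneg_left (hp x (mem_univ x)) ha
  have hy := mul_le_mul_of_nonneg_left (hp y (mem_univ y)) hb
  have hcancel : a * ⟪p, x - (a • x + b • y)⟫ + b * ⟪p, y - (a • x + b • y)⟫ = 0 := by
    obtain rfl : b = 1 - a := by linarith
    simp only [inner_sub_right, inner_add_right, inner_smul_right]
    ring
  simp only [smul_eq_mul]
  linear_combination hx + hy - hcancel - φ (a • x + b • y) * hab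

theorem abs_sub_le_of_forall_exists_isSubgradientOn
    (hsub : ∀ x, ∃ p, ‖p‖ ≤ 1 ∧ IsSubgradientOn univ φ x p) (x y : F) :
    |φ x - φ y| ≤ ‖x - y‖ := by
  have hle (x y : F) : φ x - φ y ≤ ‖x - y‖ := by
    obtain ⟨p, hp1, hp⟩ := hsub x
    have hinner : -⟪p, y - x⟫ ≤ ‖x - y‖ := by
      rw [← inner_neg_right, neg_sub]
      exact (real_inner_le_norm _ _).trans (mul_le_of_le_one_left (norm_nonneg _) hp1)
    linarith [hp y (mem_univ y)]
  exact abs_sub_le_iff.2 ⟨hle x y, norm_sub_rev x y ▸ hle y x⟩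

theorem secondDiff_le_card_mul {ι : Type*} [Fintype ι] (b : OrthonormalBasis ι ℝ F)
    (hφ : ConvexOn ℝ univ φ) {C : ℝ} {x : F}
    (hC : ∀ i (t : ℝ), secondDiff φ x (t • b i) ≤ C * t ^ 2) (h : F) :
    secondDiff φ x h ≤ Fintype.card ι * C * ‖h‖ ^ 2 := by
  set d : ℝ := (Fintype.card ι : ℝ)
  rcases isEmpty_or_nonempty ι with hι | hι
  · have h0 : h = 0 := by rw [← b.sum_repr' h, Finset.univ_eq_empty, Finset.sum_empty]
    simp [h0, secondDiff_zero]
  have hd : 0 < d := Nat.cast_pos.2 Fintype.card_pos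
  have hsum : ∑ i, d⁻¹ • ((d * ⟪b i, h⟫) • b i) = h := by
    simp only [smul_smul, inv_mul_cancel_left₀ hd.ne']
    exact b.sum_repr' h
  calc secondDiff φ x h = secondDiff φ x (∑ i, d⁻¹ • ((d * ⟪b i, h⟫) • b i)) := by rw [hsum]
    _ ≤ ∑ i, d⁻¹ * secondDiff φ x ((d * ⟪b i, h⟫) • b i) :=
        (convexOn_secondDiff hφ x).map_sum_le (fun _ _ => by positivity)
          (by simp [d, Finset.card_univ]) (fun _ _ => mem_univ _)
    _ ≤ ∑ i, d⁻¹ * (C * (d * ⟪b i, h⟫) ^ 2) :=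
        Finset.sum_le_sum fun i _ => mul_le_mul_of_nonneg_left (hC i _) (by positivity)
    _ = d * C * ∑ i, ‖⟪b i, h⟫‖ ^ 2 := by
        rw [Finset.mul_sum]
        refine Finset.sum_congr rfl fun i _ => ?_
        rw [Real.norm_eq_abs, sq_abs]
        field_simp
    _ = d * C * ‖h‖ ^ 2 := by rw [b.sum_sq_norm_inner_right]

theorem exists_secondDiff_le_of_dyadic {ι : Type*} [Fintype ι] (b : OrthonormalBasis ι ℝ F)
    (hφ : ConvexOn ℝ univ φ) (hlip : ∀ x y, |φ x - φ y| ≤ ‖x - y‖) {C : ℝ} (hC : 0 ≤ C)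
    (hdyadic : ∀ (l : ℕ) i x, secondDiff φ x ((1 / 2 : ℝ) ^ l • b i) ≤ ((1 / 2 : ℝ) ^ l) ^ 2 * C) :
    ∃ L : ℝ≥0, 0 < L ∧ ∀ x h, secondDiff φ x h ≤ L * ‖h‖ ^ 2 := by
  refine ⟨(Fintype.card ι * (2 * C + 2) : ℝ).toNNReal + 1, by positivity, fun x h => ?_⟩
  rw [NNReal.coe_add, Real.coe_toNNReal _ (by positivity), NNReal.coe_one]
  have hle := secondDiff_le_card_mul b hφ (fun i t =>
    secondDiff_smul_le_of_dyadic hφ hlip (b.norm_eq_one i) hC (fun l => hdyadic l i x) t) h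
  nlinarith [sq_nonneg ‖h‖]

variable {x p : F} {L : ℝ≥0}

theorem IsSubgradientOn.le_add_sq (hp : IsSubgradientOn univ φ x p)
    (hL : ∀ x h, secondDiff φ x h ≤ L * ‖h‖ ^ 2) (y : F) :
    φ y ≤ φ x + ⟪p, y - x⟫ + L * ‖y - x‖ ^ 2 := by
  have hsecond := hL x (y - x)
  have hreflect := hp (x - (y - x)) (mem_univ _)
  rw [sub_sub_cancel_left, inner_neg_right] at hreflect
  rw [secondDiff, add_sub_cancel] at hsecond
  linarith

theorem IsSubgradientOn.norm_sub_le {y q : F} (hp : IsSubgradientOn univ φ x p)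
    (hq : IsSubgradientOn univ φ y q) (hL0 : 0 < L)
    (hL : ∀ x h, secondDiff φ x h ≤ L * ‖h‖ ^ 2) : ‖p - q‖ ≤ 4 * L * ‖x - y‖ := by
  have hcompare (z : F) : ⟪q - p, z - y⟫ ≤ L * ‖z - x‖ ^ 2 := by
    have hupper := hp.le_add_sq hL z
    have hyx := hp y (mem_univ y)
    have hzy := hq z (mem_univ z)
    simp only [inner_sub_left, inner_sub_right] at hupper hyx hzy ⊢
    linarith
  set d := q - p
  set s : ℝ := (4 * L)⁻¹
  have hs : 0 < s := by positivity
  have htest : s * ‖d‖ ^ 2 ≤ L * (‖x - y‖ + s * ‖d‖) ^ 2 := by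
    calc s * ‖d‖ ^ 2 = ⟪d, y + s • d - y⟫ := by
          rw [add_sub_cancel_left, inner_smul_right, real_inner_self_eq_norm_sq]
      _ ≤ L * ‖y + s • d - x‖ ^ 2 := hcompare _
      _ ≤ L * (‖x - y‖ + s * ‖d‖) ^ 2 := by
          gcongr
          calc ‖y + s • d - x‖ = ‖(y - x) + s • d‖ := by rw [add_sub_right_comm]
            _ ≤ ‖x - y‖ + s * ‖d‖ := by
              simpa [norm_smul, abs_of_pos hs, norm_sub_rev x y] using norm_add_le (y - x) (s • d)
  have hsq : (‖d‖ / 2) ^ 2 ≤ (L * (‖x - y‖ + s * ‖d‖)) ^ 2 := by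
    have hLs : L * s = 1 / 4 := by simp only [s]; field_simp
    calc (‖d‖ / 2) ^ 2 = L * (s * ‖d‖ ^ 2) := by rw [← mul_assoc, hLs]; ring
      _ ≤ L * (L * (‖x - y‖ + s * ‖d‖) ^ 2) := by gcongr
      _ = _ := by ring
  have hle := (sq_le_sq₀ (by positivity) (by positivity)).1 hsq
  rw [mul_add, ← mul_assoc, show L * s = 1 / 4 by simp only [s]; field_simp] at hle
  rw [norm_sub_rev p q]
  linarith

variable [CompleteSpace F]

theorem IsSubgradientOn.hasGradientAt (hp : IsSubgradientOn univ φ x p)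
    (hL : ∀ x h, secondDiff φ x h ≤ L * ‖h‖ ^ 2) : HasGradientAt φ p x := by
  rw [hasGradientAt_iff_isLittleO_nhds_zero]
  have hbigO : (fun h : F => φ (x + h) - φ x - ⟪p, h⟫) =O[𝓝 0] fun h => ‖h‖ ^ 2 := by
    refine Asymptotics.IsBigO.of_bound L (Filter.Eventually.of_forall fun h => ?_)
    have hupper := hp.le_add_sq hL (x + h)
    have hlower := hp (x + h) (mem_univ _)
    rw [add_sub_cancel_left] at hupper hlower
    rw [Real.norm_eq_abs, norm_pow, norm_norm, abs_of_nonneg (by linarith)]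
    linarith
  exact hbigO.trans_isLittleO (Asymptotics.isLittleO_norm_pow_id one_lt_two)

theorem lipschitzWith_gradient_of_secondDiff_le (hsub : ∀ x, ∃ p, IsSubgradientOn univ φ x p)
    (hL0 : 0 < L) (hL : ∀ x h, secondDiff φ x h ≤ L * ‖h‖ ^ 2) :
    LipschitzWith (4 * L) (gradient φ) := by
  refine LipschitzWith.of_dist_le_mul fun x y => ?_
  obtain ⟨p, hp⟩ := hsub x
  obtain ⟨q, hq⟩ := hsub y
  rw [(hp.hasGradientAt hL).gradient, (hq.hasGradientAt hL).gradient, dist_eq_norm, dist_eq_norm]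
  exact hp.norm_sub_le hq hL0 hL

theorem lipschitzWith_fderiv_of_gradient (hdiff : Differentiable ℝ φ)
    (hgrad : LipschitzWith L (gradient φ)) : LipschitzWith L (fderiv ℝ φ) := by
  have heq : fderiv ℝ φ = InnerProductSpace.toDual ℝ F ∘ gradient φ :=
    funext fun x => (hdiff x).hasGradientAt.hasFDerivAt.fderiv
  rw [heq, ← one_mul L]
  exact (InnerProductSpace.toDual ℝ F).lipschitz.comp hgrad

end BoundedSecondDiff

theorem isLittleO_sub_taylor_two {E G : Type*} [NormedAddCommGroup E] [NormedSpace ℝ E]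
    [NormedAddCommGroup G] [NormedSpace ℝ G] {f : E → G} {x : E}
    (hf : ∀ᶠ y in 𝓝 x, DifferentiableAt ℝ f y) (hf2 : DifferentiableAt ℝ (fderiv ℝ f) x) :
    (fun h => f (x + h) - f x - fderiv ℝ f x h - (2⁻¹ : ℝ) • fderiv ℝ (fderiv ℝ f) x h h)
      =o[𝓝 0] fun h => ‖h‖ ^ 2 := by
  set A := fderiv ℝ (fderiv ℝ f) x
  have hA := hasFDerivAt_iff_isLittleO_nhds_zero.1 hf2.hasFDerivAt
  refine Asymptotics.isLittleO_iff.2 fun c hc => ?_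
  have hshift : Filter.Tendsto (fun h => x + h) (𝓝 0) (𝓝 x) := by
    simpa using (continuous_const_add x).tendsto 0
  obtain ⟨δ, hδ, hball⟩ :=
    Metric.eventually_nhds_iff_ball.1 ((hshift.eventually hf).and (hA.bound hc))
  filter_upwards [ball_mem_nhds (0 : E) hδ] with h hh
  have hmem (t : ℝ) (ht : t ∈ Icc (0 : ℝ) 1) : t • h ∈ ball (0 : E) δ :=
    (convex_ball (0 : E) δ).smul_mem_of_zero_mem (mem_ball_self hδ) hh ht
  have hderiv (t : ℝ) (ht : t ∈ Icc (0 : ℝ) 1) :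
      HasDerivWithinAt (fun t : ℝ => f (x + t • h) - t • fderiv ℝ f x h - (t ^ 2 / 2) • A h h)
        (fderiv ℝ f (x + t • h) h - fderiv ℝ f x h - t • A h h) (Icc 0 1) t := by
    have hline : HasDerivAt (fun t : ℝ => x + t • h) h t := by
      simpa using ((hasDerivAt_id t).smul_const h).const_add x
    have hsq : HasDerivAt (fun t : ℝ => t ^ 2 / 2) t t := by
      simpa using (hasDerivAt_pow 2 t).div_const 2
    have hid : HasDerivAt (fun t : ℝ => t • fderiv ℝ f x h) (fderiv ℝ f x h) t := by
      simpa using (hasDerivAt_id t).smul_const (fderiv ℝ f x h)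
    exact ((((hball _ (hmem t ht)).1.hasFDerivAt.comp_hasDerivAt t hline).sub hid).sub
      (hsq.smul_const (A h h))).hasDerivWithinAt
  have hbound (t : ℝ) (ht : t ∈ Ico (0 : ℝ) 1) :
      ‖fderiv ℝ f (x + t • h) h - fderiv ℝ f x h - t • A h h‖ ≤ c * ‖h‖ ^ 2 := by
    calc ‖fderiv ℝ f (x + t • h) h - fderiv ℝ f x h - t • A h h‖
        = ‖(fderiv ℝ f (x + t • h) - fderiv ℝ f x - A (t • h)) h‖ := by simp
      _ ≤ c * ‖t • h‖ * ‖h‖ := (ContinuousLinearMap.le_opNorm _ _).trans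
          (mul_le_mul_of_nonneg_right (hball _ (hmem t ⟨ht.1, ht.2.le⟩)).2 (norm_nonneg _))
      _ ≤ c * ‖h‖ * ‖h‖ := by
          gcongr
          rw [norm_smul, Real.norm_eq_abs, abs_of_nonneg ht.1]
          exact mul_le_of_le_one_left (norm_nonneg _) ht.2.le
      _ = c * ‖h‖ ^ 2 := by ring
  have hsegment := norm_image_sub_le_of_norm_deriv_le_segment_01' hderiv hbound
  rw [norm_pow, norm_norm]
  convert hsegment using 2
  simp only [one_smul, zero_smul, add_zero, sub_zero, one_pow]
  norm_num
  abel

theorem measure_image_eq_zero_of_lipschitzWith {F : Type*} [NormedAddCommGroup F]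
    [NormedSpace ℝ F] [FiniteDimensional ℝ F] [MeasurableSpace F] [BorelSpace F] (μ : Measure F)
    [μ.IsAddHaarMeasure] {K : ℝ≥0} {f : F → F} (hf : LipschitzWith K f) {s : Set F} (hs : μ s = 0) :
    μ (f '' s) = 0 := by
  set ν : Measure F := μH[(Module.finrank ℝ F : ℝ)]
  have hνs : ν s = 0 := Measure.absolutelyContinuous_isAddHaarMeasure ν μ hs
  have himage : ν (f '' s) = 0 := by
    simpa [ν, hνs] using hf.hausdorffMeasure_image_le (Nat.cast_nonneg (Module.finrank ℝ F)) s
  exact Measure.absolutelyContinuous_isAddHaarMeasure μ ν himage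

/-! ### Limits of approximate potentials -/

section Limit

variable {F ι : Type*} [NormedAddCommGroup F] {f : ι → F → ℝ} {φ : F → ℝ}

theorem tendsto_apply_of_abs_sub_le {U : Filter ι} (hlip : ∀ j x y, |f j x - f j y| ≤ ‖x - y‖)
    (hlim : ∀ x, Filter.Tendsto (f · x) U (𝓝 (φ x))) {x : ι → F} {x₀ : F}
    (hx : Filter.Tendsto x U (𝓝 x₀)) : Filter.Tendsto (fun j => f j (x j)) U (𝓝 (φ x₀)) := by
  have hdiff : Filter.Tendsto (fun j => f j (x j) - f j x₀) U (𝓝 0) :=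
    squeeze_zero_norm (fun j => hlip j _ _) (tendsto_iff_norm_sub_tendsto_zero.1 hx)
  simpa using hdiff.add (hlim x₀)

theorem secondDiff_le_of_isMinOn_sub {u P : F → ℝ} {K : Set F} {x h : F}
    (hmin : IsMinOn (u - P) K x) (hadd : x + h ∈ K) (hsub : x - h ∈ K) :
    secondDiff P x h ≤ secondDiff u x h := by
  have h1 : u x - P x ≤ u (x + h) - P (x + h) := hmin hadd
  have h2 : u x - P x ≤ u (x - h) - P (x - h) := hmin hsub
  rw [secondDiff, secondDiff]
  linarith

theorem tendsto_of_isMinOn_sub {U : Ultrafilter ι} (hlip : ∀ j x y, |f j x - f j y| ≤ ‖x - y‖)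
    (hlim : ∀ x, Filter.Tendsto (f · x) U (𝓝 (φ x))) {P : F → ℝ} (hP : Continuous P)
    {K : Set F} (hK : IsCompact K) {x₀ : F} (hx₀ : x₀ ∈ K) (hPx₀ : P x₀ = φ x₀)
    (hstrict : ∀ x ∈ K, x ≠ x₀ → P x < φ x) {x : ι → F} (hxK : ∀ j, x j ∈ K)
    (hmin : ∀ j, IsMinOn (f j - P) K (x j)) : Filter.Tendsto x U (𝓝 x₀) := by
  obtain ⟨y, hyK, hy⟩ := hK.ultrafilter_le_nhds (U.map x)
    (Filter.tendsto_principal.2 (Filter.Eventually.of_forall hxK))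
  have hle : φ y - P y ≤ φ x₀ - P x₀ :=
    le_of_tendsto_of_tendsto
      ((tendsto_apply_of_abs_sub_le hlip hlim hy).sub ((hP.tendsto y).comp hy))
      ((hlim x₀).sub_const (P x₀)) (Filter.Eventually.of_forall fun j => hmin j hx₀)
  obtain rfl : y = x₀ := by
    by_contra hne
    linarith [hstrict y hyK hne]
  exact hy

variable [InnerProductSpace ℝ F]

theorem isSubgradientOn_of_tendsto {U : Filter ι} [U.NeBot]
    (hlip : ∀ j x y, |f j x - f j y| ≤ ‖x - y‖) (hlim : ∀ x, Filter.Tendsto (f · x) U (𝓝 (φ x)))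
    {x p : ι → F} {x₀ p₀ : F} (hx : Filter.Tendsto x U (𝓝 x₀)) (hp : Filter.Tendsto p U (𝓝 p₀))
    (hsub : ∀ j, IsSubgradientOn univ (f j) (x j) (p j)) : IsSubgradientOn univ φ x₀ p₀ :=
  fun y _ => le_of_tendsto_of_tendsto
    ((tendsto_apply_of_abs_sub_le hlip hlim hx).add (hp.inner (hx.const_sub y))) (hlim y)
    (Filter.Eventually.of_forall fun j => hsub j y (mem_univ y))

theorem secondDiff_quadratic (a q : ℝ) (ℓ : F →L[ℝ] ℝ) (A : F →L[ℝ] F →L[ℝ] ℝ) (x₀ x h : F) :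
    secondDiff (fun y => a + ℓ (y - x₀) + 2⁻¹ * A (y - x₀) (y - x₀) - q * ‖y - x₀‖ ^ 2) x h =
      A h h - 2 * q * ‖h‖ ^ 2 := by
  have hadd : x + h - x₀ = (x - x₀) + h := add_sub_right_comm x h x₀
  have hsub : x - h - x₀ = (x - x₀) - h := sub_right_comm x h x₀
  simp only [secondDiff, hadd, hsub, map_add, map_sub, add_apply, sub_apply, norm_add_sq_real,
    norm_sub_sq_real]
  ring

-- `x j` minimises `f j` minus the Taylor polynomial of `φ` lowered by `q / 2 * ‖y - x₀‖ ^ 2`.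
theorem exists_tendsto_forall_le_secondDiff [ProperSpace F] {U : Ultrafilter ι}
    (hlip : ∀ j x y, |f j x - f j y| ≤ ‖x - y‖) (hlim : ∀ x, Filter.Tendsto (f · x) U (𝓝 (φ x)))
    {x₀ : F} (hφ : ∀ᶠ x in 𝓝 x₀, DifferentiableAt ℝ φ x)
    (hφ2 : DifferentiableAt ℝ (fderiv ℝ φ) x₀) {q : ℝ} (hq : 0 < q) :
    ∃ x : ι → F, Filter.Tendsto x U (𝓝 x₀) ∧ ∃ δ > 0, ∀ᶠ j in (U : Filter ι), ∀ h, ‖h‖ < δ →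
      fderiv ℝ (fderiv ℝ φ) x₀ h h - q * ‖h‖ ^ 2 ≤ secondDiff (f j) (x j) h := by
  obtain ⟨r, hr, htaylor⟩ := Metric.eventually_nhds_iff_ball.1
    (Asymptotics.isLittleO_iff.1 (isLittleO_sub_taylor_two hφ hφ2) (show 0 < q / 4 by positivity))
  set P : F → ℝ := fun y => φ x₀ + fderiv ℝ φ x₀ (y - x₀) +
    2⁻¹ * fderiv ℝ (fderiv ℝ φ) x₀ (y - x₀) (y - x₀) - q / 2 * ‖y - x₀‖ ^ 2 with hPdef
  have hP : Continuous P := by fun_prop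
  set K := closedBall x₀ (r / 2)
  have hx₀ : x₀ ∈ K := mem_closedBall_self (by positivity)
  have hstrict (x : F) (hxK : x ∈ K) (hx : x ≠ x₀) : P x < φ x := by
    have hnorm : 0 < ‖x - x₀‖ := norm_pos_iff.2 (sub_ne_zero.2 hx)
    have hmem : x - x₀ ∈ ball (0 : F) r := by
      rw [mem_ball_zero_iff, ← dist_eq_norm]
      exact (mem_closedBall.1 hxK).trans_lt (half_lt_self hr)
    have hbound := (abs_le.1 (htaylor _ hmem)).1
    rw [add_sub_cancel, norm_pow, norm_norm, smul_eq_mul] at hbound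
    have hpos : 0 < q * ‖x - x₀‖ ^ 2 := by positivity
    simp only [hPdef]
    linarith
  have hcont (j : ι) : Continuous (f j) :=
    (LipschitzWith.of_dist_le_mul (K := 1) fun x y => by
      simpa [Real.dist_eq, dist_eq_norm] using hlip j x y).continuous
  choose x hxK hmin using fun j => (isCompact_closedBall x₀ (r / 2)).exists_isMinOn ⟨x₀, hx₀⟩
    ((hcont j).sub hP).continuousOn
  have hx := tendsto_of_isMinOn_sub hlip hlim hP (isCompact_closedBall _ _) hx₀ (by simp [hPdef])
    hstrict hxK hmin
  refine ⟨x, hx, r / 4, by positivity, ?_⟩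
  filter_upwards [hx.eventually (ball_mem_nhds x₀ (show 0 < r / 4 by positivity))] with j hj h hh
  rw [dist_eq_norm] at hj
  have hmem (k : F) (hk : ‖k‖ < r / 4) : x j + k ∈ K := by
    rw [mem_closedBall, dist_eq_norm, add_sub_right_comm]
    linarith [norm_add_le (x j - x₀) k]
  have hle := secondDiff_le_of_isMinOn_sub (hmin j) (hmem h hh)
    (sub_eq_add_neg (x j) h ▸ hmem (-h) (by rwa [norm_neg]))
  rw [hPdef, secondDiff_quadratic] at hle
  linarith

theorem IsSubgradientOn.eq_gradient [CompleteSpace F] {x p : F}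
    (hp : IsSubgradientOn univ φ x p) (hφ : DifferentiableAt ℝ φ x) : gradient φ x = p := by
  have hmin : IsLocalMin (fun y => φ y - ⟪p, y⟫) x := Filter.Eventually.of_forall fun y => by
    have hy := hp y (mem_univ y)
    rw [inner_sub_right] at hy
    linarith
  have hzero := hmin.hasFDerivAt_eq_zero
    (hφ.hasGradientAt.hasFDerivAt.sub (InnerProductSpace.toDual ℝ F p).hasFDerivAt)
  exact (InnerProductSpace.toDual ℝ F).injective (sub_eq_zero.1 hzero)

theorem tendsto_gradient_of_isSubgradientOn [CompleteSpace F] {U : Ultrafilter ι}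
    (hlip : ∀ j x y, |f j x - f j y| ≤ ‖x - y‖) (hlim : ∀ x, Filter.Tendsto (f · x) U (𝓝 (φ x)))
    {x p : ι → F} {x₀ : F} (hx : Filter.Tendsto x U (𝓝 x₀)) {K : Set F} (hK : IsCompact K)
    (hpK : ∀ j, p j ∈ K) (hsub : ∀ j, IsSubgradientOn univ (f j) (x j) (p j))
    (hφ : DifferentiableAt ℝ φ x₀) :
    Filter.Tendsto p U (𝓝 (gradient φ x₀)) := by
  obtain ⟨p₀, -, hp₀⟩ := hK.ultrafilter_le_nhds (U.map p)
    (Filter.tendsto_principal.2 (Filter.Eventually.of_forall hpK))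
  rw [(isSubgradientOn_of_tendsto hlip hlim hx hp₀ hsub).eq_gradient hφ]
  exact hp₀

theorem exists_isSubgradientOn_of_tendsto {U : Ultrafilter ι}
    (hlip : ∀ j x y, |f j x - f j y| ≤ ‖x - y‖) (hlim : ∀ x, Filter.Tendsto (f · x) U (𝓝 (φ x)))
    {K K' : Set F} (hK : IsCompact K) (hK' : IsCompact K')
    (hsub : ∀ j, ∃ x ∈ K, ∃ p ∈ K', IsSubgradientOn univ (f j) x p) :
    ∃ x ∈ K, ∃ p ∈ K', IsSubgradientOn univ φ x p := by
  choose x hxK p hpK' hp using hsub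
  obtain ⟨x₀, hx₀K, hx₀⟩ := hK.ultrafilter_le_nhds (U.map x)
    (Filter.tendsto_principal.2 (Filter.Eventually.of_forall hxK))
  obtain ⟨p₀, hp₀K', hp₀⟩ := hK'.ultrafilter_le_nhds (U.map p)
    (Filter.tendsto_principal.2 (Filter.Eventually.of_forall hpK'))
  exact ⟨x₀, hx₀K, p₀, hp₀K', isSubgradientOn_of_tendsto hlip hlim hx₀ hp₀ hp⟩

end Limit

section Potential

open Filter

variable {n : ℕ} {S E : Set (Euc n)} {g φ : Euc n → ℝ} {α c : ℝ}

theorem exists_tendsto_mul_lapl_le {ι : Type*} {U : Ultrafilter ι} {f : ι → Euc n → ℝ}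
    (hlip : ∀ j x y, |f j x - f j y| ≤ ‖x - y‖) (hlim : ∀ x, Tendsto (f · x) U (𝓝 (φ x)))
    {ε : ι → ℝ} (hε : Tendsto ε U (𝓝 0)) {x₀ : Euc n} (hφ : ∀ᶠ x in 𝓝 x₀, DifferentiableAt ℝ φ x)
    (hφ2 : DifferentiableAt ℝ (fderiv ℝ φ) x₀) {q : ℝ} (hq : 0 < q) :
    ∃ x : ι → Euc n, Tendsto x U (𝓝 x₀) ∧ ∀ᶠ j in (U : Filter ι),
      ε j ^ 2 * (lapl φ x₀ - n * q) ≤ latticeLaplacian (ε j) (f j) (x j) := by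
  obtain ⟨x, hx, δ, hδ, hle⟩ := exists_tendsto_forall_le_secondDiff hlip hlim hφ hφ2 hq
  refine ⟨x, hx, ?_⟩
  have hsmall : ∀ᶠ j in (U : Filter ι), |ε j| < δ := by
    simpa using hε.abs.eventually_lt_const (by simpa using hδ)
  filter_upwards [hle, hsmall] with j hj hεj
  calc ε j ^ 2 * (lapl φ x₀ - n * q) = ∑ i, (fderiv ℝ (fderiv ℝ φ) x₀ (latticeStep (ε j) i)
        (latticeStep (ε j) i) - q * ‖latticeStep (ε j) i‖ ^ 2) := by
        simp only [norm_latticeStep, sq_abs, Finset.sum_sub_distrib, Finset.sum_const,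
          Finset.card_univ, Fintype.card_fin, nsmul_eq_mul, lapl]
        simp only [latticeStep, map_smul, smul_apply, smul_eq_mul, ← Finset.mul_sum]
        ring
    _ ≤ latticeLaplacian (ε j) (f j) (x j) :=
        Finset.sum_le_sum fun i _ => hj _ (by rwa [norm_latticeStep])

namespace IsApproxPotential

variable {σ ε : ℝ}

theorem sub_const (hφ : IsApproxPotential S E g α c σ ε φ) (a : ℝ) :
    IsApproxPotential S E g α c σ ε (φ · - a) := by
  have hsub {x p : Euc n} (hp : IsSubgradientOn univ φ x p) :
      IsSubgradientOn univ (φ · - a) x p := fun y hy => by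
    linarith [hp y hy]
  refine ⟨fun q hq => (hφ.exists_mem_of_slope q hq).imp fun z hz => ⟨hz.1, hsub hz.2⟩, fun x => ?_⟩
  obtain ⟨p, hpS, hp, hx, hle⟩ := hφ.exists_slope x
  refine ⟨p, hpS, hsub hp, hx, le_of_eq_of_le ?_ hle⟩
  exact Finset.sum_congr rfl fun i _ => by rw [secondDiff, secondDiff]; ring

theorem abs_sub_le (hφ : IsApproxPotential S E g α c σ ε φ) (x y : Euc n) :
    |φ x - φ y| ≤ ‖x - y‖ :=
  abs_sub_le_of_forall_exists_isSubgradientOn (fun x => by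
    obtain ⟨p, hpS, hp, -⟩ := hφ.exists_slope x
    exact ⟨p, norm_le_one_of_mem_unitSector hpS, hp⟩) x y

theorem secondDiff_latticeStep_le (hg : IsConcaveGauge S g) (hα : 0 ≤ α) (hσ : 0 < σ)
    (hφ : IsApproxPotential S E g α c σ ε φ) (x : Euc n) (i : Fin n) :
    secondDiff φ x (latticeStep ε i) ≤ ε ^ 2 * (c + σ) := by
  obtain ⟨p, -, hp, hx, hle⟩ := hφ.exists_slope x
  have hfrac : 0 ≤ α * g p / (g x + σ) := by
    rcases (hg.nonneg p).eq_or_lt with h0 | h0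
    · simp [← h0]
    · have := hg.pos x (hx h0)
      positivity
  calc secondDiff φ x (latticeStep ε i) ≤ latticeLaplacian ε φ x :=
        Finset.single_le_sum (f := fun i => secondDiff φ x (latticeStep ε i))
          (fun i _ => hp.secondDiff_nonneg (mem_univ _) (mem_univ _)) (Finset.mem_univ i)
    _ ≤ ε ^ 2 * (c + σ - α * g p / (g x + σ)) := hle
    _ ≤ ε ^ 2 * (c + σ) := by gcongr; linarith

end IsApproxPotential

theorem lapl_add_le_of_tendsto {ι : Type*} (hg : IsConcaveGauge S g) {U : Ultrafilter ι}
    {f : ι → Euc n → ℝ} {σ ε : ι → ℝ} (hσ : Tendsto σ U (𝓝 0)) (hε : Tendsto ε U (𝓝 0))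
    (hε0 : ∀ j, 0 < ε j) (hf : ∀ j, IsApproxPotential S E g α c (σ j) (ε j) (f j))
    (hlim : ∀ x, Tendsto (f · x) U (𝓝 (φ x))) (hφ : Differentiable ℝ φ) {x₀ : Euc n} (hx₀ : x₀ ∈ S)
    (hφ2 : DifferentiableAt ℝ (fderiv ℝ φ) x₀) :
    lapl φ x₀ + α * (g (gradient φ x₀) / g x₀) ≤ c := by
  have hlip j := (hf j).abs_sub_le
  have happrox (q : ℝ) (hq : 0 < q) :
      lapl φ x₀ - n * q ≤ c - α * (g (gradient φ x₀) / g x₀) := by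
    obtain ⟨x, hx, hle⟩ := exists_tendsto_mul_lapl_le hlip hlim hε (.of_forall hφ) hφ2 hq
    choose p hpS hp _ hbound using fun j => (hf j).exists_slope (x j)
    have hgrad := tendsto_gradient_of_isSubgradientOn hlip hlim hx isCompact_unitSector hpS hp
      (hφ x₀)
    have hratio : Tendsto (fun j => c + σ j - α * g (p j) / (g (x j) + σ j)) U
        (𝓝 (c + 0 - α * g (gradient φ x₀) / (g x₀ + 0))) :=
      (hσ.const_add c).sub ((((hg.continuous.tendsto _).comp hgrad).const_mul α).div
        (((hg.continuous.tendsto _).comp hx).add hσ) (by simpa using (hg.pos x₀ hx₀).ne'))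
    rw [add_zero, add_zero, mul_div_assoc] at hratio
    refine ge_of_tendsto hratio ?_
    filter_upwards [hle] with j hj
    exact le_of_mul_le_mul_left (hj.trans (hbound j)) (pow_pos (hε0 j) 2)
  have hq : Tendsto (fun q : ℝ => lapl φ x₀ - n * q) (𝓝[>] 0) (𝓝 (lapl φ x₀)) := by
    refine Tendsto.mono_left ?_ nhdsWithin_le_nhds
    simpa using ((tendsto_id (x := 𝓝 (0 : ℝ))).const_mul (n : ℝ)).const_sub (lapl φ x₀)
  linarith [le_of_tendsto hq (eventually_mem_nhdsWithin.mono fun q hq => happrox q hq)]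

theorem secondDiff_latticeStep_le_of_tendsto (hg : IsConcaveGauge S g) (hα : 0 ≤ α)
    {U : Filter ℕ} [U.NeBot] (hU : U ≤ atTop) {f : ℕ → Euc n → ℝ} {σ : ℕ → ℝ} {C : ℝ} {m : ℕ → ℕ}
    (hσ : ∀ j, 0 < σ j) (hC : ∀ j, c + σ j ≤ C) (hm : ∀ j, j ≤ m j)
    (hf : ∀ j, IsApproxPotential S E g α c (σ j) ((1 / 2) ^ m j) (f j))
    (hlim : ∀ x, Tendsto (f · x) U (𝓝 (φ x))) (l : ℕ) (i : Fin n) (x : Euc n) :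
    secondDiff φ x (latticeStep ((1 / 2) ^ l) i) ≤ ((1 / 2) ^ l) ^ 2 * C := by
  have hsecond : Tendsto (fun j => secondDiff (f j) x (latticeStep ((1 / 2) ^ l) i)) U
      (𝓝 (secondDiff φ x (latticeStep ((1 / 2) ^ l) i))) :=
    ((hlim _).add (hlim _)).sub ((hlim x).const_mul 2)
  refine le_of_tendsto hsecond ?_
  filter_upwards [hU (eventually_ge_atTop l)] with j hj
  obtain ⟨d, hd⟩ := Nat.exists_eq_add_of_le (hj.trans (hm j))
  have hstep : (2 : ℝ) ^ d * (1 / 2) ^ m j = (1 / 2) ^ l := by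
    rw [hd, pow_add, mul_left_comm, ← mul_pow]
    norm_num
  calc secondDiff (f j) x (latticeStep ((1 / 2) ^ l) i)
      = secondDiff (f j) x ((2 : ℝ) ^ d • latticeStep ((1 / 2) ^ m j) i) := by
        rw [latticeStep, latticeStep, smul_smul, hstep]
    _ ≤ 4 ^ d * (((1 / 2) ^ m j) ^ 2 * (c + σ j)) :=
        secondDiff_two_pow_smul_le (fun y => (hf j).secondDiff_latticeStep_le hg hα (hσ j) y i) d x
    _ = (2 ^ d * (1 / 2) ^ m j) ^ 2 * (c + σ j) := by
        rw [show (4 : ℝ) = 2 ^ 2 by norm_num, ← pow_mul]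
        ring
    _ ≤ ((1 / 2) ^ l) ^ 2 * C := by
        rw [hstep]
        gcongr
        exact hC j

theorem exists_ultrafilter_limit {ι F : Type*} [NormedAddCommGroup F] (U : Ultrafilter ι)
    {f : ι → F → ℝ} (hlip : ∀ j x y, |f j x - f j y| ≤ ‖x - y‖) (hf0 : ∀ j, f j 0 = 0) :
    ∃ φ : F → ℝ, ∀ x, Tendsto (f · x) U (𝓝 (φ x)) := by
  refine ⟨_, fun x => Classical.choose_spec (p := fun a => Tendsto (f · x) U (𝓝 a)) ?_⟩
  obtain ⟨a, -, ha⟩ := (isCompact_Icc (a := -‖x‖) (b := ‖x‖)).ultrafilter_le_nhds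
    (U.map (f · x)) (tendsto_principal.2 (.of_forall fun j => abs_le.1 (by
      simpa [hf0 j] using hlip j x 0)))
  exact ⟨a, ha⟩

theorem volume_diff_image_gradient_eq_zero (hEo : IsOpen E) (hE0 : volume (frontier E) = 0)
    {L : ℝ≥0} (hφ : Differentiable ℝ φ) (hL : LipschitzWith L (gradient φ)) {B : Set (Euc n)}
    (hB : ∀ q ∈ B, ∃ z ∈ closure E, IsSubgradientOn univ φ z q) :
    volume (B \ gradient φ '' E) = 0 := by
  refine measure_mono_null ?_ (measure_image_eq_zero_of_lipschitzWith volume hL hE0)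
  rintro q ⟨hqB, hqE⟩
  obtain ⟨z, hz, hzq⟩ := hB q hqB
  have hgrad := hzq.eq_gradient (hφ z)
  exact ⟨z, hEo.frontier_eq ▸ ⟨hz, fun hzE => hqE ⟨z, hzE, hgrad⟩⟩, hgrad⟩

theorem exists_tendsto_of_isApproxPotential (hEb : Bornology.IsBounded E)
    (happrox : ∀ j : ℕ, ∃ m, j ≤ m ∧ ∃ φ,
      IsApproxPotential S E g α c (1 / ((j : ℝ) + 1)) ((1 / 2) ^ m) φ) :
    ∃ (U : Ultrafilter ℕ) (m : ℕ → ℕ) (f : ℕ → Euc n → ℝ) (φ : Euc n → ℝ), (U : Filter ℕ) ≤ atTop ∧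
      (∀ j, j ≤ m j) ∧
      (∀ j : ℕ, IsApproxPotential S E g α c (1 / ((j : ℝ) + 1)) ((1 / 2) ^ m j) (f j)) ∧
      (∀ x, Tendsto (fun j => f j x) U (𝓝 (φ x))) ∧
      (∀ x, ∃ p ∈ unitSector S, IsSubgradientOn univ φ x p) ∧
      ∀ q ∈ unitSector S, ∃ z ∈ closure E, IsSubgradientOn univ φ z q := by
  choose m hm f₀ hf₀ using happrox
  let f : ℕ → Euc n → ℝ := fun j x => f₀ j x - f₀ j 0
  have hf (j : ℕ) : IsApproxPotential S E g α c (1 / ((j : ℝ) + 1)) ((1 / 2) ^ m j) (f j) :=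
    (hf₀ j).sub_const _
  have hlip j := (hf j).abs_sub_le
  obtain ⟨φ, hlim⟩ := exists_ultrafilter_limit (hyperfilter ℕ) hlip (fun j => sub_self (f₀ j 0))
  refine ⟨hyperfilter ℕ, m, f, φ, Nat.hyperfilter_le_atTop, hm, hf, hlim, fun x => ?_,
    fun q hq => ?_⟩
  · simpa using exists_isSubgradientOn_of_tendsto hlip hlim (isCompact_singleton (x := x))
      isCompact_unitSector fun j => ⟨x, rfl, ((hf j).exists_slope x).imp fun p hp => ⟨hp.1, hp.2.1⟩⟩
  · simpa using exists_isSubgradientOn_of_tendsto hlip hlim hEb.isCompact_closure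
      (isCompact_singleton (x := q)) fun j => ((hf j).exists_mem_of_slope q hq).imp fun z hz =>
        ⟨subset_closure hz.1, q, rfl, hz.2⟩

theorem IsConcaveGauge.exists_potential_of_approx (hg : IsConcaveGauge S g) (hES : E ⊆ S)
    (hEo : IsOpen E) (hEb : Bornology.IsBounded E) (hE0 : volume (frontier E) = 0) (hα : 0 ≤ α)
    (hc : 0 ≤ c) (happrox : ∀ j : ℕ, ∃ m, j ≤ m ∧ ∃ φ,
      IsApproxPotential S E g α c (1 / ((j : ℝ) + 1)) ((1 / 2) ^ m) φ) :
    ∃ φ : Euc n → ℝ, ConvexOn ℝ univ φ ∧ ContDiff ℝ 1 φ ∧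
      (∃ L : ℝ≥0, LipschitzWith L (gradient φ)) ∧ range (gradient φ) ⊆ closure (ball 0 1 ∩ S) ∧
      volume ((ball 0 1 ∩ S) \ gradient φ '' E) = 0 ∧
      ∀ᵐ x ∂volume.restrict E, DifferentiableAt ℝ (fderiv ℝ φ) x ∧
        lapl φ x + α * (g (gradient φ x) / g x) ≤ c := by
  obtain ⟨U, m, f, φ, hU, hm, hf, hlim, hslope, hcover⟩ :=
    exists_tendsto_of_isApproxPotential hEb happrox
  have hsub (x : Euc n) : ∃ p, IsSubgradientOn univ φ x p := (hslope x).imp fun _ hp => hp.2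
  have hconvex := convexOn_of_forall_exists_isSubgradientOn hsub
  obtain ⟨L, hL0, hL⟩ := exists_secondDiff_le_of_dyadic (EuclideanSpace.basisFun (Fin n) ℝ) hconvex
    (abs_sub_le_of_forall_exists_isSubgradientOn fun x => (hslope x).imp fun p hp =>
      ⟨norm_le_one_of_mem_unitSector hp.1, hp.2⟩) (add_nonneg hc zero_le_one) fun l i x => by
    rw [EuclideanSpace.basisFun_apply]
    exact secondDiff_latticeStep_le_of_tendsto hg hα hU (fun j => by positivity) (fun j =>
      by gcongr; exact div_le_one_of_le₀ (by simp) (by positivity)) hm hf hlim l i x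
  have hdiff : Differentiable ℝ φ := fun x =>
    (hsub x).elim fun p hp => (hp.hasGradientAt hL).differentiableAt
  have hlipGrad := lipschitzWith_gradient_of_secondDiff_le hsub hL0 hL
  have hlipFderiv := lipschitzWith_fderiv_of_gradient hdiff hlipGrad
  refine ⟨φ, hconvex, contDiff_one_iff_fderiv.2 ⟨hdiff, hlipFderiv.continuous⟩, ⟨_, hlipGrad⟩, ?_,
    volume_diff_image_gradient_eq_zero hEo hE0 hdiff hlipGrad fun q hq =>
      hcover q (subset_closure hq), ?_⟩
  · rintro _ ⟨x, rfl⟩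
    obtain ⟨p, hpS, hp⟩ := hslope x
    rwa [hp.eq_gradient (hdiff x)]
  · filter_upwards [ae_restrict_of_ae hlipFderiv.ae_differentiableAt,
      ae_restrict_mem hEo.measurableSet] with x hx hxE
    have hε : Tendsto (fun j => (1 / 2 : ℝ) ^ m j) U (𝓝 0) :=
      (tendsto_pow_atTop_nhds_zero_of_lt_one (by norm_num) (by norm_num)).comp
        ((tendsto_atTop_mono hm tendsto_id).mono_left hU)
    exact ⟨hx, lapl_add_le_of_tendsto hg (tendsto_one_div_add_atTop_nhds_zero_nat.mono_left hU) hε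
      (fun j => by positivity) hf hlim hdiff (hES hxE) hx⟩

end Potential

/-! ### Limits of measures, tested on small compact sets -/

section LimsupLIntegral

open Filter

theorem limsup_finsetSum_le {ι : Type*} (s : Finset ι) (u : ι → ℕ → ℝ≥0∞) :
    limsup (fun k => ∑ i ∈ s, u i k) atTop ≤ ∑ i ∈ s, limsup (u i) atTop := by
  have htail (i : ι) : Tendsto (fun N => ⨆ k ≥ N, u i k) atTop (𝓝 (limsup (u i) atTop)) := by
    rw [limsup_eq_iInf_iSup_of_nat]
    exact tendsto_atTop_iInf fun _ _ hNM => biSup_mono fun _ hk => hNM.trans hk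
  rw [← (tendsto_finsetSum s fun i _ => htail i).limsup_eq]
  exact limsup_le_limsup (.of_forall fun k => Finset.sum_le_sum fun i _ =>
    le_iSup₂ (f := fun l (_ : l ≥ k) => u i l) k le_rfl)

variable {X : Type*} [TopologicalSpace X] [MeasurableSpace X] [BorelSpace X]
  {ν : ℕ → Measure X} {μ : Measure X} {K : Set X} {h : X → ℝ}

theorem setLIntegral_eq_lintegral_meas_inter_le (lam : Measure X) (hK : MeasurableSet K)
    (hh : Continuous h) (h0 : ∀ x, 0 ≤ h x) :
    ∫⁻ x in K, ENNReal.ofReal (h x) ∂lam = ∫⁻ t in Ioi 0, lam (K ∩ {x | t ≤ h x}) := by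
  rw [lintegral_eq_lintegral_meas_le _ (.of_forall h0) hh.measurable.aemeasurable]
  refine lintegral_congr fun t => ?_
  rw [Measure.restrict_apply' hK, inter_comm]

theorem limsup_setLIntegral_le_of_support_subset [T2Space X] (hK : IsCompact K) (hh : Continuous h)
    (h0 : ∀ x, 0 ≤ h x) {U : Set X} (hU : Function.support h ⊆ U) {C : ℝ≥0∞} (hC : C ≠ ∞)
    (hbound : ∀ k, ∀ Q ⊆ U, IsCompact Q → ν k Q ≤ C)
    (hlimsup : ∀ Q ⊆ U, IsCompact Q → limsup (ν · Q) atTop ≤ μ Q) :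
    limsup (fun k => ∫⁻ x in K, ENNReal.ofReal (h x) ∂ν k) atTop ≤
      ∫⁻ x in K, ENNReal.ofReal (h x) ∂μ := by
  obtain ⟨M, hM⟩ := hK.exists_bound_of_continuousOn hh.continuousOn
  have hcompact (t : ℝ) : IsCompact (K ∩ {x | t ≤ h x}) :=
    hK.inter_right (isClosed_le continuous_const hh)
  have hsubset (t : ℝ) (ht : 0 < t) : K ∩ {x | t ≤ h x} ⊆ U := fun x hx =>
    hU (ht.trans_le hx.2).ne'
  have hempty (t : ℝ) (ht : M < t) : K ∩ {x | t ≤ h x} = ∅ :=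
    eq_empty_of_forall_notMem fun x hx =>
      ht.not_ge (hx.2.trans ((le_abs_self _).trans (hM x hx.1)))
  have hmeas (k : ℕ) : Measurable fun t => ν k (K ∩ {x | t ≤ h x}) := Antitone.measurable
    fun s t hst => measure_mono (inter_subset_inter_right _ fun x hx => hst.trans hx)
  have hle (k : ℕ) (t : ℝ) (ht : 0 < t) :
      ν k (K ∩ {x | t ≤ h x}) ≤ (Iic M).indicator (fun _ => C) t := by
    by_cases htM : t ∈ Iic M
    · exact (hbound k _ (hsubset t ht) (hcompact t)).trans_eq
        (indicator_of_mem htM fun _ => C).symm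
    · rw [hempty t (not_le.1 htM), measure_empty]
      exact zero_le
  have hfinite : ∫⁻ t in Ioi 0, (Iic M).indicator (fun _ => C) t ≠ ∞ := by
    rw [lintegral_indicator_const measurableSet_Iic, Measure.restrict_apply measurableSet_Iic,
      Iic_inter_Ioi]
    exact ENNReal.mul_ne_top hC measure_Ioc_lt_top.ne
  simp only [setLIntegral_eq_lintegral_meas_inter_le _ hK.measurableSet hh h0]
  exact (limsup_lintegral_le _ hmeas
    (fun k => ae_restrict_of_forall_mem measurableSet_Ioi (hle k)) hfinite).trans
    (setLIntegral_mono' measurableSet_Ioi fun t ht => hlimsup _ (hsubset t ht) (hcompact t))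

theorem limsup_setLIntegral_le_of_forall_nhds [T2Space X] [LocallyCompactSpace X]
    (hlocal : ∀ x, ∃ U ∈ 𝓝 x, ∃ C ≠ ∞, (∀ k, ∀ Q ⊆ U, IsCompact Q → ν k Q ≤ C) ∧
      ∀ Q ⊆ U, IsCompact Q → limsup (ν · Q) atTop ≤ μ Q)
    (hK : IsCompact K) (hh : Continuous h) (h0 : ∀ x, 0 ≤ h x) :
    limsup (fun k => ∫⁻ x in K, ENNReal.ofReal (h x) ∂ν k) atTop ≤
      ∫⁻ x in K, ENNReal.ofReal (h x) ∂μ := by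
  choose U hU C hC hbound hlimsup using hlocal
  obtain ⟨s, -, hs⟩ := hK.elim_nhds_subcover (fun x => interior (U x))
    fun x _ => interior_mem_nhds.2 (hU x)
  let e := s.equivFin.symm
  obtain ⟨ρ, hρU, hρ1, hρ0, -⟩ := exists_continuous_sum_one_of_isOpen_isCompact
    (s := fun i => interior (U (e i))) (fun _ => isOpen_interior) hK
    (hs.trans (iUnion₂_subset fun x hx => subset_iUnion_of_subset (e.symm ⟨x, hx⟩) (by simp)))
  have hcont (i : Fin s.card) : Continuous fun x => ρ i x * h x := (ρ i).continuous.mul hh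
  have hsum (lam : Measure X) : ∫⁻ x in K, ENNReal.ofReal (h x) ∂lam =
      ∑ i, ∫⁻ x in K, ENNReal.ofReal (ρ i x * h x) ∂lam := by
    rw [← lintegral_finsetSum _ fun i _ => (hcont i).measurable.ennreal_ofReal]
    refine setLIntegral_congr_fun hK.measurableSet fun x hx => ?_
    have hx1 : ∑ i, ρ i x = 1 := by simpa using hρ1 hx
    rw [← ENNReal.ofReal_sum_of_nonneg fun i _ => mul_nonneg (hρ0 i x).1 (h0 x), ← Finset.sum_mul,
      hx1, one_mul]
  simp only [hsum]
  refine (limsup_finsetSum_le _ _).trans (Finset.sum_le_sum fun i _ => ?_)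
  exact limsup_setLIntegral_le_of_support_subset hK (hcont i)
    (fun x => mul_nonneg (hρ0 i x).1 (h0 x)) (((Function.support_mul_subset_left _ _).trans
      (subset_tsupport _)).trans ((hρU i).trans interior_subset)) (hC _) (hbound _) (hlimsup _)

end LimsupLIntegral

/-! ### Orthonormal fibres -/

section Fibers

variable {m : ℕ} (b : OrthonormalBasis (Fin (m + 1)) ℝ (Euc (m + 1)))

/-- The coordinates of `x` along all the vectors of `b` but the first: the orthogonal projection
along `b 0`. -/
def tailCoords (x : Euc (m + 1)) : Fin m → ℝ := fun i => ⟪b i.succ, x⟫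

/-- The point with first coordinate `z.1` and remaining coordinates `z.2` in the basis `b`. -/
def fiberPoint (z : ℝ × (Fin m → ℝ)) : Euc (m + 1) := z.1 • b 0 + ∑ i, z.2 i • b i.succ

theorem fiberPoint_tailCoords (x : Euc (m + 1)) : fiberPoint b (⟪b 0, x⟫, tailCoords b x) = x := by
  simpa only [fiberPoint, tailCoords, Fin.sum_univ_succ] using b.sum_repr' x

theorem tailCoords_fiberPoint (z : ℝ × (Fin m → ℝ)) : tailCoords b (fiberPoint b z) = z.2 := by
  ext i
  simp [tailCoords, fiberPoint, inner_add_right, inner_sum, inner_smul_right,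
    orthonormal_iff_ite.1 b.orthonormal, Fin.succ_ne_zero]

theorem measurePreserving_fiberPoint : MeasurePreserving (fiberPoint b) volume volume := by
  have hcomp : fiberPoint b = b.repr.symm ∘ WithLp.toLp 2 ∘
      (MeasurableEquiv.piFinSuccAbove (fun _ : Fin (m + 1) => ℝ) 0).symm := by
    funext z
    simp [fiberPoint, ← OrthonormalBasis.sum_repr_symm, Fin.sum_univ_succ]
  rw [hcomp]
  exact b.measurePreserving_repr_symm.comp ((PiLp.volume_preserving_toLp _).comp
    (volume_preserving_piFinSuccAbove (fun _ : Fin (m + 1) => ℝ) 0).symm)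

theorem lipschitzWith_tailCoords : LipschitzWith 1 (tailCoords b) := by
  refine LipschitzWith.of_dist_le_mul fun x y => ?_
  rw [NNReal.coe_one, one_mul, dist_pi_le_iff dist_nonneg]
  intro i
  rw [tailCoords, tailCoords, Real.dist_eq, ← inner_sub_right, dist_eq_norm]
  simpa using abs_real_inner_le_norm (b i.succ) (x - y)

theorem volume_image_tailCoords_le (Q : Set (Euc (m + 1))) :
    volume (tailCoords b '' Q) ≤ μH[(m : ℝ)] Q := by
  have hvolume := hausdorffMeasure_pi_real (ι := Fin m)
  rw [Fintype.card_fin] at hvolume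
  simpa [hvolume] using (lipschitzWith_tailCoords b).hausdorffMeasure_image_le (Nat.cast_nonneg m) Q

theorem norm_fiberPoint_zero_le (y : Fin m → ℝ) : ‖fiberPoint b (0, y)‖ ≤ m * ‖y‖ := by
  rw [fiberPoint, zero_smul, zero_add]
  calc ‖∑ i, y i • b i.succ‖ ≤ ∑ _i : Fin m, ‖y‖ := norm_sum_le_of_le _ fun i _ => by
        simpa [norm_smul] using norm_le_pi_norm y i
    _ = m * ‖y‖ := by simp

end Fibers

theorem exists_orthonormalBasis_zero_eq {m : ℕ} {v : Euc (m + 1)} (hv : ‖v‖ = 1) :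
    ∃ b : OrthonormalBasis (Fin (m + 1)) ℝ (Euc (m + 1)), b 0 = v := by
  obtain ⟨b, hb⟩ := Orthonormal.exists_orthonormalBasis_extension_of_card_eq (𝕜 := ℝ)
    (ι := Fin (m + 1)) (by simp) (v := fun _ => v) (s := {0})
    ⟨fun _ => hv, fun i j hij => (hij (Subsingleton.elim i j)).elim⟩
  exact ⟨b, hb 0 rfl⟩

section Steep

variable {F : Type*} [NormedAddCommGroup F] [NormedSpace ℝ F] {u : F → ℝ} {v : F} {C : ℝ}
  {U : Set F}

/-- On `U` the function `u` increases in the direction `v`, at a rate within the factor `C` of the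
norm of its derivative. -/
def IsSteepOn (u : F → ℝ) (v : F) (C : ℝ) (U : Set F) : Prop :=
  ∀ x ∈ U, 0 < fderiv ℝ u x v ∧ ‖fderiv ℝ u x‖ ≤ C * fderiv ℝ u x v

theorem hasDerivAt_comp_line (hu : Differentiable ℝ u) (v p : F) (s : ℝ) :
    HasDerivAt (fun s : ℝ => u (s • v + p)) (fderiv ℝ u (s • v + p) v) s := by
  have hline : HasDerivAt (fun s : ℝ => s • v + p) v s := by
    simpa using ((hasDerivAt_id s).smul_const v).add_const p
  exact (hu _).hasFDerivAt.comp_hasDerivAt s hline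

theorem IsSteepOn.strictMonoOn (hsteep : IsSteepOn u v C U) (hu : Differentiable ℝ u)
    (hU : Convex ℝ U) (p : F) : StrictMonoOn (fun s : ℝ => u (s • v + p)) {s | s • v + p ∈ U} := by
  have hconvex : Convex ℝ {s : ℝ | s • v + p ∈ U} :=
    (hU.translate_preimage_left p).linear_preimage (LinearMap.toSpanSingleton ℝ F v)
  refine strictMonoOn_of_deriv_pos hconvex (fun s _ =>
    (hasDerivAt_comp_line hu v p s).continuousAt.continuousWithinAt) fun s hs => ?_
  rw [(hasDerivAt_comp_line hu v p s).deriv]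
  exact (hsteep _ (interior_subset (s := {s : ℝ | s • v + p ∈ U}) hs)).1

theorem IsSteepOn.abs_le_mul_norm (hsteep : IsSteepOn u v C U) (hu : Differentiable ℝ u)
    (hU : Convex ℝ U) {x y : F} (hx : x ∈ U) (hy : y ∈ U) (hxy : u x = u y) {s : ℝ} {q : F}
    (hq : y - x = s • v + q) : |s| ≤ C * ‖q‖ := by
  obtain ⟨z, hz, hmvt⟩ :=
    domain_mvt (fun w _ => (hu w).hasFDerivAt.hasFDerivWithinAt) hU hx hy
  obtain ⟨hpos, hle⟩ := hsteep z (hU.segment_subset hx hy hz)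
  rw [hxy, sub_self, hq, map_add, map_smul, smul_eq_mul] at hmvt
  refine le_of_mul_le_mul_right ?_ hpos
  calc |s| * fderiv ℝ u z v = ‖fderiv ℝ u z q‖ := by
        rw [Real.norm_eq_abs, ← abs_neg (fderiv ℝ u z q), ← eq_neg_of_add_eq_zero_left hmvt.symm,
          abs_mul, abs_of_pos hpos]
    _ ≤ ‖fderiv ℝ u z‖ * ‖q‖ := (fderiv ℝ u z).le_opNorm q
    _ ≤ C * fderiv ℝ u z v * ‖q‖ := by gcongr
    _ = C * ‖q‖ * fderiv ℝ u z v := by ring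

theorem lintegral_abs_deriv_le_of_mapsTo_Icc {G G' : ℝ → ℝ} {I : Set ℝ} (hI : MeasurableSet I)
    (hG : ∀ s, HasDerivAt G (G' s) s) (hinj : InjOn G I) {r t : ℝ} (hmaps : MapsTo G I (Icc r t)) :
    ∫⁻ s in I, ENNReal.ofReal |G' s| ≤ ENNReal.ofReal (t - r) := by
  have hchange := lintegral_image_eq_lintegral_abs_deriv_mul hI
    (fun s _ => (hG s).hasDerivWithinAt) hinj fun _ => 1
  simp only [mul_one, setLIntegral_one] at hchange
  rw [← hchange, ← Real.volume_Icc]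
  exact measure_mono hmaps.image_subset

theorem IsSteepOn.lintegral_line_le [MeasurableSpace F] [BorelSpace F]
    (hsteep : IsSteepOn u v C U) (hu : Differentiable ℝ u) (hU : Convex ℝ U) {A : Set F}
    (hA : MeasurableSet A) (hAU : A ⊆ U) {r t : ℝ} (hmaps : MapsTo u A (Icc r t)) (p : F) :
    ∫⁻ s in {s : ℝ | s • v + p ∈ A}, ‖fderiv ℝ u (s • v + p)‖ₑ ≤
      ENNReal.ofReal C * ENNReal.ofReal (t - r) := by
  have hI : MeasurableSet {s : ℝ | s • v + p ∈ A} :=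
    hA.preimage (by fun_prop : Continuous fun s : ℝ => s • v + p).measurable
  calc ∫⁻ s in {s : ℝ | s • v + p ∈ A}, ‖fderiv ℝ u (s • v + p)‖ₑ
      ≤ ∫⁻ s in {s : ℝ | s • v + p ∈ A},
          ENNReal.ofReal C * ENNReal.ofReal |fderiv ℝ u (s • v + p) v| := by
        refine setLIntegral_mono' hI fun s hs => ?_
        obtain ⟨hpos, hle⟩ := hsteep _ (hAU hs)
        rw [abs_of_pos hpos, ← ENNReal.ofReal_mul' hpos.le, ← ofReal_norm]
        exact ENNReal.ofReal_le_ofReal hle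
    _ = ENNReal.ofReal C * ∫⁻ s in {s : ℝ | s • v + p ∈ A},
          ENNReal.ofReal |fderiv ℝ u (s • v + p) v| :=
        lintegral_const_mul' _ _ ENNReal.ofReal_ne_top
    _ ≤ ENNReal.ofReal C * ENNReal.ofReal (t - r) := by
        gcongr
        exact lintegral_abs_deriv_le_of_mapsTo_Icc hI (hasDerivAt_comp_line hu v p)
          ((hsteep.strictMonoOn hu hU p).injOn.mono fun s hs => hAU hs) fun s hs => hmaps hs

end Steep

section Steep

variable {m : ℕ} {b : OrthonormalBasis (Fin (m + 1)) ℝ (Euc (m + 1))} {u : Euc (m + 1) → ℝ}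
  {C : ℝ} {U : Set (Euc (m + 1))}

theorem exists_isSteepOn_ball (hu : ContDiff ℝ 1 u) {x : Euc (m + 1)} (hx : fderiv ℝ u x ≠ 0)
    (hC : 1 < C) : ∃ (b : OrthonormalBasis (Fin (m + 1)) ℝ (Euc (m + 1))) (r : ℝ), 0 < r ∧
      IsSteepOn u (b 0) C (ball x r) := by
  have hgrad : gradient u x ≠ 0 := by simpa [gradient] using hx
  obtain ⟨b, hb⟩ := exists_orthonormalBasis_zero_eq (norm_smul_inv_norm (𝕜 := ℝ) hgrad)
  have hx0 : fderiv ℝ u x (b 0) = ‖fderiv ℝ u x‖ := by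
    have hnorm : ‖gradient u x‖ = ‖fderiv ℝ u x‖ := by simp [gradient]
    rw [hb, ← inner_gradient_left, inner_smul_right, real_inner_self_eq_norm_sq, hnorm]
    simp [sq, hx]
  have hcont := hu.continuous_fderiv one_ne_zero
  obtain ⟨r, hr, hball⟩ := Metric.isOpen_iff.1
    (isOpen_lt hcont.norm (continuous_const.mul (hcont.clm_apply continuous_const))) x
    (show ‖fderiv ℝ u x‖ < C * fderiv ℝ u x (b 0) by
      rw [hx0]; exact lt_mul_of_one_lt_left (norm_pos_iff.2 hx) hC)
  refine ⟨b, r, hr, fun y hy => ⟨?_, (hball hy).le⟩⟩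
  exact pos_of_mul_pos_right ((norm_nonneg _).trans_lt (hball hy)) (zero_le_one.trans hC.le)

theorem IsSteepOn.dist_le_mul_dist_tailCoords (hsteep : IsSteepOn u (b 0) C U)
    (hu : Differentiable ℝ u) (hU : Convex ℝ U) (hC : 0 ≤ C) {x y : Euc (m + 1)} (hx : x ∈ U)
    (hy : y ∈ U) (hxy : u x = u y) :
    dist x y ≤ (C + 1) * m * dist (tailCoords b x) (tailCoords b y) := by
  set q := fiberPoint b (0, tailCoords b y - tailCoords b x) with hq
  have hsplit : y - x = ⟪b 0, y - x⟫ • b 0 + q := by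
    have htail : tailCoords b y - tailCoords b x = tailCoords b (y - x) := by
      ext i; simp [tailCoords, inner_sub_right]
    rw [hq, htail]
    simpa [fiberPoint] using (fiberPoint_tailCoords b (y - x)).symm
  have hhead := hsteep.abs_le_mul_norm hu hU hx hy hxy hsplit
  have hqnorm : ‖q‖ ≤ m * dist (tailCoords b x) (tailCoords b y) := by
    rw [dist_comm, dist_eq_norm]
    exact norm_fiberPoint_zero_le b _
  calc dist x y = ‖⟪b 0, y - x⟫ • b 0 + q‖ := by rw [← hsplit, dist_comm, dist_eq_norm]
    _ ≤ |⟪b 0, y - x⟫| + ‖q‖ := by simpa [norm_smul] using norm_add_le (⟪b 0, y - x⟫ • b 0) q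
    _ ≤ (C + 1) * ‖q‖ := by linarith
    _ ≤ (C + 1) * (m * dist (tailCoords b x) (tailCoords b y)) := by gcongr
    _ = _ := by ring

theorem IsSteepOn.hausdorffMeasure_level_lt_top (hsteep : IsSteepOn u (b 0) C U)
    (hu : Differentiable ℝ u) (hU : Convex ℝ U) (hUb : Bornology.IsBounded U) (hC : 0 ≤ C)
    (c : ℝ) : μH[(m : ℝ)] (U ∩ {x | u x = c}) < ∞ := by
  set L := U ∩ {x | u x = c}
  have hanti : AntilipschitzWith ((C + 1) * m).toNNReal (L.domRestrict (tailCoords b)) :=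
    AntilipschitzWith.of_le_mul_dist fun x y => by
      rw [Real.coe_toNNReal _ (by positivity)]
      exact hsteep.dist_le_mul_dist_tailCoords hu hU hC x.2.1 y.2.1 (x.2.2.trans y.2.2.symm)
  have hvolume := hausdorffMeasure_pi_real (ι := Fin m)
  rw [Fintype.card_fin] at hvolume
  calc μH[(m : ℝ)] L = μH[(m : ℝ)] (univ : Set L) := by
        rw [← (isometry_subtype_coe (s := L)).hausdorffMeasure_image (.inl m.cast_nonneg),
          image_univ, Subtype.range_coe]
    _ ≤ _ := hanti.le_hausdorffMeasure_image m.cast_nonneg univ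
    _ < ∞ := by
        refine ENNReal.mul_lt_top (ENNReal.rpow_lt_top_of_nonneg m.cast_nonneg
          ENNReal.coe_ne_top) ?_
        rw [hvolume]
        exact (((lipschitzWith_tailCoords b).isBounded_image hUb).subset
          (image_subset_iff.2 fun x _ => mem_image_of_mem _ x.2.1)).measure_lt_top

-- Fubini along the lines parallel to `b 0`, on each of which `u` is injective.
theorem IsSteepOn.lintegral_enorm_fderiv_le (hsteep : IsSteepOn u (b 0) C U)
    (hu : ContDiff ℝ 1 u) (hU : Convex ℝ U) {A : Set (Euc (m + 1))} (hA : MeasurableSet A)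
    (hAU : A ⊆ U) {r t : ℝ} (hmaps : MapsTo u A (Icc r t)) :
    ∫⁻ x in A, ‖fderiv ℝ u x‖ₑ ≤
      ENNReal.ofReal C * ENNReal.ofReal (t - r) * volume (tailCoords b '' A) := by
  have hmeas : Measurable (A.indicator fun x => ‖fderiv ℝ u x‖ₑ) :=
    (hu.continuous_fderiv one_ne_zero).enorm.measurable.indicator hA
  have hfiber (y : Fin m → ℝ) : ∫⁻ s, A.indicator (fun x => ‖fderiv ℝ u x‖ₑ) (fiberPoint b (s, y)) ≤
      (tailCoords b '' A).indicator (fun _ => ENNReal.ofReal C * ENNReal.ofReal (t - r)) y := by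
    by_cases hy : y ∈ tailCoords b '' A
    · rw [indicator_of_mem hy]
      have hline : Continuous fun s : ℝ => s • b 0 + ∑ i, y i • b i.succ := by fun_prop
      exact (lintegral_indicator (hA.preimage hline.measurable) _).trans_le
        (hsteep.lintegral_line_le (hu.differentiable one_ne_zero) hU hA hAU hmaps _)
    · have hzero (s : ℝ) : A.indicator (fun x => ‖fderiv ℝ u x‖ₑ) (fiberPoint b (s, y)) = 0 :=
        indicator_of_notMem (fun h => hy ⟨_, h, tailCoords_fiberPoint b (s, y)⟩) _
      simp [hzero]
  calc ∫⁻ x in A, ‖fderiv ℝ u x‖ₑ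
      = ∫⁻ z, A.indicator (fun x => ‖fderiv ℝ u x‖ₑ) (fiberPoint b z) := by
        rw [← lintegral_indicator hA, (measurePreserving_fiberPoint b).lintegral_comp hmeas]
    _ = ∫⁻ y, ∫⁻ s, A.indicator (fun x => ‖fderiv ℝ u x‖ₑ) (fiberPoint b (s, y)) := by
        rw [Measure.volume_eq_prod]
        exact lintegral_prod_symm _
          (hmeas.comp (measurePreserving_fiberPoint b).measurable).aemeasurable
    _ ≤ _ := (lintegral_mono hfiber).trans (lintegral_indicator_const_le _ _)

end Steep

section Level

variable {m : ℕ} {f : Euc (m + 1) → ℝ} {c : ℝ}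

theorem hausdorffMeasure_lt_top_of_subset_level (hf : ContDiff ℝ 1 f) {K : Set (Euc (m + 1))}
    (hK : IsCompact K) (hfK : ∀ x ∈ K, f x = c) (hf' : ∀ x ∈ K, fderiv ℝ f x ≠ 0) :
    μH[(m : ℝ)] K < ∞ := by
  refine hK.measure_lt_top_of_nhdsWithin fun x hx => ?_
  obtain ⟨b, r, hr, hsteep⟩ := exists_isSteepOn_ball hf (hf' x hx) one_lt_two
  refine ⟨K ∩ ball x r, inter_mem_nhdsWithin K (ball_mem_nhds x hr), ?_⟩
  have hsubset : K ∩ ball x r ⊆ ball x r ∩ {y | f y = c} := fun y hy => ⟨hy.2, hfK y hy.1⟩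
  exact (measure_mono hsubset).trans_lt
    (hsteep.hausdorffMeasure_level_lt_top (hf.differentiable one_ne_zero) (convex_ball x r)
      isBounded_ball zero_le_two c)

theorem volume_level_eq_zero (hf : ContDiff ℝ 1 f) (hf' : ∀ x, f x = c → fderiv ℝ f x ≠ 0) :
    volume {x | f x = c} = 0 := by
  refine measure_null_of_locally_null _ fun x hx => ?_
  obtain ⟨b, r, hr, hsteep⟩ := exists_isSteepOn_ball hf (hf' x hx) one_lt_two
  set A := {x | f x = c} ∩ ball x r
  have hA : MeasurableSet A :=
    (isClosed_eq hf.continuous continuous_const).measurableSet.inter measurableSet_ball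
  refine ⟨A, inter_mem_nhdsWithin _ (ball_mem_nhds x hr), ?_⟩
  have hint := hsteep.lintegral_enorm_fderiv_le hf (convex_ball x r) hA inter_subset_right
    (r := c) (t := c) fun y hy => ⟨hy.1.ge, hy.1.le⟩
  have hae := (setLIntegral_eq_zero_iff hA
    (hf.continuous_fderiv one_ne_zero).enorm.measurable).1 (by simpa using hint)
  refine measure_mono_null (fun y hy => ?_) hae
  have hpos : ‖fderiv ℝ f y‖ₑ ≠ 0 := by
    simpa [← ofReal_norm] using hf' y hy.1
  exact fun hzero => hpos (hzero hy)

end Level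

/-! ### The interior perimeter as a limit of layer measures -/

section Layer

open Filter

/-- The total variation of the gradient of `exp (f / δ)` on `{f < 0}`. As `δ → 0` this function
approximates the indicator of the complement of `{f < 0}`, and the measure concentrates on the
level set `{f = 0}`. -/
def layerMeasure {n : ℕ} (f : Euc n → ℝ) (δ : ℝ) : Measure (Euc n) :=
  (volume.restrict {x | f x < 0}).withDensity fun x => ‖fderiv ℝ (fun y => Real.exp (f y / δ)) x‖ₑ

section

variable {F : Type*} [NormedAddCommGroup F] [NormedSpace ℝ F] {f : F → ℝ} {δ : ℝ}

theorem contDiff_exp_div (hf : ContDiff ℝ 1 f) (δ : ℝ) :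
    ContDiff ℝ 1 fun y => Real.exp (f y / δ) :=
  (hf.div_const δ).exp

theorem fderiv_exp_div (hf : Differentiable ℝ f) (δ : ℝ) (x : F) :
    fderiv ℝ (fun y => Real.exp (f y / δ)) x = (Real.exp (f x / δ) / δ) • fderiv ℝ f x := by
  simp only [div_eq_mul_inv]
  rw [((hf x).hasFDerivAt.mul_const δ⁻¹).exp.fderiv, smul_smul]

theorem norm_fderiv_exp_div_le (hf : Differentiable ℝ f) (hδ : 0 < δ) {t : ℝ} (ht : 0 < t) {x : F}
    (hx : f x ≤ -t) :
    ‖fderiv ℝ (fun y => Real.exp (f y / δ)) x‖ ≤ δ * (2 / t ^ 2 * ‖fderiv ℝ f x‖) := by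
  have hexp : Real.exp (f x / δ) ≤ 2 * (δ / t) ^ 2 := by
    have hquad : (t / δ) ^ 2 / 2 ≤ Real.exp (t / δ) :=
      le_trans (by linarith [div_pos ht hδ]) (Real.quadratic_le_exp_of_nonneg (div_pos ht hδ).le)
    calc Real.exp (f x / δ) ≤ Real.exp (-(t / δ)) := by
          rw [Real.exp_le_exp, ← neg_div]; gcongr
      _ = (Real.exp (t / δ))⁻¹ := Real.exp_neg _
      _ ≤ ((t / δ) ^ 2 / 2)⁻¹ := by gcongr
      _ = 2 * (δ / t) ^ 2 := by field_simp
  rw [fderiv_exp_div hf, norm_smul, Real.norm_of_nonneg (by positivity), ← mul_assoc]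
  gcongr
  calc Real.exp (f x / δ) / δ ≤ 2 * (δ / t) ^ 2 / δ := by gcongr
    _ = δ * (2 / t ^ 2) := by field_simp

theorem IsSteepOn.exp_div {v : F} {C : ℝ} {U : Set F} (hsteep : IsSteepOn f v C U)
    (hf : Differentiable ℝ f) (hδ : 0 < δ) : IsSteepOn (fun y => Real.exp (f y / δ)) v C U := by
  intro x hx
  obtain ⟨hpos, hle⟩ := hsteep x hx
  have hfactor : 0 < Real.exp (f x / δ) / δ := by positivity
  rw [fderiv_exp_div hf, norm_smul, Real.norm_of_nonneg hfactor.le]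
  refine ⟨mul_pos hfactor hpos, ?_⟩
  calc Real.exp (f x / δ) / δ * ‖fderiv ℝ f x‖
      ≤ Real.exp (f x / δ) / δ * (C * fderiv ℝ f x v) := by gcongr
    _ = C * (Real.exp (f x / δ) / δ * fderiv ℝ f x v) := by ring

end

theorem layerMeasure_apply {n : ℕ} (f : Euc n → ℝ) (δ : ℝ) {Q : Set (Euc n)}
    (hQ : MeasurableSet Q) : layerMeasure f δ Q =
      ∫⁻ x in Q ∩ {x | f x < 0}, ‖fderiv ℝ (fun y => Real.exp (f y / δ)) x‖ₑ := by
  rw [layerMeasure, withDensity_apply _ hQ, Measure.restrict_restrict hQ]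

theorem exists_layerMeasure_le_mul {n : ℕ} {f : Euc n → ℝ} (hf : ContDiff ℝ 1 f) {Q : Set (Euc n)}
    (hQ : IsCompact Q) (hfQ : ∀ x ∈ Q, f x ≠ 0) :
    ∃ C ≠ ∞, ∀ δ > 0, layerMeasure f δ Q ≤ ENNReal.ofReal δ * C := by
  obtain ⟨t, ht, htQ⟩ := hQ.exists_forall_le' (f := fun x => |f x|) hf.continuous.abs.continuousOn
    fun x hx => abs_pos.2 (hfQ x hx)
  obtain ⟨M, hM⟩ := hQ.exists_bound_of_continuousOn (hf.continuous_fderiv one_ne_zero).continuousOn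
  refine ⟨ENNReal.ofReal (2 / t ^ 2 * M) * volume Q,
    ENNReal.mul_ne_top ENNReal.ofReal_ne_top hQ.measure_lt_top.ne, fun δ hδ => ?_⟩
  have hQ0 : MeasurableSet (Q ∩ {x | f x < 0}) :=
    hQ.measurableSet.inter (isOpen_lt hf.continuous continuous_const).measurableSet
  calc layerMeasure f δ Q
      = ∫⁻ x in Q ∩ {x | f x < 0}, ‖fderiv ℝ (fun y => Real.exp (f y / δ)) x‖ₑ :=
        layerMeasure_apply f δ hQ.measurableSet
    _ ≤ ∫⁻ _x in Q ∩ {x | f x < 0}, ENNReal.ofReal (δ * (2 / t ^ 2 * M)) := by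
        refine setLIntegral_mono' hQ0 fun x hx => ?_
        have hxt : f x ≤ -t := le_neg_of_le_neg ((htQ x hx.1).trans_eq (abs_of_neg hx.2))
        rw [← ofReal_norm]
        refine ENNReal.ofReal_le_ofReal ((norm_fderiv_exp_div_le
          (hf.differentiable one_ne_zero) hδ ht hxt).trans ?_)
        gcongr
        exact hM x hx.1
    _ ≤ ENNReal.ofReal (δ * (2 / t ^ 2 * M)) * volume Q := by
        rw [setLIntegral_const]
        gcongr
        exact inter_subset_left
    _ = ENNReal.ofReal δ * (ENNReal.ofReal (2 / t ^ 2 * M) * volume Q) := by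
        rw [ENNReal.ofReal_mul hδ.le, mul_assoc]

variable {m : ℕ} {f : Euc (m + 1) → ℝ} {b : OrthonormalBasis (Fin (m + 1)) ℝ (Euc (m + 1))}
  {C : ℝ} {U : Set (Euc (m + 1))}

theorem IsSteepOn.layerMeasure_le (hsteep : IsSteepOn f (b 0) C U) (hf : ContDiff ℝ 1 f)
    (hU : Convex ℝ U) {δ : ℝ} (hδ : 0 < δ) {Q : Set (Euc (m + 1))} (hQ : MeasurableSet Q)
    (hQU : Q ⊆ U) :
    layerMeasure f δ Q ≤ ENNReal.ofReal C * volume (tailCoords b '' Q) := by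
  have hmaps : MapsTo (fun y => Real.exp (f y / δ)) (Q ∩ {x | f x < 0}) (Icc 0 1) := fun x hx =>
    ⟨(Real.exp_pos _).le,
      Real.exp_le_one_iff.2 (div_nonpos_of_nonpos_of_nonneg (le_of_lt hx.2) hδ.le)⟩
  rw [layerMeasure_apply f δ hQ]
  refine ((hsteep.exp_div (hf.differentiable one_ne_zero) hδ).lintegral_enorm_fderiv_le
    (contDiff_exp_div hf δ) hU (hQ.inter (isOpen_lt hf.continuous continuous_const).measurableSet)
    (inter_subset_left.trans hQU) hmaps).trans ?_
  rw [sub_zero, ENNReal.ofReal_one, mul_one]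
  gcongr
  exact inter_subset_left

theorem tendsto_layerMeasure_of_ne_zero (hf : ContDiff ℝ 1 f) {Q : Set (Euc (m + 1))}
    (hQ : IsCompact Q) (hfQ : ∀ x ∈ Q, f x ≠ 0) :
    Tendsto (fun k : ℕ => layerMeasure f (1 / (k + 1)) Q) atTop (𝓝 0) := by
  obtain ⟨C, hC, hle⟩ := exists_layerMeasure_le_mul hf hQ hfQ
  have hlim : Tendsto (fun k : ℕ => ENNReal.ofReal (1 / (k + 1)) * C) atTop (𝓝 0) := by
    have := ENNReal.Tendsto.mul_const (b := C)
      (ENNReal.tendsto_ofReal (tendsto_one_div_add_atTop_nhds_zero_nat (𝕜 := ℝ))) (.inr hC)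
    simpa using this
  exact tendsto_of_tendsto_of_tendsto_of_le_of_le tendsto_const_nhds hlim (fun _ => zero_le)
    fun k => hle _ Nat.one_div_pos_of_nat

-- Cover the level set by a tube `tailCoords b ⁻¹' V`; outside it the layer measures vanish.
theorem IsSteepOn.limsup_layerMeasure_le (hsteep : IsSteepOn f (b 0) C U) (hf : ContDiff ℝ 1 f)
    (hU : Convex ℝ U) (hC : 0 < C) {Q : Set (Euc (m + 1))} (hQ : IsCompact Q) (hQU : Q ⊆ U) :
    limsup (fun k : ℕ => layerMeasure f (1 / (k + 1)) Q) atTop ≤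
      ENNReal.ofReal C * μH[(m : ℝ)] (Q ∩ {x | f x = 0}) := by
  refine le_trans ?_ (mul_le_mul_right (volume_image_tailCoords_le b _) _)
  rw [(tailCoords b '' (Q ∩ {x | f x = 0})).measure_eq_iInf_isOpen volume]
  simp only [ENNReal.mul_iInf_of_ne (ENNReal.ofReal_pos.2 hC).ne' ENNReal.ofReal_ne_top,
    le_iInf_iff]
  intro V hQV hV
  have htube : IsOpen (tailCoords b ⁻¹' V) := hV.preimage (lipschitzWith_tailCoords b).continuous
  have houtside := tendsto_layerMeasure_of_ne_zero hf (hQ.diff htube)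
    fun x hx hfx => hx.2 (hQV (mem_image_of_mem _ ⟨hx.1, hfx⟩))
  have hinside (k : ℕ) : layerMeasure f (1 / (k + 1)) (Q ∩ tailCoords b ⁻¹' V) ≤
      ENNReal.ofReal C * volume V :=
    (hsteep.layerMeasure_le hf hU Nat.one_div_pos_of_nat
      (hQ.measurableSet.inter htube.measurableSet) (inter_subset_left.trans hQU)).trans
      (mul_le_mul_right (measure_mono (image_subset_iff.2 inter_subset_right)) _)
  calc limsup (fun k : ℕ => layerMeasure f (1 / (k + 1)) Q) atTop
      ≤ limsup (fun k : ℕ => ENNReal.ofReal C * volume V +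
          layerMeasure f (1 / (k + 1)) (Q \ tailCoords b ⁻¹' V)) atTop :=
        limsup_le_limsup (.of_forall fun k => (measure_le_inter_add_sdiff _ _ _).trans
          (add_le_add_left (hinside k) _))
    _ = ENNReal.ofReal C * volume V := by
        simpa using (tendsto_const_nhds.add houtside).limsup_eq

theorem exists_nhds_layerMeasure_bound (hf : ContDiff ℝ 1 f)
    (hf' : ∀ x, f x = 0 → fderiv ℝ f x ≠ 0) (hC : 1 < C) (x : Euc (m + 1)) :
    ∃ U ∈ 𝓝 x, ∃ B ≠ ∞,
      (∀ k : ℕ, ∀ Q ⊆ U, IsCompact Q → layerMeasure f (1 / (k + 1)) Q ≤ B) ∧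
      ∀ Q ⊆ U, IsCompact Q → limsup (fun k : ℕ => layerMeasure f (1 / (k + 1)) Q) atTop ≤
        ENNReal.ofReal C * μH[(m : ℝ)] (Q ∩ {x | f x = 0}) := by
  by_cases hx : f x = 0
  · obtain ⟨b, r, hr, hsteep⟩ := exists_isSteepOn_ball hf (hf' x hx) hC
    refine ⟨ball x r, ball_mem_nhds x hr, ENNReal.ofReal C * volume (tailCoords b '' ball x r),
      ENNReal.mul_ne_top ENNReal.ofReal_ne_top
        ((lipschitzWith_tailCoords b).isBounded_image isBounded_ball).measure_lt_top.ne,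
      fun k Q hQU hQ => ?_, fun Q hQU hQ => ?_⟩
    · refine (hsteep.layerMeasure_le hf (convex_ball x r) Nat.one_div_pos_of_nat
        hQ.measurableSet hQU).trans ?_
      gcongr
    · exact hsteep.limsup_layerMeasure_le hf (convex_ball x r) (zero_lt_one.trans hC) hQ hQU
  · obtain ⟨U, hU, hfU, hUc⟩ := local_compact_nhds
      (hf.continuous.continuousAt.eventually_ne hx)
    obtain ⟨B, hB, hle⟩ := exists_layerMeasure_le_mul hf hUc hfU
    refine ⟨U, hU, B, hB, fun k Q hQU _ => ?_, fun Q hQU hQ => ?_⟩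
    · calc layerMeasure f (1 / (k + 1)) Q ≤ layerMeasure f (1 / (k + 1)) U := measure_mono hQU
        _ ≤ ENNReal.ofReal (1 / (k + 1)) * B := hle _ Nat.one_div_pos_of_nat
        _ ≤ 1 * B := by
          gcongr
          exact ENNReal.ofReal_le_one.2 ((div_le_one (by positivity)).2 (by simp))
        _ = B := one_mul B
    · rw [(tendsto_layerMeasure_of_ne_zero hf hQ fun y hy => hfU (hQU hy)).limsup_eq]
      exact zero_le

theorem limsup_setLIntegral_layerMeasure_le (hf : ContDiff ℝ 1 f)
    (hf' : ∀ x, f x = 0 → fderiv ℝ f x ≠ 0) {K : Set (Euc (m + 1))} (hK : IsCompact K)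
    {h : Euc (m + 1) → ℝ} (hh : Continuous h) (h0 : ∀ x, 0 ≤ h x) :
    limsup (fun k : ℕ => ∫⁻ x in K, ENNReal.ofReal (h x) ∂layerMeasure f (1 / (k + 1))) atTop ≤
      ∫⁻ x in K ∩ {x | f x = 0}, ENNReal.ofReal (h x) ∂μH[(m : ℝ)] := by
  have hle (C : ℝ) (hC : 1 < C) :
      limsup (fun k : ℕ => ∫⁻ x in K, ENNReal.ofReal (h x) ∂layerMeasure f (1 / (k + 1))) atTop ≤
        ENNReal.ofReal C * ∫⁻ x in K ∩ {x | f x = 0}, ENNReal.ofReal (h x) ∂μH[(m : ℝ)] := by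
    have hlevel : MeasurableSet {x | f x = 0} :=
      (isClosed_eq hf.continuous continuous_const).measurableSet
    have := limsup_setLIntegral_le_of_forall_nhds
      (μ := ENNReal.ofReal C • μH[(m : ℝ)].restrict {x | f x = 0})
      (ν := fun k : ℕ => layerMeasure f (1 / (k + 1)))
      (by simpa [Measure.restrict_apply' hlevel] using exists_nhds_layerMeasure_bound hf hf' hC)
      hK hh h0
    rwa [Measure.restrict_smul, lintegral_smul_measure, Measure.restrict_restrict hK.measurableSet]
      at this
  have hlim := ENNReal.Tendsto.mul_const
    (b := ∫⁻ x in K ∩ {x | f x = 0}, ENNReal.ofReal (h x) ∂μH[(m : ℝ)])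
    ((ENNReal.continuous_ofReal.tendsto 1).mono_left (nhdsWithin_le_nhds (s := Ioi 1)))
    (.inl (by simp))
  rw [ENNReal.ofReal_one, one_mul] at hlim
  exact ge_of_tendsto hlim (eventually_mem_nhdsWithin.mono hle)

end Layer

/-! ### Layer cutoffs -/

/-- The cutoff `1 - exp (f / δ)`, positive exactly on `{f < 0}`, which tends to `1` there as
`δ → 0` while its gradient concentrates on the boundary. -/
def layerCutoff {n : ℕ} (f : Euc n → ℝ) (δ : ℝ) (x : Euc n) : ℝ := 1 - Real.exp (f x / δ)

section Cutoff

open Filter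

variable {n : ℕ} {f : Euc n → ℝ} {δ : ℝ}

theorem contDiff_layerCutoff (hf : ContDiff ℝ 1 f) (δ : ℝ) : ContDiff ℝ 1 (layerCutoff f δ) :=
  contDiff_const.sub (contDiff_exp_div hf δ)

theorem layerCutoff_pos_iff (hδ : 0 < δ) {x : Euc n} : 0 < layerCutoff f δ x ↔ f x < 0 := by
  rw [layerCutoff, sub_pos, Real.exp_lt_one_iff, div_lt_iff₀ hδ, zero_mul]

theorem fderiv_layerCutoff (f : Euc n → ℝ) (δ : ℝ) (x : Euc n) :
    fderiv ℝ (layerCutoff f δ) x = -fderiv ℝ (fun y => Real.exp (f y / δ)) x :=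
  fderiv_const_sub 1

theorem fderiv_layerCutoff_ne_zero (hf : Differentiable ℝ f) (hδ : 0 < δ) {x : Euc n}
    (hx : fderiv ℝ f x ≠ 0) : fderiv ℝ (layerCutoff f δ) x ≠ 0 := by
  rw [fderiv_layerCutoff, fderiv_exp_div hf, neg_ne_zero]
  exact smul_ne_zero (by positivity) hx

variable {W : Euc n → ℝ}

theorem tendsto_setIntegral_mul_layerCutoff (hf : Continuous f) (hW : Continuous W)
    (hWi : IntegrableOn W {x | f x < 0}) :
    Tendsto (fun k : ℕ => ∫ x in {x | f x < 0}, W x * layerCutoff f (1 / ((k : ℝ) + 1)) x) atTop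
      (𝓝 (∫ x in {x | f x < 0}, W x)) := by
  have hE : MeasurableSet {x | f x < 0} := (isOpen_lt hf continuous_const).measurableSet
  have hcutoff (k : ℕ) : Continuous (layerCutoff f (1 / ((k : ℝ) + 1))) :=
    continuous_const.sub (Real.continuous_exp.comp (hf.div_const _))
  refine tendsto_integral_of_dominated_convergence (fun x => ‖W x‖)
    (fun k => (hW.mul (hcutoff k)).aestronglyMeasurable) hWi.norm (fun k => ?_) ?_
  · filter_upwards [ae_restrict_mem hE] with x hx
    have hpos := (layerCutoff_pos_iff (Nat.one_div_pos_of_nat (α := ℝ) (n := k))).2 hx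
    have hle : layerCutoff f (1 / ((k : ℝ) + 1)) x ≤ 1 :=
      sub_le_self _ (Real.exp_pos _).le
    rw [norm_mul, Real.norm_of_nonneg hpos.le]
    exact mul_le_of_le_one_right (norm_nonneg _) hle
  · filter_upwards [ae_restrict_mem hE] with x hx
    have hdiv : Tendsto (fun k : ℕ => f x / (1 / ((k : ℝ) + 1))) atTop atBot := by
      simp only [div_div_eq_mul_div, div_one]
      exact (tendsto_atTop_add_const_right _ _ tendsto_natCast_atTop_atTop).const_mul_atTop_of_neg
        hx
    simpa [layerCutoff] using ((Real.tendsto_exp_atBot.comp hdiv).const_sub 1).const_mul (W x)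

end Cutoff

section Perimeter

open Filter

variable {m : ℕ} {f W : Euc (m + 1) → ℝ}

theorem limsup_lintegral_enorm_fderiv_layerCutoff_le (hf : ContDiff ℝ 1 f)
    (hf' : ∀ x, f x = 0 → fderiv ℝ f x ≠ 0) (hE : Bornology.IsBounded {x | f x < 0})
    (hW : Continuous W) (hW0 : ∀ x, 0 ≤ W x) :
    limsup (fun k : ℕ => ∫⁻ x in {x | f x < 0},
        ENNReal.ofReal (W x) * ‖fderiv ℝ (layerCutoff f (1 / ((k : ℝ) + 1))) x‖ₑ) atTop
      ≤ ∫⁻ x in frontier {x | f x < 0}, ENNReal.ofReal (W x) ∂μH[(m : ℝ)] := by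
  set E := {x | f x < 0}
  have hEo : IsOpen E := isOpen_lt hf.continuous continuous_const
  have hfrontier : closure E ∩ {x | f x = 0} ⊆ frontier E := fun x hx =>
    hEo.frontier_eq ▸ ⟨hx.1, fun hneg => hneg.ne hx.2⟩
  refine le_trans (limsup_le_limsup (Eventually.of_forall fun k => ?_))
    ((limsup_setLIntegral_layerMeasure_le hf hf' hE.isCompact_closure hW hW0).trans
      (lintegral_mono_set hfrontier))
  have hmeas : Measurable fun x => ‖fderiv ℝ (fun y => Real.exp (f y / (1 / ((k : ℝ) + 1)))) x‖ₑ :=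
    ((contDiff_exp_div hf _).continuous_fderiv one_ne_zero).enorm.measurable
  calc ∫⁻ x in E, ENNReal.ofReal (W x) * ‖fderiv ℝ (layerCutoff f (1 / ((k : ℝ) + 1))) x‖ₑ
      = ∫⁻ x, ENNReal.ofReal (W x) ∂layerMeasure f (1 / ((k : ℝ) + 1)) := by
        rw [layerMeasure, lintegral_withDensity_eq_lintegral_mul _ hmeas
          hW.measurable.ennreal_ofReal]
        simp only [fderiv_layerCutoff, enorm_neg, Pi.mul_apply, mul_comm, E]
    _ = ∫⁻ x in E, ENNReal.ofReal (W x) ∂layerMeasure f (1 / ((k : ℝ) + 1)) := by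
        have hconc : ∀ᵐ x ∂layerMeasure f (1 / ((k : ℝ) + 1)), x ∈ E :=
          (withDensity_absolutelyContinuous _ _).ae_le (ae_restrict_mem hEo.measurableSet)
        rw [Measure.restrict_eq_self_of_ae_mem hconc]
    _ ≤ ∫⁻ x in closure E, ENNReal.ofReal (W x) ∂layerMeasure f (1 / ((k : ℝ) + 1)) :=
        lintegral_mono_set subset_closure

theorem exists_integral_layerCutoff_pos (hf : ContDiff ℝ 1 f)
    (hf' : ∀ x, f x = 0 → fderiv ℝ f x ≠ 0) (hE : Bornology.IsBounded {x | f x < 0})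
    (hW : Continuous W) (hW0 : ∀ x, 0 ≤ W x) {c : ℝ}
    (hc : ∫⁻ x in frontier {x | f x < 0}, ENNReal.ofReal (W x) ∂μH[(m : ℝ)]
      < ENNReal.ofReal (c * ∫ x in {x | f x < 0}, W x)) :
    ∃ δ > 0, ∃ θ > 0, 0 < ∫ x in {x | f x < 0},
      W x * (c * layerCutoff f δ x - (1 + θ) * ‖fderiv ℝ (layerCutoff f δ) x‖) := by
  have hint {F : Euc (m + 1) → ℝ} (hF : Continuous F) : IntegrableOn F {x | f x < 0} :=
    (hF.continuousOn.integrableOn_compact hE.isCompact_closure).mono_set subset_closure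
  obtain ⟨r, hr0, hPr, hrc⟩ := ENNReal.lt_iff_exists_real_btwn.1 hc
  have hlayer := eventually_lt_of_limsup_lt
    ((limsup_lintegral_enorm_fderiv_layerCutoff_le hf hf' hE hW hW0).trans_lt hPr)
  have hbulk := ((tendsto_setIntegral_mul_layerCutoff hf.continuous hW (hint hW)).const_mul
    c).eventually_const_lt (ENNReal.ofReal_lt_ofReal_iff_of_nonneg hr0 |>.1 hrc)
  obtain ⟨k, hlayer, hbulk⟩ := (hlayer.and hbulk).exists
  set δ : ℝ := 1 / ((k : ℝ) + 1)
  set A := ∫ x in {x | f x < 0}, W x * ‖fderiv ℝ (layerCutoff f δ) x‖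
  set B := ∫ x in {x | f x < 0}, W x * layerCutoff f δ x
  have hη := contDiff_layerCutoff hf δ
  have hWη : Continuous fun x => W x * layerCutoff f δ x := hW.mul hη.continuous
  have hη' : Continuous fun x => W x * ‖fderiv ℝ (layerCutoff f δ) x‖ :=
    hW.mul (hη.continuous_fderiv one_ne_zero).norm
  have hA0 : 0 ≤ A := integral_nonneg fun x => mul_nonneg (hW0 x) (norm_nonneg _)
  have hAr : A ≤ r := by
    refine (integral_eq_lintegral_of_nonneg_ae (ae_of_all _ fun x =>
      mul_nonneg (hW0 x) (norm_nonneg _)) hη'.aestronglyMeasurable).trans_le ?_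
    refine ENNReal.toReal_le_of_le_ofReal hr0 (le_trans (le_of_eq ?_) hlayer.le)
    simp only [ENNReal.ofReal_mul (hW0 _), ofReal_norm]
  obtain ⟨θ, hθ, hθA⟩ : ∃ θ > 0, (1 + θ) * A < c * B := by
    have hgap : 0 < c * B - A := sub_pos.2 (hAr.trans_lt hbulk)
    refine ⟨(c * B - A) / (A + 1), by positivity, ?_⟩
    rw [add_mul, one_mul, ← lt_sub_iff_add_lt', div_mul_eq_mul_div, div_lt_iff₀ (by positivity)]
    exact mul_lt_mul_of_pos_left (lt_add_one A) hgap
  refine ⟨δ, Nat.one_div_pos_of_nat, θ, hθ, ?_⟩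
  calc 0 < c * B - (1 + θ) * A := sub_pos.2 hθA
    _ = _ := by
      rw [← integral_const_mul, ← integral_const_mul,
        ← integral_sub ((hint hWη).const_mul c) ((hint hη').const_mul _)]
      exact integral_congr_ae (ae_of_all _ fun x => by ring)

end Perimeter

section Weight

variable {n : ℕ} {S : Set (Euc n)} {g : Euc n → ℝ} {α c σ : ℝ}

theorem fderiv_rpow_mul_apply {G η : Euc n → ℝ} {x : Euc n} (hG : DifferentiableAt ℝ G x)
    (hη : DifferentiableAt ℝ η x) (hGx : 0 < G x) (α : ℝ) (p : Euc n) :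
    fderiv ℝ (fun y => G y ^ α * η y) x p
      = G x ^ α * (fderiv ℝ η x p + η x * (α * fderiv ℝ G x p / G x)) := by
  have hmul := (hG.hasFDerivAt.rpow_const (p := α) (Or.inl hGx.ne')).mul hη.hasFDerivAt
  rw [show (fun y => G y ^ α * η y) = (fun y => G y ^ α) * η from rfl, hmul.fderiv]
  simp only [add_apply, smul_apply, smul_eq_mul, Real.rpow_sub_one hGx.ne']
  ring

theorem norm_gradient_rpow_mul_of_eq_zero {G η : Euc n → ℝ} {x : Euc n}
    (hG : DifferentiableAt ℝ G x) (hη : DifferentiableAt ℝ η x) (hGx : 0 < G x) (hηx : η x = 0)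
    (α : ℝ) : ‖gradient (fun y => G y ^ α * η y) x‖ = G x ^ α * ‖fderiv ℝ η x‖ := by
  have hsmul : fderiv ℝ (fun y => G y ^ α * η y) x = G x ^ α • fderiv ℝ η x := by
    ext p
    simp [fderiv_rpow_mul_apply hG hη hGx, hηx]
  simp [gradient, hsmul, norm_smul, abs_of_pos (Real.rpow_pos_of_pos hGx α)]

theorem mul_sub_inner_gradient_rpow_mul_le {G η : Euc n → ℝ} {x p : Euc n}
    (hG : DifferentiableAt ℝ G x) (hη : DifferentiableAt ℝ η x) (hGx : 0 < G x) (hηx : 0 ≤ η x)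
    (hα : 0 ≤ α) (hp : ‖p‖ ≤ 1) {b : ℝ} (hb : b ≤ fderiv ℝ G x p) (c : ℝ) :
    G x ^ α * (c * η x - ‖fderiv ℝ η x‖) - ⟪p, gradient (fun y => G y ^ α * η y) x⟫
      ≤ G x ^ α * η x * (c - α * b / G x) := by
  have hηp : -‖fderiv ℝ η x‖ ≤ fderiv ℝ η x p :=
    (abs_le.1 ((fderiv ℝ η x).unit_le_opNorm p hp)).1
  have hGp : η x * (α * b / G x) ≤ η x * (α * fderiv ℝ G x p / G x) := by gcongr
  rw [real_inner_comm, inner_gradient_left, fderiv_rpow_mul_apply hG hη hGx, ← mul_sub, mul_assoc]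
  refine mul_le_mul_of_nonneg_left ?_ (Real.rpow_nonneg hGx.le α)
  linarith

theorem IsConcaveGauge.exists_isApproxPotential_of_integral_pos (hg : IsConcaveGauge S g)
    (hα : 0 ≤ α) {η G : Euc n → ℝ} (hη : ContDiff ℝ 1 η) (hηS : {x | 0 < η x} ⊆ S)
    (hηb : Bornology.IsBounded {x | 0 < η x}) (hη0 : volume (frontier {x | 0 < η x}) = 0)
    (hη' : ∀ x ∈ frontier {x | 0 < η x}, fderiv ℝ η x ≠ 0) (hG : ContDiff ℝ 1 G)
    (hGpos : ∀ x, 0 < G x) (hGσ : ∀ x, 0 < η x → G x ≤ g x + σ)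
    (hG' : ∀ x, 0 < η x → ∀ p ∈ closure S, g p ≤ fderiv ℝ G x p) {c₁ θ : ℝ} (hc₁ : c₁ < c + σ)
    (hθ : 0 < θ)
    (hpos : 0 < ∫ x in {x | 0 < η x}, G x ^ α * (c₁ * η x - (1 + θ) * ‖fderiv ℝ η x‖)) (j : ℕ) :
    ∃ m, j ≤ m ∧ ∃ φ, IsApproxPotential S {x | 0 < η x} g α c σ ((1 / 2) ^ m) φ := by
  have hGα : ContDiff ℝ 1 fun x => G x ^ α := hG.rpow_const_of_ne fun x => (hGpos x).ne'
  have hGα0 (x) : 0 < G x ^ α := Real.rpow_pos_of_pos (hGpos x) α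
  have hGd := hG.differentiable one_ne_zero
  have hηd := hη.differentiable one_ne_zero
  have hpos_iff (x) : 0 < G x ^ α * η x ↔ 0 < η x := mul_pos_iff_of_pos_left (hGα0 x)
  have hsupport : {x | 0 < G x ^ α * η x} = {x | 0 < η x} := Set.ext hpos_iff
  have hboundary (x) (hx : x ∈ frontier {x | 0 < η x}) :
      G x ^ α * (c₁ * η x - (1 + θ) * ‖fderiv ℝ η x‖)
        + ‖gradient (fun y => G y ^ α * η y) x‖ < 0 := by
    have hηx : η x = 0 := (frontier_lt_subset_eq continuous_const hη.continuous hx).symm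
    have hη'x : 0 < ‖fderiv ℝ η x‖ := norm_pos_iff.2 (hη' x hx)
    rw [norm_gradient_rpow_mul_of_eq_zero (hGd x) (hηd x) (hGpos x) hηx, hηx]
    linarith [mul_pos (hGα0 x) (mul_pos hθ hη'x)]
  have hinterior (x) (hx : 0 < η x) (p) (hp : p ∈ unitSector S) :
      G x ^ α * (c₁ * η x - (1 + θ) * ‖fderiv ℝ η x‖) - ⟪p, gradient (fun y => G y ^ α * η y) x⟫
        ≤ G x ^ α * η x * (c₁ - α * g p / G x) := by
    refine (sub_le_sub_right ?_ _).trans (mul_sub_inner_gradient_rpow_mul_le (hGd x) (hηd x)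
      (hGpos x) hx.le hα (norm_le_one_of_mem_unitSector hp)
      (hG' x hx p (unitSector_subset_closure hp)) c₁)
    refine mul_le_mul_of_nonneg_left (sub_le_sub_left ?_ _) (hGα0 x).le
    exact le_mul_of_one_le_left (norm_nonneg _) (le_add_of_nonneg_right hθ.le)
  have hcontact := eventually_exists_contact_bound (K := unitSector S) (c := c₁)
    (γ := fun x p => α * g p / G x) (hGα.mul hη)
    (hGα.continuous.mul ((hη.continuous.const_mul c₁).sub
      ((hη.continuous_fderiv one_ne_zero).norm.const_mul (1 + θ))))
    (by rwa [hsupport]) (by rwa [hsupport]) (by rwa [hsupport]) (by rwa [hsupport])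
    (fun p => norm_le_one_of_mem_unitSector)
    (fun x _ p _ => div_nonneg (mul_nonneg hα (hg.nonneg p)) (hGpos x).le)
    (fun x hx => hinterior x ((hpos_iff x).1 hx)) (sub_pos.2 hc₁)
  obtain ⟨m, ⟨V, u, hV, hVη, hu⟩, hjm⟩ := (((tendsto_pow_atTop_atTop_of_one_lt
    one_lt_two).eventually hcontact).and (Filter.eventually_ge_atTop j)).exists
  refine ⟨m, hjm, hg.exists_isApproxPotential (u := u) hα hηS hV
    (fun x hx => (hpos_iff x).1 (hVη x hx)) (fun x _ => hGpos x)
    (fun x hx => hGσ x ((hpos_iff x).1 (hVη x hx))) ?_⟩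
  simpa only [Nat.cast_pow, Nat.cast_ofNat, ← one_div_pow, add_sub_cancel] using hu

theorem IsConcaveGauge.exists_contDiff_approx_integral_pos (hg : IsConcaveGauge S g) (hα : 0 ≤ α)
    {E : Set (Euc n)} (hES : E ⊆ S) (hE : MeasurableSet E) (hEb : Bornology.IsBounded E)
    {q : Euc n → ℝ} (hq : Continuous q) (hpos : 0 < ∫ x in E, g x ^ α * q x) (hσ : 0 < σ) :
    ∃ G, ContDiff ℝ 1 G ∧ (∀ x, 0 < G x) ∧ (∀ x ∈ E, G x ≤ g x + σ) ∧
      (∀ x ∈ E, ∀ p ∈ closure S, g p ≤ fderiv ℝ G x p) ∧ 0 < ∫ x in E, G x ^ α * q x := by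
  have hσk (k : ℕ) : 0 < σ / (k + 1) := by positivity
  choose G hG hGpos hGg hG' using fun k =>
    hg.exists_contDiff_approx hEb.isCompact_closure (closure_mono hES) (hσk k)
  have hGσ (k) (x) (hx : x ∈ E) : G k x ≤ g x + σ := by
    have hle := (le_abs_self _).trans (hGg k x (subset_closure hx))
    have hσle : σ / ((k : ℝ) + 1) ≤ σ := div_le_self hσ.le (by simp)
    linarith
  have hlim : Filter.Tendsto (fun k => ∫ x in E, G k x ^ α * q x) Filter.atTop
      (𝓝 (∫ x in E, g x ^ α * q x)) := by
    refine tendsto_integral_of_dominated_convergence (fun x => (g x + σ) ^ α * ‖q x‖)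
      (fun k => (((hG k).continuous.rpow_const fun _ => Or.inr hα).mul hq).aestronglyMeasurable)
      ?_ (fun k => ?_) ?_
    · exact ((((hg.continuous.add continuous_const).rpow_const fun _ => Or.inr hα).mul
        hq.norm).continuousOn.integrableOn_compact hEb.isCompact_closure).mono_set subset_closure
    · filter_upwards [ae_restrict_mem hE] with x hx
      have hGx := (hGpos k x).le
      rw [norm_mul, Real.norm_of_nonneg (Real.rpow_nonneg hGx α)]
      gcongr
      exact hGσ k x hx
    · filter_upwards [ae_restrict_mem hE] with x hx
      refine Filter.Tendsto.mul_const _ (Filter.Tendsto.rpow_const ?_ (Or.inr hα))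
      exact tendsto_iff_norm_sub_tendsto_zero.2 (squeeze_zero (fun _ => norm_nonneg _)
        (fun k => hGg k x (subset_closure hx)) (tendsto_const_div_atTop_nhds_zero_nat σ |>.comp
          (Filter.tendsto_add_atTop_nat 1) |>.congr fun k => by simp))
  obtain ⟨k, hk⟩ := (hlim.eventually_const_lt hpos).exists
  exact ⟨G k, hG k, hGpos k, hGσ k, fun x hx => hG' k x (subset_closure hx), hk⟩

end Weight

/-! ### The weighted coupling -/

section Existence

variable {m : ℕ} {S : Set (Euc (m + 1))} {g f : Euc (m + 1) → ℝ} {α c : ℝ}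

theorem IsConcaveGauge.exists_isApproxPotential_of_perimeter_lt (hg : IsConcaveGauge S g)
    (hα : 0 ≤ α) (hf : ContDiff ℝ 1 f) (hf' : ∀ x, f x = 0 → fderiv ℝ f x ≠ 0)
    (hES : {x | f x < 0} ⊆ S) (hEb : Bornology.IsBounded {x | f x < 0}) {c₁ σ : ℝ}
    (hc₁ : c₁ < c + σ) (hσ : 0 < σ)
    (hper : ∫⁻ x in frontier {x | f x < 0}, ENNReal.ofReal (g x ^ α) ∂μH[(m : ℝ)]
      < ENNReal.ofReal (c₁ * ∫ x in {x | f x < 0}, g x ^ α)) (j : ℕ) :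
    ∃ l, j ≤ l ∧ ∃ φ, IsApproxPotential S {x | f x < 0} g α c σ ((1 / 2) ^ l) φ := by
  obtain ⟨δ, hδ, θ, hθ, hpos⟩ := exists_integral_layerCutoff_pos hf hf' hEb
    (hg.continuous.rpow_const fun _ => Or.inr hα) (fun x => Real.rpow_nonneg (hg.nonneg x) α) hper
  have hη := contDiff_layerCutoff hf δ
  have hEη : {x | f x < 0} = {x | 0 < layerCutoff f δ x} :=
    Set.ext fun x => (layerCutoff_pos_iff hδ).symm
  have hfrontier : frontier {x | f x < 0} ⊆ {x | f x = 0} :=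
    frontier_lt_subset_eq hf.continuous continuous_const
  obtain ⟨G, hG, hGpos, hGσ, hG', hGint⟩ := hg.exists_contDiff_approx_integral_pos hα hES
    (isOpen_lt hf.continuous continuous_const).measurableSet hEb
    ((hη.continuous.const_mul c₁).sub ((hη.continuous_fderiv one_ne_zero).norm.const_mul (1 + θ)))
    hpos hσ
  have hE0 : volume (frontier {x | f x < 0}) = 0 :=
    measure_mono_null hfrontier (volume_level_eq_zero hf hf')
  have hη' (x) (hx : x ∈ frontier {x | f x < 0}) : fderiv ℝ (layerCutoff f δ) x ≠ 0 :=
    fderiv_layerCutoff_ne_zero (hf.differentiable one_ne_zero) hδ (hf' x (hfrontier hx))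
  rw [hEη] at hES hEb hE0 hη' hGσ hG' hGint ⊢
  exact hg.exists_isApproxPotential_of_integral_pos hα hη hES hEb hE0 hη' hG hGpos hGσ hG' hc₁ hθ
    hGint j

theorem IsConcaveGauge.exists_potential_of_perimeter_le (hg : IsConcaveGauge S g) (hα : 0 ≤ α)
    (hf : ContDiff ℝ 1 f) (hf' : ∀ x, f x = 0 → fderiv ℝ f x ≠ 0) (hES : {x | f x < 0} ⊆ S)
    (hEb : Bornology.IsBounded {x | f x < 0}) (hvol : 0 < ∫ x in {x | f x < 0}, g x ^ α)
    (hc : 0 ≤ c) (hper : ∫⁻ x in frontier {x | f x < 0}, ENNReal.ofReal (g x ^ α) ∂μH[(m : ℝ)]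
      ≤ ENNReal.ofReal (c * ∫ x in {x | f x < 0}, g x ^ α)) :
    ∃ φ, ConvexOn ℝ univ φ ∧ ContDiff ℝ 1 φ ∧ (∃ L : ℝ≥0, LipschitzWith L (gradient φ)) ∧
      range (gradient φ) ⊆ closure (ball 0 1 ∩ S) ∧
      volume ((ball 0 1 ∩ S) \ gradient φ '' {x | f x < 0}) = 0 ∧
      ∀ᵐ x ∂volume.restrict {x | f x < 0}, DifferentiableAt ℝ (fderiv ℝ φ) x ∧
        lapl φ x + α * (g (gradient φ x) / g x) ≤ c := by
  have hE0 : volume (frontier {x | f x < 0}) = 0 :=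
    measure_mono_null (frontier_lt_subset_eq hf.continuous continuous_const)
      (volume_level_eq_zero hf hf')
  refine hg.exists_potential_of_approx hES (isOpen_lt hf.continuous continuous_const) hEb hE0 hα hc
    fun j => ?_
  have hσ : (0 : ℝ) < 1 / (j + 1) := Nat.one_div_pos_of_nat
  refine hg.exists_isApproxPotential_of_perimeter_lt hα hf hf' hES hEb
    (add_lt_add_right (half_lt_self hσ) c) hσ (hper.trans_lt ?_) j
  refine (ENNReal.ofReal_lt_ofReal_iff_of_nonneg (by positivity)).2 ?_
  gcongr
  exact lt_add_of_pos_right c (half_pos hσ)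

end Existence

section InteriorPerimeter

variable {m : ℕ} {S : Set (Euc (m + 1))} {w f : Euc (m + 1) → ℝ} {E : Set (Euc (m + 1))} {α : ℝ}

theorem wPer_eq_lintegral_indicator (hS : MeasurableSet S) :
    wPer S w E = ∫⁻ x in frontier E, ENNReal.ofReal (S.indicator w x) ∂μH[(m : ℝ)] := by
  have hofReal (x) : ENNReal.ofReal (S.indicator w x)
      = S.indicator (fun y => ENNReal.ofReal (w y)) x := by
    by_cases hx : x ∈ S <;> simp [hx]
  simp only [hofReal, setLIntegral_indicator hS, inter_comm S, wPer, Nat.cast_succ,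
    add_sub_cancel_right]

theorem IsAdmissibleWeight.wPer_ne_top (hw : IsAdmissibleWeight S α w) (hES : E ⊆ S)
    (hEb : Bornology.IsBounded E) (hf : ContDiff ℝ 1 f) (hEf : ∀ x ∈ frontier E, f x = 0)
    (hf' : ∀ x ∈ frontier E, fderiv ℝ f x ≠ 0) : wPer S w E ≠ ∞ := by
  have hK : IsCompact (frontier E) :=
    hEb.isCompact_closure.of_isClosed_subset isClosed_frontier frontier_subset_closure
  obtain ⟨B, hB⟩ := hK.exists_bound_of_continuousOn
    (hw.1.mono (frontier_subset_closure.trans (closure_mono hES)))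
  rw [wPer, Nat.cast_succ, add_sub_cancel_right]
  refine ((lintegral_mono_set inter_subset_left).trans (setLIntegral_mono measurable_const
    fun x hx => ENNReal.ofReal_le_ofReal ((le_abs_self _).trans (hB x hx)))).trans_lt ?_ |>.ne
  rw [setLIntegral_const]
  exact ENNReal.mul_lt_top ENNReal.ofReal_lt_top
    (hausdorffMeasure_lt_top_of_subset_level hf hK hEf hf')

end InteriorPerimeter

section AdmissibleWeight

variable {n : ℕ} {S E : Set (Euc n)} {w : Euc n → ℝ} {α : ℝ}

namespace IsAdmissibleWeight

theorem integrableOn (hw : IsAdmissibleWeight S α w) (hES : E ⊆ S)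
    (hEb : Bornology.IsBounded E) : IntegrableOn w E :=
  ((hw.1.mono (closure_mono hES)).integrableOn_compact hEb.isCompact_closure).mono_set
    subset_closure

theorem setIntegral_indicator (hw : IsAdmissibleWeight S α w) (hES : E ⊆ S)
    (hEb : Bornology.IsBounded E) (hE : MeasurableSet E) :
    ∫ x in E, S.indicator w x = (wVol w E).toReal := by
  rw [setIntegral_congr_fun hE fun x hx => indicator_of_mem (hES hx) w]
  exact integral_eq_lintegral_of_nonneg_ae ((ae_restrict_mem hE).mono fun x hx =>
    hw.2.1 x (subset_closure (hES hx))) (hw.integrableOn hES hEb).aestronglyMeasurable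

theorem indicator_rpow_one_div_rpow (hw : IsAdmissibleWeight S α w) (hα : α ≠ 0) (x : Euc n) :
    S.indicator (fun y => w y ^ (1 / α)) x ^ α = S.indicator w x := by
  by_cases hx : x ∈ S
  · rw [indicator_of_mem hx, indicator_of_mem hx, ← Real.rpow_mul (hw.2.1 x (subset_closure hx)),
      one_div_mul_cancel hα, Real.rpow_one]
  · rw [indicator_of_notMem hx, indicator_of_notMem hx, Real.zero_rpow hα]

end IsAdmissibleWeight

theorem indicator_rpow_one_div_of_mem_closure (hα : α ≠ 0) (hS : IsOpen S)
    (hw0 : ∀ x ∈ frontier S, w x = 0) {x : Euc n} (hx : x ∈ closure S) :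
    S.indicator (fun y => w y ^ (1 / α)) x = w x ^ (1 / α) := by
  by_cases hxS : x ∈ S
  · exact indicator_of_mem hxS _
  · rw [indicator_of_notMem hxS, hw0 x (hS.frontier_eq ▸ ⟨hx, hxS⟩),
      Real.zero_rpow (one_div_ne_zero hα)]

end AdmissibleWeight

theorem stmt_10_general {n : ℕ} (hn : 1 ≤ n) {α : ℝ} (hα : 0 < α) {S : Set (Euc n)}
    (hS : IsOpenConvexCone S) {w : Euc n → ℝ} (hw : IsAdmissibleWeight S α w)
    (hw0 : ∀ x ∈ frontier S, w x = 0) {f : Euc n → ℝ} (hf : ContDiff ℝ 1 f)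
    (hf' : ∀ x, f x = 0 → fderiv ℝ f x ≠ 0) (hES : {x | f x < 0} ⊆ S)
    (hEb : Bornology.IsBounded {x | f x < 0}) (hEpos : 0 < wVol w {x | f x < 0}) :
    ∃ φ : Euc n → ℝ, ConvexOn ℝ univ φ ∧
      ContDiff ℝ 1 φ ∧ (∃ L : ℝ≥0, LipschitzWith L (gradient φ)) ∧
      range (gradient φ) ⊆ closure (ball 0 1 ∩ S) ∧
      volume ((ball 0 1 ∩ S) \ gradient φ '' {x | f x < 0}) = 0 ∧
      ∀ᵐ x ∂volume.restrict {x | f x < 0}, DifferentiableAt ℝ (fderiv ℝ φ) x ∧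
        lapl φ x + α * (w (gradient φ x) / w x) ^ (1 / α)
          ≤ (wPer S w {x | f x < 0}).toReal / (wVol w {x | f x < 0}).toReal := by
  obtain ⟨m, rfl⟩ : ∃ m, n = m + 1 := Nat.exists_eq_add_of_le' hn
  set E := {x | f x < 0}
  have hEo : IsOpen E := isOpen_lt hf.continuous continuous_const
  have hEf : ∀ x ∈ frontier E, f x = 0 := frontier_lt_subset_eq hf.continuous continuous_const
  have hvol : 0 < (wVol w E).toReal :=
    ENNReal.toReal_pos hEpos.ne' (hw.integrableOn hES hEb).lintegral_lt_top.ne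
  have hvol_gauge : ∫ x in E, S.indicator (fun y => w y ^ (1 / α)) x ^ α = (wVol w E).toReal := by
    simp only [hw.indicator_rpow_one_div_rpow hα.ne',
      hw.setIntegral_indicator hES hEb hEo.measurableSet]
  have hper_gauge : ∫⁻ x in frontier E, ENNReal.ofReal (S.indicator (fun y => w y ^ (1 / α)) x ^ α)
      ∂μH[(m : ℝ)] = wPer S w E := by
    simp only [hw.indicator_rpow_one_div_rpow hα.ne',
      wPer_eq_lintegral_indicator hS.1.measurableSet]
  have hper : wPer S w E ≠ ∞ := hw.wPer_ne_top hES hEb hf hEf fun x hx => hf' x (hEf x hx)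
  obtain ⟨φ, hconv, hC1, hlip, hrange, hcover, hlapl⟩ :=
    (hw.isConcaveGauge hα hS hw0).exists_potential_of_perimeter_le hα.le hf hf' hES hEb
      (hvol.trans_eq hvol_gauge.symm)
      (c := (wPer S w E).toReal / (wVol w E).toReal) (by positivity)
      (by rw [hvol_gauge, div_mul_cancel₀ _ hvol.ne', ENNReal.ofReal_toReal hper, hper_gauge])
  refine ⟨φ, hconv, hC1, hlip, hrange, hcover, ?_⟩
  filter_upwards [hlapl, ae_restrict_mem hEo.measurableSet] with x ⟨hdiff, hle⟩ hx
  have hslope : gradient φ x ∈ closure S := unitSector_subset_closure (hrange ⟨x, rfl⟩)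
  have hxS : x ∈ closure S := subset_closure (hES hx)
  rw [indicator_rpow_one_div_of_mem_closure hα.ne' hS.1 hw0 hslope,
    indicator_rpow_one_div_of_mem_closure hα.ne' hS.1 hw0 hxS,
    ← Real.div_rpow (hw.2.1 _ hslope) (hw.2.1 _ hxS)] at hle
  exact ⟨hdiff, hle⟩

/-- Existence of the weighted coupling (assuming `w ≡ 0` on `∂Σ`). -/
theorem stmt_10 {n k : ℕ} (hn : 1 ≤ n) (hk : k < n) (α : ℝ) (hα : 0 < α)
    (S : Set (Euc n)) (hS : IsOpenConvexCone S)
    (hSL : ∀ x ∈ S, ∀ v ∈ linSpan n k, x + v ∈ S)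
    (hNoLine : ∀ p v : Euc n, (∀ t : ℝ, p + t • v ∈ S) → v ∈ linSpan n k)
    (w : Euc n → ℝ) (hw : IsAdmissibleWeight S α w)
    (hw0 : ∀ x ∈ frontier S, w x = 0)
    (E : Set (Euc n)) (hES : E ⊆ S) (hEo : IsOpen E) (hEb : Bornology.IsBounded E)
    (hEc : IsConnected E) (hEsm : HasSmoothBoundary E) (hEpos : 0 < wVol w E) :
    ∃ φ : Euc n → ℝ, ConvexOn ℝ univ φ ∧
      ContDiff ℝ 1 φ ∧ (∃ L : NNReal, LipschitzWith L (fun x => gradient φ x)) ∧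
      (fun x => gradient φ x) '' univ ⊆ closure (ball (0 : Euc n) 1 ∩ S) ∧
      volume ((ball (0 : Euc n) 1 ∩ S) \ ((fun x => gradient φ x) '' E)) = 0 ∧
      ∀ᵐ x ∂(volume.restrict E),
        DifferentiableAt ℝ (fderiv ℝ φ) x ∧
        lapl φ x + α * (w (gradient φ x) / w x) ^ (1 / α) ≤
          (wPer S w E).toReal / (wVol w E).toReal := by
  obtain ⟨f, hf, rfl, hfrontier, hf'⟩ := hEsm
  simpa only [image_univ] using stmt_10_general hn hα hS hw hw0
    (hf.of_le (by exact_mod_cast le_top)) (fun x hx => hf' x (hfrontier ▸ hx)) hES hEb hEpos
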